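/- arXiv:1009.4736 — 2 statements merged into one kernel-verified Lean document; each statement's English description precedes it below -/
import Mathlib

section
/- Let P be a set of 30 points in general position in the plane that is crossing-minimal, i.e., cr(P) equals the minimum of cr(Q) over all 30-point sets Q in general position. Then E_{≤k}(P) = 3·binom(k+2,2) + 3·binom(k−8,2) for every 0 ≤ k ≤ 12 (where binom(j,2) = 0 when j < 2), and P is 3-decomposable. -/
/-- The determinant of two planar vectors; its sign tells on which open side of the
(directed) line with direction `u` a point lies. -/
def det2 (u v : ℝ × ℝ) : ℝ := u.1 * v.2 - u.2 * v.1

/-- The standard inner product on the plane; orthogonal projection onto a line with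
direction `d` orders points by `dot2 d ·`. -/
def dot2 (u v : ℝ × ℝ) : ℝ := u.1 * v.1 + u.2 * v.2

/-- `P` is in general position: no three of its points are collinear. -/
def GenPos (P : Finset (ℝ × ℝ)) : Prop :=
  ∀ p ∈ P, ∀ q ∈ P, ∀ r ∈ P, p ≠ q → p ≠ r → q ≠ r →
    ¬ Collinear ℝ ({p, q, r} : Set (ℝ × ℝ))

/-- The line through the two (distinct) points `p, q` of `P` is a `k`-edge of `P`: it
leaves exactly `k` points of `P` on one of its open sides. -/
def IsKEdge (P : Finset (ℝ × ℝ)) (k : ℕ) (p q : ℝ × ℝ) : Prop :=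
  p ≠ q ∧
    ({x ∈ (P : Set (ℝ × ℝ)) | 0 < det2 (q - p) (x - p)}.ncard = k ∨
     {x ∈ (P : Set (ℝ × ℝ)) | det2 (q - p) (x - p) < 0}.ncard = k)

/-- `E_k(P)`: the number of `k`-edges of `P` (pairs of points of `P` whose line leaves
exactly `k` points of `P` on one open side). -/
noncomputable def Ek (P : Finset (ℝ × ℝ)) (k : ℕ) : ℕ :=
  {e : Sym2 (ℝ × ℝ) | ∃ p ∈ P, ∃ q ∈ P, e = s(p, q) ∧ IsKEdge P k p q}.ncard

/-- `E_{≤k}(P) = Σ_{j=0}^{k} E_j(P)`: the number of `(≤ k)`-edges of `P`. -/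
noncomputable def EleK (P : Finset (ℝ × ℝ)) (k : ℕ) : ℕ :=
  ∑ j ∈ Finset.range (k + 1), Ek P j

/-- Along the projection direction `d`, all points of `X` lie strictly between all the
points of `Y` and all the points of `Z` (the `Y`-block on one side, the `Z`-block on
the other). -/
def ProjBetween (d : ℝ × ℝ) (X Y Z : Finset (ℝ × ℝ)) : Prop :=
  (∀ x ∈ X, ∀ y ∈ Y, ∀ z ∈ Z, dot2 d y < dot2 d x ∧ dot2 d x < dot2 d z) ∨
  (∀ x ∈ X, ∀ y ∈ Y, ∀ z ∈ Z, dot2 d z < dot2 d x ∧ dot2 d x < dot2 d y)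

/-- `P` is 3-decomposable: it can be partitioned into three equal-sized sets `A, B, C`
such that some triangle `T = v₁v₂v₃` encloses `P` and the orthogonal projections of `P`
onto the lines of the three sides of `T` show `A` between `B` and `C` on one side, `B`
between `C` and `A` on the second side, and `C` between `A` and `B` on the third side. -/
def PtSet3Decomposable (P : Finset (ℝ × ℝ)) : Prop :=
  ∃ A B C : Finset (ℝ × ℝ), ∃ v₁ v₂ v₃ : ℝ × ℝ,
    A ∪ B ∪ C = P ∧ Disjoint A B ∧ Disjoint A C ∧ Disjoint B C ∧
    A.card = B.card ∧ B.card = C.card ∧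
    ¬ Collinear ℝ ({v₁, v₂, v₃} : Set (ℝ × ℝ)) ∧
    (P : Set (ℝ × ℝ)) ⊆ convexHull ℝ {v₁, v₂, v₃} ∧
    ProjBetween (v₂ - v₁) A B C ∧ ProjBetween (v₃ - v₂) B C A ∧
    ProjBetween (v₁ - v₃) C A B
/-- A finite planar point set is in convex position if none of its points lies in the
convex hull of the others. -/
def ConvexPosition (s : Finset (ℝ × ℝ)) : Prop :=
  ∀ x ∈ s, x ∉ convexHull ℝ ((s.erase x : Finset (ℝ × ℝ)) : Set (ℝ × ℝ))

/-- `cr(P)`: the number of crossings in the rectilinear drawing of the complete graph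
on `P`, i.e. the number of 4-element subsets of `P` in convex position. -/
noncomputable def crNum (P : Finset (ℝ × ℝ)) : ℕ :=
  {s : Finset (ℝ × ℝ) | s ⊆ P ∧ s.card = 4 ∧ ConvexPosition s}.ncard

/-
A direction `u` is balanced at a hull vertex `v` of `P` if the line through `v` orthogonal to `u`
leaves more than `k` points on each side. Suitably oriented balanced directions at all hull
vertices lie in no open half plane, so three of them positively span the plane. Delete the
corresponding three vertices. They lie on at least `6k + 3` of the `(≤ k)`-edges, every
`(≤ k - 2)`-edge of the remaining points is a `(≤ k)`-edge of `P`, and so is every `(k - 1)`-edge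
along which two of the three directions decrease; a discrete intermediate value argument yields at
least `3k + 3 - n` of these. Induction gives `E_{≤k} ≥ 3 C(k+2,2) + 3 C(k+2-⌈n/3⌉,2)`.

The crossing number is a weighted sum of the `E_{≤k}`. For `n = 30` these lower bounds, together
with an upper bound on the number of halving lines, are within rounding of the crossing number
`9726` of an explicit configuration, so a crossing-minimal set attains every bound with `k ≤ 12`.
Equality for `k = 0` makes the convex hull a triangle. Equality for `k = 9` leaves no descending
`(k - 1)`-edges, which forces the nine points coming last along one of the three directions to be
those coming first along the next one; these groups, completed by the hull vertices, are the parts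
of the decomposition.
-/

section PlaneVectors

/-- The quarter turn, which exchanges the two planar forms: `dot2 (perp e) = det2 e`. -/
def perp (u : ℝ × ℝ) : ℝ × ℝ := (-u.2, u.1)

theorem dot2_perp_left (u d : ℝ × ℝ) : dot2 (perp u) d = det2 u d := by
  simp only [dot2, det2, perp]; ring

theorem dot2_perp_right (u d : ℝ × ℝ) : dot2 u (perp d) = -det2 u d := by
  simp only [dot2, det2, perp]; ring

theorem det2_perp_right (u d : ℝ × ℝ) : det2 u (perp d) = dot2 u d := by
  simp only [dot2, det2, perp]; ring

theorem dot2_sub_right (u x y : ℝ × ℝ) : dot2 u (x - y) = dot2 u x - dot2 u y := by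
  simp only [dot2, Prod.fst_sub, Prod.snd_sub]; ring

theorem dot2_neg_left (u x : ℝ × ℝ) : dot2 (-u) x = -dot2 u x := by
  simp only [dot2, Prod.fst_neg, Prod.snd_neg]; ring

theorem dot2_smul_left (t : ℝ) (u x : ℝ × ℝ) : dot2 (t • u) x = t * dot2 u x := by
  simp only [dot2, Prod.smul_fst, Prod.smul_snd, smul_eq_mul]; ring

theorem dot2_add_smul_left (u v d : ℝ × ℝ) (t : ℝ) :
    dot2 (u + t • v) d = dot2 u d + t * dot2 v d := by
  simp only [dot2, Prod.fst_add, Prod.snd_add, Prod.smul_fst, Prod.smul_snd, smul_eq_mul]; ring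

theorem det2_add_smul_left (u v d : ℝ × ℝ) (t : ℝ) :
    det2 (u + t • v) d = det2 u d + t * det2 v d := by
  simp only [det2, Prod.fst_add, Prod.snd_add, Prod.smul_fst, Prod.smul_snd, smul_eq_mul]; ring

theorem det2_swap (u v : ℝ × ℝ) : det2 v u = -det2 u v := by
  simp only [det2]; ring

theorem det2_self (u : ℝ × ℝ) : det2 u u = 0 := by
  simp only [det2]; ring

theorem det2_neg_left (u v : ℝ × ℝ) : det2 (-u) v = -det2 u v := by
  simp only [det2, Prod.fst_neg, Prod.snd_neg]; ring

theorem det2_neg_right (u v : ℝ × ℝ) : det2 u (-v) = -det2 u v := by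
  simp only [det2, Prod.fst_neg, Prod.snd_neg]; ring

theorem det2_sub_sub_swap (p q x : ℝ × ℝ) : det2 (p - q) (x - q) = -det2 (q - p) (x - p) := by
  simp only [det2, Prod.fst_sub, Prod.snd_sub]; ring

theorem det2_sub_sub_rotate (p q x : ℝ × ℝ) : det2 (x - q) (p - q) = det2 (q - p) (x - p) := by
  simp only [det2, Prod.fst_sub, Prod.snd_sub]; ring

theorem det2_mul_dot2_self (e v w : ℝ × ℝ) :
    dot2 e e * det2 v w = dot2 e v * det2 e w - det2 e v * dot2 e w := by
  simp only [det2, dot2]; ring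

theorem det2_mul_dot2_eq (e u s d : ℝ × ℝ) :
    det2 e u * dot2 s d = det2 e s * dot2 u d - det2 u s * dot2 e d := by
  simp only [det2, dot2]; ring

theorem det2_mul_det2_eq (a w d d' : ℝ × ℝ) :
    det2 a w * det2 d d' = dot2 a d * dot2 w d' - dot2 a d' * dot2 w d := by
  simp only [det2, dot2]; ring

theorem det2_smul_add_det2_smul_add_det2_smul (a b c : ℝ × ℝ) :
    det2 b c • a + det2 c a • b + det2 a b • c = 0 := by
  ext <;>
    simp only [det2, Prod.fst_add, Prod.snd_add, Prod.smul_fst, Prod.smul_snd, smul_eq_mul,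
      Prod.fst_zero, Prod.snd_zero] <;> ring

theorem dot2_self_pos {u : ℝ × ℝ} (hu : u ≠ 0) : 0 < dot2 u u := by
  have h : u.1 ≠ 0 ∨ u.2 ≠ 0 := by
    by_contra! h
    exact hu (Prod.ext h.1 h.2)
  unfold dot2
  rcases h with h | h
  · linarith [mul_self_pos.2 h, mul_self_nonneg u.2]
  · linarith [mul_self_pos.2 h, mul_self_nonneg u.1]

theorem eq_smul_of_det2_eq_zero {u d : ℝ × ℝ} (hu : u ≠ 0) (h : det2 u d = 0) :
    d = (dot2 u d / dot2 u u) • u := by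
  have hpos := (dot2_self_pos hu).ne'
  have h1 : dot2 u u * d.1 = dot2 u d * u.1 := by
    unfold det2 at h; unfold dot2; linear_combination -u.2 * h
  have h2 : dot2 u u * d.2 = dot2 u d * u.2 := by
    unfold det2 at h; unfold dot2; linear_combination u.1 * h
  ext
  · simp only [Prod.smul_fst, smul_eq_mul]; field_simp; linarith
  · simp only [Prod.smul_snd, smul_eq_mul]; field_simp; linarith

theorem ne_zero_of_det2_ne_zero_left {u v : ℝ × ℝ} (h : det2 u v ≠ 0) : u ≠ 0 := by
  rintro rfl
  simp [det2] at h

theorem eq_zero_of_dot2_eq_zero_of_dot2_eq_zero {u v d : ℝ × ℝ} (huv : det2 u v ≠ 0)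
    (hu : dot2 u d = 0) (hv : dot2 v d = 0) : d = 0 := by
  by_contra hd
  have h := det2_mul_det2_eq u v d (perp d)
  rw [det2_perp_right, hu, hv, zero_mul, mul_zero, sub_zero] at h
  exact mul_ne_zero huv (dot2_self_pos hd).ne' h

theorem collinear_iff_det2_eq_zero (p q r : ℝ × ℝ) :
    Collinear ℝ ({p, q, r} : Set (ℝ × ℝ)) ↔ det2 (q - p) (r - p) = 0 := by
  rw [collinear_iff_of_mem (p₀ := p) (by simp)]
  constructor
  · rintro ⟨v, hv⟩
    obtain ⟨a, rfl⟩ := hv q (by simp)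
    obtain ⟨b, rfl⟩ := hv r (by simp)
    simp only [det2, vadd_eq_add, add_sub_cancel_right, Prod.smul_fst, Prod.smul_snd, smul_eq_mul]
    ring
  · intro h
    by_cases hqp : q - p = 0
    · refine ⟨r - p, ?_⟩
      rintro x (rfl | rfl | rfl)
      · exact ⟨0, by simp⟩
      · exact ⟨0, by simp [sub_eq_zero.1 hqp]⟩
      · exact ⟨1, by simp⟩
    · refine ⟨q - p, ?_⟩
      rintro x (rfl | rfl | rfl)
      · exact ⟨0, by simp⟩
      · exact ⟨1, by simp⟩
      · refine ⟨dot2 (q - p) (x - p) / dot2 (q - p) (q - p), ?_⟩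
        rw [← eq_smul_of_det2_eq_zero hqp h, vadd_eq_add, sub_add_cancel]

theorem GenPos.det2_ne_zero {P : Finset (ℝ × ℝ)} (hP : GenPos P) {p q r : ℝ × ℝ} (hp : p ∈ P)
    (hq : q ∈ P) (hr : r ∈ P) (hpq : p ≠ q) (hpr : p ≠ r) (hqr : q ≠ r) :
    det2 (q - p) (r - p) ≠ 0 :=
  fun h => hP p hp q hq r hr hpq hpr hqr ((collinear_iff_det2_eq_zero p q r).2 h)

theorem GenPos.mono {P Q : Finset (ℝ × ℝ)} (hP : GenPos P) (hQ : Q ⊆ P) : GenPos Q :=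
  fun p hp q hq r hr => hP p (hQ hp) q (hQ hq) r (hQ hr)

end PlaneVectors

section GenericDirections

theorem injOn_dot2_neg {P : Finset (ℝ × ℝ)} {u : ℝ × ℝ} (h : Set.InjOn (dot2 u) P) :
    Set.InjOn (dot2 (-u)) P := by
  intro x hx y hy hxy
  rw [dot2_neg_left, dot2_neg_left, neg_inj] at hxy
  exact h hx hy hxy

theorem finite_setOf_exists_dot2_add_smul_eq_zero {u v : ℝ × ℝ} (huv : det2 u v ≠ 0)
    {D : Finset (ℝ × ℝ)} (hD : ∀ d ∈ D, d ≠ 0) :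
    {t : ℝ | ∃ d ∈ D, dot2 (u + t • v) d = 0}.Finite := by
  have hunion : {t : ℝ | ∃ d ∈ D, dot2 (u + t • v) d = 0} =
      ⋃ d ∈ D, {t : ℝ | dot2 (u + t • v) d = 0} := by
    ext t; simp
  rw [hunion]
  refine D.finite_toSet.biUnion fun d hd => Set.Subsingleton.finite ?_
  intro t ht t' ht'
  rw [Set.mem_ofPred_eq, dot2_add_smul_left] at ht ht'
  have hv : dot2 v d ≠ 0 := fun h0 =>
    hD d hd (eq_zero_of_dot2_eq_zero_of_dot2_eq_zero huv (by linarith [h0 ▸ ht]) h0)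
  exact mul_right_cancel₀ hv (by linarith)

theorem finite_setOf_not_injOn_dot2_add_smul (P : Finset (ℝ × ℝ)) {u v : ℝ × ℝ}
    (huv : det2 u v ≠ 0) : {t : ℝ | ¬ Set.InjOn (dot2 (u + t • v)) P}.Finite := by
  have hD : ∀ d ∈ P.offDiag.image (fun z => z.1 - z.2), d ≠ 0 := by
    simp only [Finset.mem_image, Finset.mem_offDiag]
    rintro d ⟨z, hz, rfl⟩
    exact sub_ne_zero.2 hz.2.2
  refine (finite_setOf_exists_dot2_add_smul_eq_zero huv hD).subset fun t ht => ?_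
  rw [Set.mem_ofPred_eq, Set.InjOn] at ht
  push Not at ht
  obtain ⟨x, hx, y, hy, hxy, hne⟩ := ht
  refine ⟨x - y, Finset.mem_image.2 ⟨(x, y), Finset.mem_offDiag.2 ⟨hx, hy, hne⟩, rfl⟩, ?_⟩
  rw [dot2_sub_right, hxy, sub_self]

theorem exists_mem_Ioo_injOn_dot2_and_det2_ne_zero (P : Finset (ℝ × ℝ)) {W : Finset (ℝ × ℝ)}
    (hW : ∀ w ∈ W, w ≠ 0) {u v : ℝ × ℝ} (huv : det2 u v ≠ 0) {a b : ℝ} (hab : a < b) :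
    ∃ t ∈ Set.Ioo a b, Set.InjOn (dot2 (u + t • v)) P ∧ ∀ w ∈ W, det2 (u + t • v) w ≠ 0 := by
  have hW' : ∀ d ∈ W.image perp, d ≠ 0 := by
    rw [Finset.forall_mem_image]
    intro w hw h0
    simp only [perp, Prod.mk_eq_zero, neg_eq_zero] at h0
    exact hW w hw (Prod.ext h0.2 h0.1)
  obtain ⟨t, hab, ht⟩ := ((Set.Ioo_infinite hab).sdiff
    ((finite_setOf_not_injOn_dot2_add_smul P huv).union
      (finite_setOf_exists_dot2_add_smul_eq_zero huv hW'))).nonempty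
  simp only [Set.mem_union, Set.mem_ofPred_eq, not_or, not_not, not_exists, not_and] at ht
  refine ⟨t, hab, ht.1, fun w hw h0 => ht.2 (perp w) (Finset.mem_image_of_mem _ hw) ?_⟩
  rw [dot2_perp_right, h0, neg_zero]

theorem exists_injOn_dot2_of_forall_det2_pos (P D : Finset (ℝ × ℝ)) {s : ℝ × ℝ} (hs : s ≠ 0)
    (hD : ∀ d ∈ D, 0 < det2 s d) :
    ∃ s', Set.InjOn (dot2 s') P ∧ ∀ d ∈ D, 0 < det2 s' d := by
  have hpos : ∀ᶠ t : ℝ in nhds 0, ∀ d ∈ D, 0 < det2 (s + t • perp s) d := by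
    rw [Filter.eventually_all_finset]
    intro d hd
    have hcont : Continuous fun t : ℝ => det2 (s + t • perp s) d := by
      unfold det2; fun_prop
    exact hcont.continuousAt.eventually_const_lt (by simpa using hD d hd)
  have hinj : ∀ᶠ t : ℝ in nhdsWithin 0 {0}ᶜ, Set.InjOn (dot2 (s + t • perp s)) P := by
    have hfin := finite_setOf_not_injOn_dot2_add_smul P (u := s) (v := perp s)
      (by rw [det2_perp_right]; exact (dot2_self_pos hs).ne')
    filter_upwards [nhdsNE_le_cofinite 0 hfin.eventually_cofinite_notMem] with t ht
    simpa using ht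
  obtain ⟨t, ht, ht'⟩ := (hinj.and (hpos.filter_mono nhdsWithin_le_nhds)).exists
  exact ⟨_, ht, ht'⟩

end GenericDirections

section Lowest
open Finset

variable {α β : Type*} [LinearOrder β]

/-- The `m` elements of `Y` on which `f` is smallest, provided that `f` is injective on `Y` and
`m ≤ #Y`; in general, the elements of `Y` at which fewer than `m` values of `f` are exceeded. -/
def lowest (Y : Finset α) (f : α → β) (m : ℕ) : Finset α :=
  {y ∈ Y | #{z ∈ Y | f z < f y} < m}

theorem lowest_subset (Y : Finset α) (f : α → β) (m : ℕ) : lowest Y f m ⊆ Y :=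
  filter_subset _ _

theorem lt_of_mem_lowest_of_notMem_lowest {Y : Finset α} {f : α → β} {m : ℕ} {x y : α}
    (hx : x ∈ lowest Y f m) (hy : y ∈ Y) (hy' : y ∉ lowest Y f m) : f x < f y := by
  by_contra! hle
  refine hy' (mem_filter.2 ⟨hy, lt_of_le_of_lt (card_le_card ?_) (mem_filter.1 hx).2⟩)
  exact monotone_filter_right _ fun z _ hz => hz.trans_le hle

theorem card_lowest {Y : Finset α} {f : α → β} (hf : Set.InjOn f Y) {m : ℕ} (hm : m ≤ #Y) :
    #(lowest Y f m) = m := by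
  set rank : α → ℕ := fun y => #{z ∈ Y | f z < f y}
  have hlt : ∀ x ∈ Y, ∀ y, f x < f y → rank x < rank y := by
    intro x hx y hxy
    refine card_lt_card ((ssubset_iff_of_subset ?_).2 ⟨x, by simp [hx, hxy], by simp⟩)
    exact monotone_filter_right _ fun z _ hz => hz.trans hxy
  have hinj : Set.InjOn rank Y := by
    intro x hx y hy hxy
    by_contra hne
    rcases lt_or_gt_of_ne (hf.ne hx hy hne) with h | h
    · exact (hlt x hx y h).ne hxy
    · exact (hlt y hy x h).ne' hxy
  have himage : Y.image rank = range #Y := by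
    refine eq_of_subset_of_card_le (fun j hj => ?_) (by rw [card_image_of_injOn hinj, card_range])
    obtain ⟨y, hy, rfl⟩ := mem_image.1 hj
    exact mem_range.2 (card_lt_card ((filter_ssubset).2 ⟨y, hy, lt_irrefl _⟩))
  have hlowest : (lowest Y f m).image rank = range m := by
    ext j
    simp only [lowest, mem_image, mem_filter, mem_range]
    constructor
    · rintro ⟨y, hy, rfl⟩
      exact hy.2
    · intro hj
      obtain ⟨y, hy, rfl⟩ := mem_image.1 (himage ▸ mem_range.2 (hj.trans_le hm))
      exact ⟨y, ⟨hy, hj⟩, rfl⟩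
  rw [← card_image_of_injOn (hinj.mono (coe_subset.2 (lowest_subset Y f m))), hlowest, card_range]

theorem disjoint_lowest_lowest {Y : Finset α} {f g : α → β} {m : ℕ} (hm : 2 * m ≤ #Y)
    (hfg : ∀ x ∈ Y, ∀ y ∈ Y, x ≠ y → f x < f y ∨ g x < g y) :
    Disjoint (lowest Y f m) (lowest Y g m) := by
  classical
  refine disjoint_left.2 fun x hxf hxg => ?_
  obtain ⟨hx, hf⟩ := mem_filter.1 hxf
  have hg := (mem_filter.1 hxg).2
  have hcover : Y.erase x ⊆ {z ∈ Y | f z < f x} ∪ {z ∈ Y | g z < g x} := by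
    intro z hz
    obtain ⟨hzx, hz⟩ := mem_erase.1 hz
    rw [mem_union, mem_filter, mem_filter]
    exact (hfg z hz x hx hzx).imp (⟨hz, ·⟩) (⟨hz, ·⟩)
  have hcard := (card_le_card hcover).trans (card_union_le _ _)
  rw [card_erase_of_mem hx] at hcard
  omega

theorem disjoint_lowest_dot2_neg {P : Finset (ℝ × ℝ)} {u : ℝ × ℝ} (hu : Set.InjOn (dot2 u) P)
    {m : ℕ} (hm : 2 * m ≤ #P) :
    Disjoint (lowest P (dot2 u) m) (lowest P (dot2 (-u)) m) := by
  refine disjoint_lowest_lowest hm fun x hx y hy hxy => ?_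
  rw [dot2_neg_left, dot2_neg_left, neg_lt_neg_iff]
  exact lt_or_gt_of_ne (hu.ne hx hy hxy)

end Lowest

section Arcs
open Finset

/-- The number of points of `P` on the open left side of the line directed from `p` to `q`. -/
noncomputable def numLeft (P : Finset (ℝ × ℝ)) (p q : ℝ × ℝ) : ℕ :=
  #{x ∈ P | 0 < det2 (q - p) (x - p)}

/-- The ordered pairs of points of `P` with exactly `j` points on their left: each `j`-edge of `P`,
directed so as to leave `j` points on its left. -/
noncomputable def arcs (P : Finset (ℝ × ℝ)) (j : ℕ) : Finset ((ℝ × ℝ) × (ℝ × ℝ)) :=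
  {t ∈ P.offDiag | numLeft P t.1 t.2 = j}

/-- The ordered pairs of points of `P` with fewer than `j` points on their left. -/
noncomputable def arcsLT (P : Finset (ℝ × ℝ)) (j : ℕ) : Finset ((ℝ × ℝ) × (ℝ × ℝ)) :=
  {t ∈ P.offDiag | numLeft P t.1 t.2 < j}

theorem mem_arcs {P : Finset (ℝ × ℝ)} {j : ℕ} {t : (ℝ × ℝ) × (ℝ × ℝ)} :
    t ∈ arcs P j ↔ (t.1 ∈ P ∧ t.2 ∈ P ∧ t.1 ≠ t.2) ∧ numLeft P t.1 t.2 = j := by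
  rw [arcs, mem_filter, mem_offDiag]

theorem mem_arcsLT {P : Finset (ℝ × ℝ)} {j : ℕ} {t : (ℝ × ℝ) × (ℝ × ℝ)} :
    t ∈ arcsLT P j ↔ (t.1 ∈ P ∧ t.2 ∈ P ∧ t.1 ≠ t.2) ∧ numLeft P t.1 t.2 < j := by
  rw [arcsLT, mem_filter, mem_offDiag]

theorem numLeft_swap (P : Finset (ℝ × ℝ)) (p q : ℝ × ℝ) :
    numLeft P q p = #{x ∈ P | det2 (q - p) (x - p) < 0} := by
  simp only [numLeft, det2_sub_sub_swap p q, neg_pos]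

theorem numLeft_sdiff_add (P : Finset (ℝ × ℝ)) {V : Finset (ℝ × ℝ)} (hV : V ⊆ P) (p q : ℝ × ℝ) :
    numLeft (P \ V) p q + numLeft V p q = numLeft P p q := by
  rw [numLeft, numLeft, numLeft, ← card_union_of_disjoint
    (disjoint_filter_filter sdiff_disjoint), ← filter_union, sdiff_union_of_subset hV]

theorem numLeft_add_numLeft_swap {P : Finset (ℝ × ℝ)} (hP : GenPos P) {p q : ℝ × ℝ} (hp : p ∈ P)
    (hq : q ∈ P) (hpq : p ≠ q) : numLeft P p q + numLeft P q p + 2 = #P := by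
  have hsub : ({p, q} : Finset (ℝ × ℝ)) ⊆ P := insert_subset hp (singleton_subset_iff.2 hq)
  have hleft : numLeft P p q = #{x ∈ P \ {p, q} | 0 < det2 (q - p) (x - p)} := by
    rw [← numLeft_sdiff_add P hsub, numLeft, Nat.add_eq_left, numLeft]
    simp [det2, filter_insert, filter_singleton, mul_comm]
  have hright : numLeft P q p = #{x ∈ P \ {p, q} | ¬ 0 < det2 (q - p) (x - p)} := by
    rw [numLeft_swap]
    congr 1
    ext x
    simp only [mem_filter, mem_sdiff, mem_insert, mem_singleton, not_or, not_lt]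
    constructor
    · rintro ⟨hx, h⟩
      refine ⟨⟨hx, ?_, ?_⟩, h.le⟩ <;> rintro rfl <;> simp [det2, mul_comm] at h
    · rintro ⟨⟨hx, hxp, hxq⟩, h⟩
      exact ⟨hx, h.lt_of_ne (hP.det2_ne_zero hp hq hx hpq (Ne.symm hxp) (Ne.symm hxq))⟩
  rw [hleft, hright, card_filter_add_card_filter_not, ← card_pair hpq,
    card_sdiff_add_card_eq_card hsub]

theorem card_arcsLT_succ (P : Finset (ℝ × ℝ)) (j : ℕ) :
    #(arcsLT P (j + 1)) = #(arcsLT P j) + #(arcs P j) := by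
  rw [arcsLT, arcsLT, arcs, ← card_union_of_disjoint, ← filter_or]
  · simp only [Nat.lt_succ_iff_lt_or_eq]
  · exact disjoint_filter.2 fun t _ h => h.ne

theorem card_arcsLT (P : Finset (ℝ × ℝ)) (j : ℕ) : #(arcsLT P j) = ∑ i ∈ range j, #(arcs P i) := by
  induction j with
  | zero => simp [arcsLT]
  | succ j ih => rw [card_arcsLT_succ, ih, sum_range_succ]

theorem arcsLT_one (P : Finset (ℝ × ℝ)) : arcsLT P 1 = arcs P 0 := by
  simp only [arcsLT, arcs, Nat.lt_one_iff]

theorem swap_mem_arcs {P : Finset (ℝ × ℝ)} (hP : GenPos P) {i j : ℕ} (hij : i + j + 2 = #P)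
    {t : (ℝ × ℝ) × (ℝ × ℝ)} (ht : t ∈ arcs P i) : t.swap ∈ arcs P j := by
  obtain ⟨⟨hp, hq, hpq⟩, ht⟩ := mem_arcs.1 ht
  have hadd := numLeft_add_numLeft_swap hP hp hq hpq
  refine mem_arcs.2 ⟨⟨hq, hp, hpq.symm⟩, ?_⟩
  simp only [Prod.fst_swap, Prod.snd_swap]
  omega

theorem card_arcs_symm {P : Finset (ℝ × ℝ)} (hP : GenPos P) {i j : ℕ} (hij : i + j + 2 = #P) :
    #(arcs P i) = #(arcs P j) := by
  refine card_nbij' Prod.swap Prod.swap (fun t ht => swap_mem_arcs hP hij ht)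
    (fun t ht => swap_mem_arcs hP (by omega) ht) ?_ ?_ <;> intro t _ <;> exact t.swap_swap

theorem sum_offDiag_numLeft {P : Finset (ℝ × ℝ)} (hP : GenPos P) (g : ℕ → ℕ) :
    ∑ t ∈ P.offDiag, g (numLeft P t.1 t.2) = ∑ j ∈ range (#P - 1), #(arcs P j) * g j := by
  have hmaps : ∀ t ∈ P.offDiag, numLeft P t.1 t.2 ∈ range (#P - 1) := by
    intro t ht
    obtain ⟨hp, hq, hpq⟩ := mem_offDiag.1 ht
    have := numLeft_add_numLeft_swap hP hp hq hpq
    exact mem_range.2 (by omega)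
  rw [← sum_fiberwise_of_maps_to hmaps]
  refine sum_congr rfl fun j _ => ?_
  rw [sum_congr rfl fun t ht => by rw [(mem_filter.1 ht).2], sum_const, smul_eq_mul, arcs]

theorem sum_card_arcs {P : Finset (ℝ × ℝ)} (hP : GenPos P) :
    ∑ j ∈ range (#P - 1), #(arcs P j) = #P * (#P - 1) := by
  simpa [offDiag_card, Nat.mul_sub_one] using (sum_offDiag_numLeft hP fun _ => 1).symm

theorem injOn_sym2Mk_arcsLT {P : Finset (ℝ × ℝ)} (hP : GenPos P) {j : ℕ} (hj : 2 * j < #P) :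
    Set.InjOn (fun t : (ℝ × ℝ) × (ℝ × ℝ) => s(t.1, t.2)) (arcsLT P j) := by
  rintro ⟨p, q⟩ ht ⟨p', q'⟩ ht' heq
  rcases Sym2.eq_iff.1 heq with ⟨h1, h2⟩ | ⟨h1, h2⟩
  · exact Prod.ext h1 h2
  · dsimp only at h1 h2
    subst h1 h2
    obtain ⟨⟨hp, hq, hpq⟩, ht⟩ := mem_arcsLT.1 ht
    have ht' := (mem_arcsLT.1 ht').2
    have := numLeft_add_numLeft_swap hP hp hq hpq
    dsimp only at *
    omega

theorem isKEdge_iff {P : Finset (ℝ × ℝ)} {k : ℕ} {p q : ℝ × ℝ} :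
    IsKEdge P k p q ↔ p ≠ q ∧ (numLeft P p q = k ∨ numLeft P q p = k) := by
  rw [IsKEdge, numLeft_swap P p q, numLeft, ← Set.ncard_coe_finset, ← Set.ncard_coe_finset]
  simp only [coe_filter, mem_coe]

theorem Ek_eq_card_arcs {P : Finset (ℝ × ℝ)} (hP : GenPos P) {k : ℕ} (hk : 2 * k + 2 < #P) :
    Ek P k = #(arcs P k) := by
  have hsub : arcs P k ⊆ arcsLT P (k + 1) := monotone_filter_right _ fun t _ h => by omega
  rw [← card_image_of_injOn ((injOn_sym2Mk_arcsLT hP (by omega)).mono (coe_subset.2 hsub)),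
    ← Set.ncard_coe_finset, Ek]
  congr 1
  ext e
  simp only [Set.mem_ofPred_eq, coe_image, Set.mem_image, mem_coe, mem_arcs, isKEdge_iff]
  constructor
  · rintro ⟨p, hp, q, hq, rfl, hpq, h | h⟩
    · exact ⟨(p, q), ⟨⟨hp, hq, hpq⟩, h⟩, rfl⟩
    · exact ⟨(q, p), ⟨⟨hq, hp, hpq.symm⟩, h⟩, Sym2.eq_swap⟩
  · rintro ⟨⟨p, q⟩, ⟨⟨hp, hq, hpq⟩, h⟩, rfl⟩
    exact ⟨p, hp, q, hq, rfl, hpq, Or.inl h⟩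

theorem EleK_eq_card_arcsLT {P : Finset (ℝ × ℝ)} (hP : GenPos P) {k : ℕ} (hk : 2 * k + 2 < #P) :
    EleK P k = #(arcsLT P (k + 1)) := by
  rw [EleK, card_arcsLT]
  refine sum_congr rfl fun j hj => Ek_eq_card_arcs hP ?_
  have := mem_range.1 hj
  omega

end Arcs

section HullVertices
open Finset

/-- `v` is the unique minimiser of `dot2 e` on `P`, so that `e` certifies that `v` is a vertex of
the convex hull of `P`. -/
def IsExposedBy (P : Finset (ℝ × ℝ)) (v e : ℝ × ℝ) : Prop :=
  v ∈ P ∧ ∀ y ∈ P, y ≠ v → dot2 e v < dot2 e y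

/-- The tangent of the angle from `e` to `y - v`. If `e` exposes `v`, it lists the other points in
counterclockwise order around `v`. -/
noncomputable def tanAt (e v y : ℝ × ℝ) : ℝ := det2 e (y - v) / dot2 e (y - v)

variable {P : Finset (ℝ × ℝ)} {v e y z : ℝ × ℝ}

theorem IsExposedBy.dot2_sub_pos (h : IsExposedBy P v e) (hy : y ∈ P.erase v) :
    0 < dot2 e (y - v) := by
  obtain ⟨hne, hy⟩ := mem_erase.1 hy
  rw [dot2_sub_right]
  exact sub_pos.2 (h.2 y hy hne)

theorem IsExposedBy.ne_zero (h : IsExposedBy P v e) (hy : y ∈ P.erase v) : e ≠ 0 := by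
  rintro rfl
  simpa [dot2] using h.dot2_sub_pos hy

theorem IsExposedBy.tanAt_lt_tanAt (h : IsExposedBy P v e) (hy : y ∈ P.erase v)
    (hz : z ∈ P.erase v) : tanAt e v y < tanAt e v z ↔ 0 < det2 (y - v) (z - v) := by
  have hy' := h.dot2_sub_pos hy
  have he := dot2_self_pos (h.ne_zero hy)
  rw [tanAt, tanAt, div_lt_div_iff₀ hy' (h.dot2_sub_pos hz), ← sub_pos, mul_comm,
    ← det2_mul_dot2_self, mul_pos_iff_of_pos_left he]

theorem IsExposedBy.injOn_tanAt (hP : GenPos P) (h : IsExposedBy P v e) :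
    Set.InjOn (tanAt e v) (P.erase v) := by
  intro y hy z hz hyz
  by_contra hne
  have hyz' := (h.tanAt_lt_tanAt hy hz).not.1 hyz.not_lt
  have hzy' := (h.tanAt_lt_tanAt hz hy).not.1 hyz.symm.not_lt
  rw [det2_swap] at hzy'
  exact hP.det2_ne_zero h.1 (mem_of_mem_erase hy) (mem_of_mem_erase hz) (ne_of_mem_erase hy).symm
    (ne_of_mem_erase hz).symm hne (by linarith)

theorem filter_det2_pos_erase (P : Finset (ℝ × ℝ)) (v d : ℝ × ℝ) :
    {z ∈ P.erase v | 0 < det2 d (z - v)} = {z ∈ P | 0 < det2 d (z - v)} := by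
  rw [filter_erase, erase_eq_of_notMem]
  simp [det2]

theorem IsExposedBy.numLeft_out (h : IsExposedBy P v e) (hy : y ∈ P.erase v) :
    numLeft P v y = #{z ∈ P.erase v | tanAt e v y < tanAt e v z} := by
  rw [numLeft, ← filter_det2_pos_erase]
  exact congrArg card (filter_congr fun z hz => (h.tanAt_lt_tanAt hy hz).symm)

theorem IsExposedBy.numLeft_in (h : IsExposedBy P v e) (hy : y ∈ P.erase v) :
    numLeft P y v = #{z ∈ P.erase v | tanAt e v z < tanAt e v y} := by
  have hneg : ∀ z, det2 (y - v) (z - v) < 0 ↔ 0 < det2 (-(y - v)) (z - v) := fun z => by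
    rw [det2_neg_left, neg_pos]
  simp only [numLeft_swap P v y, hneg]
  rw [← filter_det2_pos_erase]
  refine congrArg card (filter_congr fun z hz => ?_)
  rw [h.tanAt_lt_tanAt hz hy, det2_neg_left, ← det2_swap]

theorem IsExposedBy.lowest_tanAt (h : IsExposedBy P v e) (j : ℕ) :
    lowest (P.erase v) (tanAt e v) j = {y ∈ P.erase v | numLeft P y v < j} :=
  filter_congr fun _ hy => by rw [h.numLeft_in hy]

theorem IsExposedBy.lowest_neg_tanAt (h : IsExposedBy P v e) (j : ℕ) :
    lowest (P.erase v) (fun y => -tanAt e v y) j = {y ∈ P.erase v | numLeft P v y < j} :=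
  filter_congr fun _ hy => by simp only [h.numLeft_out hy, neg_lt_neg_iff]

theorem IsExposedBy.card_arcsLT_in (hP : GenPos P) (h : IsExposedBy P v e) {j : ℕ} (hj : j < #P) :
    #{t ∈ arcsLT P j | t.2 = v} = j := by
  have hcard : j ≤ #(P.erase v) := by rw [card_erase_of_mem h.1]; omega
  refine Eq.trans ?_ (card_lowest (h.injOn_tanAt hP) hcard)
  rw [h.lowest_tanAt]
  refine card_nbij' Prod.fst (fun y => (y, v)) ?_ ?_ ?_ fun y _ => rfl
  · rintro ⟨y, w⟩ ht
    simp only [mem_coe, mem_filter, mem_arcsLT] at ht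
    obtain ⟨⟨⟨hy, -, hne⟩, hlt⟩, rfl⟩ := ht
    exact mem_filter.2 ⟨mem_erase.2 ⟨hne, hy⟩, hlt⟩
  · intro y hy
    simp only [mem_coe, mem_filter, mem_erase] at hy
    exact mem_filter.2 ⟨mem_arcsLT.2 ⟨⟨hy.1.2, h.1, hy.1.1⟩, hy.2⟩, rfl⟩
  · rintro ⟨y, w⟩ ht
    rw [← (mem_filter.1 ht).2]

theorem IsExposedBy.card_arcsLT_out (hP : GenPos P) (h : IsExposedBy P v e) {j : ℕ}
    (hj : j < #P) : #{t ∈ arcsLT P j | t.1 = v} = j := by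
  have hcard : j ≤ #(P.erase v) := by rw [card_erase_of_mem h.1]; omega
  refine Eq.trans ?_ (card_lowest (neg_injective.comp_injOn (h.injOn_tanAt hP)) hcard)
  refine Eq.trans ?_ (congrArg card (h.lowest_neg_tanAt j)).symm
  refine card_nbij' Prod.snd (fun y => (v, y)) ?_ ?_ ?_ fun y _ => rfl
  · rintro ⟨w, y⟩ ht
    simp only [mem_coe, mem_filter, mem_arcsLT] at ht
    obtain ⟨⟨⟨-, hy, hne⟩, hlt⟩, rfl⟩ := ht
    exact mem_filter.2 ⟨mem_erase.2 ⟨hne.symm, hy⟩, hlt⟩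
  · intro y hy
    simp only [mem_coe, mem_filter, mem_erase] at hy
    exact mem_filter.2 ⟨mem_arcsLT.2 ⟨⟨h.1, hy.1.2, hy.1.1.symm⟩, hy.2⟩, rfl⟩
  · rintro ⟨w, y⟩ ht
    rw [← (mem_filter.1 ht).2]

theorem card_filter_mem_eq_mul {α β : Type*} [DecidableEq β] {A : Finset α} {f : α → β}
    {V : Finset β} {j : ℕ} (h : ∀ v ∈ V, #{t ∈ A | f t = v} = j) :
    #{t ∈ A | f t ∈ V} = #V * j := by
  refine (card_eq_sum_card_fiberwise fun t ht => (mem_filter.1 ht).2).trans (sum_const_nat ?_)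
  intro v hv
  rw [← h v hv, filter_filter]
  exact congrArg card (filter_congr fun t _ => and_iff_right_of_imp fun ht => ht.symm ▸ hv)

theorem card_arcsLT_touching (hP : GenPos P) {V : Finset (ℝ × ℝ)}
    (hV : ∀ v ∈ V, ∃ e, IsExposedBy P v e) {j : ℕ} (hj : 2 * j < #P) :
    2 * (#V * j) ≤ #{t ∈ arcsLT P j | t.1 ∈ V ∨ t.2 ∈ V} + (#V).choose 2 := by
  have hout : #{t ∈ arcsLT P j | t.1 ∈ V} = #V * j := card_filter_mem_eq_mul fun v hv => by
    obtain ⟨e, he⟩ := hV v hv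
    exact he.card_arcsLT_out hP (by omega)
  have hin : #{t ∈ arcsLT P j | t.2 ∈ V} = #V * j := card_filter_mem_eq_mul fun v hv => by
    obtain ⟨e, he⟩ := hV v hv
    exact he.card_arcsLT_in hP (by omega)
  have hboth : #{t ∈ arcsLT P j | t.1 ∈ V ∧ t.2 ∈ V} ≤ (#V).choose 2 := by
    rw [← Sym2.card_image_offDiag]
    refine card_le_card_of_injOn (fun t => s(t.1, t.2)) (fun t ht => ?_)
      ((injOn_sym2Mk_arcsLT hP hj).mono (coe_subset.2 (filter_subset _ _)))
    obtain ⟨ht, h1, h2⟩ := mem_filter.1 ht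
    exact mem_image_of_mem _ (mem_offDiag.2 ⟨h1, h2, (mem_arcsLT.1 ht).1.2.2⟩)
  have hadd := card_union_add_card_inter {t ∈ arcsLT P j | t.1 ∈ V} {t ∈ arcsLT P j | t.2 ∈ V}
  rw [← filter_or, ← filter_and, hout, hin] at hadd
  omega

open scoped Classical in
/-- The points of `P` that are vertices of the convex hull of `P`. -/
noncomputable def hullVertices (P : Finset (ℝ × ℝ)) : Finset (ℝ × ℝ) :=
  {v ∈ P | ∃ e, IsExposedBy P v e}

theorem mem_hullVertices : v ∈ hullVertices P ↔ ∃ e, IsExposedBy P v e := by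
  classical
  rw [hullVertices, mem_filter]
  exact ⟨And.right, fun ⟨e, he⟩ => ⟨he.1, e, he⟩⟩

theorem exists_isExposedBy_of_numLeft_eq_zero (hP : GenPos P) (hv : v ∈ P) (hy : y ∈ P)
    (hvy : v ≠ y) (h0 : numLeft P v y = 0) : ∃ e, IsExposedBy P v e := by
  set d := y - v with hd
  have hdd : 0 < dot2 d d := dot2_self_pos (sub_ne_zero.2 hvy.symm)
  have hneg : ∀ z ∈ P, z ≠ v → z ≠ y → det2 d (z - v) < 0 := by
    intro z hz hzv hzy
    refine lt_of_le_of_ne ?_ (hP.det2_ne_zero hv hy hz hvy hzv.symm hzy.symm)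
    exact not_lt.1 (filter_eq_empty_iff.1 (card_eq_zero.1 h0) hz)
  have hexposes : ∀ᶠ ε : ℝ in nhdsWithin 0 (Set.Ioi 0), ∀ z ∈ P, z ≠ v →
      0 < dot2 (-perp d + ε • d) (z - v) := by
    rw [Filter.eventually_all_finset]
    intro z hz
    simp only [dot2_add_smul_left, dot2_neg_left, dot2_perp_left]
    by_cases hzy : z = y
    · filter_upwards [self_mem_nhdsWithin] with ε hε _
      rw [hzy, ← hd, det2_self, neg_zero, zero_add]
      exact mul_pos hε hdd
    · refine Filter.Eventually.filter_mono nhdsWithin_le_nhds ?_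
      rw [Filter.eventually_imp_distrib_left]
      intro hzv
      have hcont : Continuous fun ε : ℝ => -det2 d (z - v) + ε * dot2 d (z - v) := by fun_prop
      exact hcont.continuousAt.eventually_const_lt (by simpa using hneg z hz hzv hzy)
  obtain ⟨ε, hε⟩ := hexposes.exists
  refine ⟨-perp d + ε • d, hv, fun z hz hzv => ?_⟩
  rw [← sub_pos, ← dot2_sub_right]
  exact hε z hz hzv

theorem card_arcs_zero (hP : GenPos P) (hcard : 2 ≤ #P) : #(arcs P 0) = #(hullVertices P) := by
  rw [← arcsLT_one, card_eq_sum_card_fiberwise (f := Prod.fst) (t := hullVertices P),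
    card_eq_sum_ones]
  · refine sum_congr rfl fun v hv => ?_
    obtain ⟨e, he⟩ := mem_hullVertices.1 hv
    exact he.card_arcsLT_out hP (by omega)
  · intro t ht
    obtain ⟨⟨hp, hq, hpq⟩, ht⟩ := mem_arcsLT.1 ht
    exact mem_hullVertices.2 (exists_isExposedBy_of_numLeft_eq_zero hP hp hq hpq (by omega))

theorem isLinearMap_dot2 (u : ℝ × ℝ) : IsLinearMap ℝ (dot2 u) where
  map_add x y := by simp only [dot2, Prod.fst_add, Prod.snd_add]; ring
  map_smul c x := by simp only [dot2, Prod.smul_fst, Prod.smul_snd, smul_eq_mul]; ring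

theorem exists_eq_dot2 (g : StrongDual ℝ (ℝ × ℝ)) : ∃ e, ∀ w, g w = dot2 e w := by
  refine ⟨(g (1, 0), g (0, 1)), fun w => ?_⟩
  have hw : w = w.1 • ((1, 0) : ℝ × ℝ) + w.2 • ((0, 1) : ℝ × ℝ) := by ext <;> simp
  conv_lhs => rw [hw, map_add, map_smul, map_smul]
  simp only [dot2, smul_eq_mul, mul_comm]

theorem exists_isExposedBy_iff (hv : v ∈ P) :
    (∃ e, IsExposedBy P v e) ↔ v ∉ convexHull ℝ ((P.erase v : Finset (ℝ × ℝ)) : Set (ℝ × ℝ)) := by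
  constructor
  · rintro ⟨e, he⟩ hmem
    have hsub : ((P.erase v : Finset (ℝ × ℝ)) : Set (ℝ × ℝ)) ⊆ {y | dot2 e v < dot2 e y} :=
      fun y hy => he.2 y (mem_of_mem_erase hy) (ne_of_mem_erase hy)
    exact lt_irrefl (dot2 e v)
      (convexHull_min hsub (convex_halfSpace_gt (isLinearMap_dot2 e) _) hmem)
  · intro hv'
    obtain ⟨g, c, hgv, hg⟩ := geometric_hahn_banach_point_closed (convex_convexHull ℝ _)
      ((P.erase v).finite_toSet.isClosed_convexHull ℝ) hv'
    obtain ⟨e, he⟩ := exists_eq_dot2 g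
    refine ⟨e, hv, fun y hy hyv => ?_⟩
    rw [← he, ← he]
    exact hgv.trans (hg y (subset_convexHull ℝ _ (mem_erase.2 ⟨hyv, hy⟩)))

end HullVertices

section BalancedDirections
open Finset

theorem exists_lt_separating_lowest {α : Type*} {Y : Finset α} {f : α → ℝ} {m : ℕ}
    (hf : Set.InjOn f Y) (hm : 0 < m) (hmY : m < #Y) :
    ∃ a b, a < b ∧ (∀ x ∈ lowest Y f m, f x ≤ a) ∧ ∀ y ∈ Y, y ∉ lowest Y f m → b ≤ f y := by
  classical
  have hcard := card_lowest hf hmY.le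
  have hsdiff : #(Y \ lowest Y f m) = #Y - m := by
    rw [card_sdiff_of_subset (lowest_subset Y f m), hcard]
  obtain ⟨x, hx, hxmax⟩ := exists_max_image (lowest Y f m) f (card_pos.1 (by omega))
  obtain ⟨y, hy, hymin⟩ := exists_min_image (Y \ lowest Y f m) f (card_pos.1 (by omega))
  obtain ⟨hyY, hyL⟩ := mem_sdiff.1 hy
  exact ⟨f x, f y, lt_of_mem_lowest_of_notMem_lowest hx hyY hyL, hxmax,
    fun z hz hzL => hymin z (mem_sdiff.2 ⟨hz, hzL⟩)⟩

/-- The line through the hull vertex `v` orthogonal to `u` is generic for `P` and leaves more than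
`k` points of `P` on each side; `u` is oriented so that it is counterclockwise from a direction
exposing `v`. -/
structure IsBalanced (P : Finset (ℝ × ℝ)) (k : ℕ) (v u : ℝ × ℝ) : Prop where
  exposed : ∃ e, IsExposedBy P v e ∧ 0 < det2 e u
  inj : Set.InjOn (dot2 u) P
  lt_card_below : k < #{y ∈ P | dot2 u y < dot2 u v}
  lt_card_above : k < #{y ∈ P | dot2 u v < dot2 u y}

variable {P : Finset (ℝ × ℝ)} {k : ℕ} {v e u s y : ℝ × ℝ}

theorem IsBalanced.mem (h : IsBalanced P k v u) : v ∈ P :=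
  h.exposed.elim fun _ he => he.1.1

theorem IsBalanced.ne_zero (h : IsBalanced P k v u) : u ≠ 0 := by
  rintro rfl
  obtain ⟨e, -, he⟩ := h.exposed
  simp [det2] at he

theorem IsExposedBy.dot2_lt_of_det2_mul_dot2_nonpos (h : IsExposedBy P v e)
    (heu : 0 < det2 e u) (hus : 0 < det2 u s) (hy : y ∈ P.erase v)
    (hle : det2 e s * dot2 u (y - v) ≤ 0) : dot2 s y < dot2 s v := by
  have hprod : det2 e u * dot2 s (y - v) < 0 := by
    rw [det2_mul_dot2_eq]
    exact sub_neg.2 (hle.trans_lt (mul_pos hus (h.dot2_sub_pos hy)))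
  rw [← sub_neg, ← dot2_sub_right]
  exact neg_of_mul_neg_right hprod heu.le

theorem IsBalanced.lt_card_dot2_lt (h : IsBalanced P k v u) (hs : 0 < det2 u s) :
    k < #{y ∈ P | dot2 s y < dot2 s v} := by
  obtain ⟨e, he, heu⟩ := h.exposed
  rcases le_total 0 (det2 e s) with hes | hes
  · refine h.lt_card_below.trans_le (card_le_card fun y hy => ?_)
    obtain ⟨hyP, hlt⟩ := mem_filter.1 hy
    have hyv : y ∈ P.erase v := mem_erase.2 ⟨ne_of_apply_ne _ hlt.ne, hyP⟩
    refine mem_filter.2 ⟨hyP, he.dot2_lt_of_det2_mul_dot2_nonpos heu hs hyv ?_⟩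
    rw [dot2_sub_right]
    exact mul_nonpos_of_nonneg_of_nonpos hes (sub_neg.2 hlt).le
  · refine h.lt_card_above.trans_le (card_le_card fun y hy => ?_)
    obtain ⟨hyP, hlt⟩ := mem_filter.1 hy
    have hyv : y ∈ P.erase v := mem_erase.2 ⟨ne_of_apply_ne _ hlt.ne', hyP⟩
    refine mem_filter.2 ⟨hyP, he.dot2_lt_of_det2_mul_dot2_nonpos heu hs hyv ?_⟩
    rw [dot2_sub_right]
    exact mul_nonpos_of_nonpos_of_nonneg hes (sub_pos.2 hlt).le

theorem IsBalanced.lt_card_lt_dot2 (h : IsBalanced P k v u) (hs : 0 < det2 s u) :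
    k < #{y ∈ P | dot2 s v < dot2 s y} := by
  have hs' : 0 < det2 u (-s) := by rwa [det2_neg_right, ← det2_swap]
  simpa only [dot2_neg_left, neg_lt_neg_iff] using h.lt_card_dot2_lt hs'

theorem IsExposedBy.dot2_perp_add_smul_neg (h : IsExposedBy P v e) (t : ℝ) (hy : y ∈ P.erase v) :
    dot2 (perp e + t • -e) (y - v) = dot2 e (y - v) * (tanAt e v y - t) := by
  rw [dot2_add_smul_left, dot2_perp_left, dot2_neg_left, tanAt, mul_sub,
    mul_div_cancel₀ _ (h.dot2_sub_pos hy).ne']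
  ring

theorem IsExposedBy.exists_isBalanced (hP : GenPos P) (hk : 2 * k + 3 ≤ #P)
    (h : IsExposedBy P v e) (W : Finset (ℝ × ℝ)) (hW : ∀ w ∈ W, w ≠ 0) :
    ∃ u, IsBalanced P k v u ∧ ∀ w ∈ W, det2 u w ≠ 0 := by
  classical
  have hcard : #(P.erase v) = #P - 1 := card_erase_of_mem h.1
  have htan := h.injOn_tanAt hP
  have hlowest := card_lowest htan (m := k + 1) (by omega)
  obtain ⟨a, b, hab, ha, hb⟩ := exists_lt_separating_lowest htan k.succ_pos (by omega)
  obtain ⟨y, hy⟩ := card_pos.1 (show 0 < #(P.erase v) by omega)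
  have he := dot2_self_pos (h.ne_zero hy)
  have hdet : det2 (perp e) (-e) ≠ 0 := by
    rw [det2_neg_right, ← det2_swap, det2_perp_right]
    exact he.ne'
  obtain ⟨t, ⟨hat, htb⟩, hinj, hdetW⟩ :=
    exists_mem_Ioo_injOn_dot2_and_det2_ne_zero P hW hdet hab
  refine ⟨perp e + t • -e, ⟨⟨e, h, ?_⟩, hinj, ?_, ?_⟩, hdetW⟩
  · rwa [det2_swap, det2_add_smul_left, det2_neg_left, det2_self, neg_zero, mul_zero, add_zero,
      ← det2_swap, det2_perp_right]
  · refine hlowest.ge.trans (card_le_card fun y hy => ?_)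
    have hyY := lowest_subset _ _ _ hy
    refine mem_filter.2 ⟨mem_of_mem_erase hyY, ?_⟩
    rw [← sub_neg, ← dot2_sub_right, h.dot2_perp_add_smul_neg t hyY]
    exact mul_neg_of_pos_of_neg (h.dot2_sub_pos hyY) (by linarith [ha y hy])
  · have hcompl : k < #(P.erase v \ lowest (P.erase v) (tanAt e v) (k + 1)) := by
      rw [card_sdiff_of_subset (lowest_subset _ _ _)]
      omega
    refine hcompl.trans_le (card_le_card fun y hy => ?_)
    obtain ⟨hyY, hyL⟩ := mem_sdiff.1 hy
    refine mem_filter.2 ⟨mem_of_mem_erase hyY, ?_⟩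
    rw [← sub_pos, ← dot2_sub_right, h.dot2_perp_add_smul_neg t hyY]
    exact mul_pos (h.dot2_sub_pos hyY) (by linarith [hb y hyY hyL])

theorem exists_isBalanced_family (hP : GenPos P) (hk : 2 * k + 3 ≤ #P) (V : Finset (ℝ × ℝ))
    (hV : ∀ v ∈ V, ∃ e, IsExposedBy P v e) :
    ∃ f : ℝ × ℝ → ℝ × ℝ, (∀ v ∈ V, IsBalanced P k v (f v)) ∧
      (V : Set (ℝ × ℝ)).Pairwise fun v w => det2 (f v) (f w) ≠ 0 := by
  induction V using Finset.induction_on with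
  | empty => exact ⟨id, by simp, by simp⟩
  | insert a V ha ih =>
    obtain ⟨f, hf, hdet⟩ := ih fun v hv => hV v (mem_insert_of_mem hv)
    obtain ⟨e, he⟩ := hV a (mem_insert_self _ _)
    obtain ⟨u, hu, huW⟩ := he.exists_isBalanced hP hk (V.image f) (by
      simpa only [mem_image, forall_exists_index, and_imp, forall_apply_eq_imp_iff₂]
        using fun v hv => (hf v hv).ne_zero)
    have hupdate : ∀ v ∈ V, Function.update f a u v = f v := fun v hv =>
      Function.update_of_ne (ne_of_mem_of_not_mem hv ha) u f
    refine ⟨Function.update f a u, ?_, ?_⟩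
    · rw [forall_mem_insert, Function.update_self]
      exact ⟨hu, fun v hv => by rw [hupdate v hv]; exact hf v hv⟩
    · rw [coe_insert, Set.pairwise_insert]
      refine ⟨fun v hv w hw hvw => ?_, fun v hv _ => ?_⟩
      · simpa only [hupdate v hv, hupdate w hw] using hdet hv hw hvw
      · have hne := huW _ (mem_image_of_mem f hv)
        rw [hupdate v hv, Function.update_self, det2_swap u]
        exact ⟨hne, neg_ne_zero.2 hne⟩

theorem exists_isExposedBy (hP : P.Nonempty) (hs : Set.InjOn (dot2 s) P) :
    ∃ v, IsExposedBy P v s := by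
  obtain ⟨v, hv, hmin⟩ := exists_min_image P (dot2 s) hP
  exact ⟨v, hv, fun y hy hyv => (hmin y hy).lt_of_ne (hs.ne hv hy hyv.symm)⟩

theorem IsExposedBy.filter_dot2_lt_eq_empty (h : IsExposedBy P v e) :
    {y ∈ P | dot2 e y < dot2 e v} = ∅ := by
  refine filter_eq_empty_iff.2 fun y hy hlt => ?_
  exact (h.2 y hy (ne_of_apply_ne _ hlt.ne)).not_gt hlt

theorem IsExposedBy.filter_lt_dot2_eq_empty (h : IsExposedBy P v (-e)) :
    {y ∈ P | dot2 e v < dot2 e y} = ∅ := by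
  simpa only [dot2_neg_left, neg_lt_neg_iff] using h.filter_dot2_lt_eq_empty

theorem zero_mem_convexHull_of_isBalanced (hP : P.Nonempty) {f : ℝ × ℝ → ℝ × ℝ}
    (hf : ∀ v ∈ hullVertices P, IsBalanced P k v (f v)) :
    (0 : ℝ × ℝ) ∈ convexHull ℝ (f '' hullVertices P) := by
  by_contra h0
  obtain ⟨g, c, hc, hg⟩ := geometric_hahn_banach_point_closed (convex_convexHull ℝ _)
    (((hullVertices P).finite_toSet.image f).isClosed_convexHull ℝ) h0
  obtain ⟨e, he⟩ := exists_eq_dot2 g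
  have hpos : ∀ d ∈ (hullVertices P).image f, 0 < det2 (-perp e) d := by
    intro d hd
    have hgd : det2 (-perp e) d = g d := by
      rw [he, det2_neg_left, det2_swap, neg_neg, det2_perp_right]
      simp only [dot2, mul_comm]
    rw [hgd, ← map_zero g]
    exact hc.trans (hg d (subset_convexHull ℝ _ (by rwa [← coe_image])))
  obtain ⟨s₀, hs₀, -⟩ := exists_injOn_dot2_of_forall_det2_pos P ∅ (s := ((1, 0) : ℝ × ℝ)) (by simp)
    (by simp)
  obtain ⟨w, hw⟩ := exists_isExposedBy hP hs₀
  have hne : -perp e ≠ 0 :=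
    ne_zero_of_det2_ne_zero_left (hpos _ (mem_image_of_mem f (mem_hullVertices.2 ⟨_, hw⟩))).ne'
  obtain ⟨s, hs, hspos⟩ := exists_injOn_dot2_of_forall_det2_pos P _ hne hpos
  obtain ⟨v, hv⟩ := exists_isExposedBy hP (injOn_dot2_neg hs)
  have hvH := mem_hullVertices.2 ⟨_, hv⟩
  have habove := (hf v hvH).lt_card_lt_dot2 (hspos _ (mem_image_of_mem f hvH))
  rw [hv.filter_lt_dot2_eq_empty, card_empty] at habove
  exact habove.not_ge (Nat.zero_le k)

theorem sum_mul_det2_eq_zero {ι : Type*} [Fintype ι] {w : ι → ℝ} {z : ι → ℝ × ℝ}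
    (hsum : ∑ j, w j • z j = 0) (a : ℝ × ℝ) : ∑ j, w j * det2 a (z j) = 0 := by
  have h := congrArg (isLinearMap_dot2 (perp a)).mk' hsum
  simpa only [map_sum, map_smul, map_zero, IsLinearMap.mk'_apply, dot2_perp_left, smul_eq_mul]
    using h

theorem exists_det2_pos_and_det2_pos {ι : Type*} [Fintype ι] {w : ι → ℝ} {z : ι → ℝ × ℝ}
    (hw : ∀ j, 0 < w j) (hsum : ∑ j, w j • z j = 0) {a : ℝ × ℝ} {l : ι}
    (hl : det2 a (z l) ≠ 0) : (∃ j, 0 < det2 a (z j)) ∧ ∃ k, 0 < det2 (z k) a := by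
  have hrel := sum_mul_det2_eq_zero hsum a
  have hterm : w l * det2 a (z l) ≠ 0 := mul_ne_zero (hw l).ne' hl
  obtain ⟨j, -, hj⟩ := exists_pos_of_sum_zero_of_exists_nonzero _ hrel ⟨l, mem_univ l, hterm⟩
  obtain ⟨k, -, hk⟩ := exists_pos_of_sum_zero_of_exists_nonzero
    (fun j => -(w j * det2 a (z j))) (by rw [sum_neg_distrib, hrel, neg_zero])
    ⟨l, mem_univ l, neg_ne_zero.2 hterm⟩
  rw [← mul_neg, ← det2_swap] at hk
  exact ⟨⟨j, pos_of_mul_pos_right hj (hw j).le⟩, k, pos_of_mul_pos_right hk (hw k).le⟩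

theorem exists_cyclic_of_zero_mem_convexHull {S : Set (ℝ × ℝ)} (h0 : 0 ∈ convexHull ℝ S)
    (hS0 : 0 ∉ S) (hS : S.Pairwise fun a b => det2 a b ≠ 0) :
    ∃ u : Fin 3 → ℝ × ℝ, (∀ i, u i ∈ S) ∧ ∀ i, 0 < det2 (u i) (u (i + 1)) := by
  classical
  obtain ⟨ι, _, z, w, hz, haff, hw, hw1, hsum⟩ := eq_pos_convex_span_of_mem_convexHull h0
  have hcard : Fintype.card ι ≤ 3 := by
    have hle := haff.card_le_finrank_succ.trans (Nat.succ_le_succ (Submodule.finrank_le _))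
    simpa only [Module.finrank_prod, Module.finrank_self] using hle
  have hzS : ∀ i, z i ∈ S := fun i => hz ⟨i, rfl⟩
  obtain ⟨i⟩ : Nonempty ι := by
    by_contra hempty
    rw [not_nonempty_iff] at hempty
    simp at hw1
  obtain ⟨l, hl⟩ : ∃ l, l ≠ i := by
    by_contra! hall
    rw [Fintype.sum_eq_single i fun j hj => absurd (hall j) hj] at hsum
    exact hS0 ((smul_eq_zero_iff_right (hw i).ne').1 hsum ▸ hzS i)
  obtain ⟨⟨j, hj⟩, k, hk⟩ := exists_det2_pos_and_det2_pos hw hsum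
    (hS (hzS i) (hzS l) (haff.injective.ne hl.symm))
  have hij : i ≠ j := by rintro rfl; simp [det2_self] at hj
  have hki : k ≠ i := by rintro rfl; simp [det2_self] at hk
  have hjk : j ≠ k := by rintro rfl; rw [det2_swap] at hk; linarith
  have huniv : ({i, j, k} : Finset ι) = univ :=
    eq_of_subset_of_card_le (subset_univ _)
      (hcard.trans_eq (card_eq_three.2 ⟨i, j, k, hij, hki.symm, hjk, rfl⟩).symm)
  have hjk' : 0 < det2 (z j) (z k) := by
    have h := sum_mul_det2_eq_zero hsum (z k)
    rw [← huniv, sum_insert (by simp [hij, hki.symm]), sum_pair hjk, det2_self, mul_zero,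
      add_zero, det2_swap (z j)] at h
    refine pos_of_mul_pos_right (a := w j) ?_ (hw j).le
    linarith [mul_pos (hw i) hk]
  exact ⟨![z i, z j, z k], by simp [Fin.forall_fin_succ, hzS],
    by simp [Fin.forall_fin_succ, hj, hjk', hk]⟩

/-- Three distinct hull vertices `v i` with balanced directions `u i` that positively span the
plane, listed counterclockwise. Indices are taken modulo `3`. -/
structure IsBalancedTriple (P : Finset (ℝ × ℝ)) (k : ℕ) (v u : Fin 3 → ℝ × ℝ) : Prop where
  inj : Function.Injective v
  balanced : ∀ i, IsBalanced P k (v i) (u i)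
  cyclic : ∀ i, 0 < det2 (u i) (u (i + 1))

theorem eq_add_one_or_eq_add_one_of_ne :
    ∀ {i j : Fin 3}, i ≠ j → j = i + 1 ∨ i = j + 1 := by
  decide

theorem exists_isBalancedTriple (hP : GenPos P) (hk : 2 * k + 3 ≤ #P) :
    ∃ v u, IsBalancedTriple P k v u := by
  obtain ⟨f, hf, hdet⟩ := exists_isBalanced_family hP hk (hullVertices P) fun _ =>
    mem_hullVertices.1
  obtain ⟨u, huS, hu⟩ := exists_cyclic_of_zero_mem_convexHull
    (zero_mem_convexHull_of_isBalanced (card_pos.1 (by omega)) hf)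
    (fun ⟨v, hv, hv0⟩ => (hf v hv).ne_zero hv0)
    (Set.Pairwise.image fun v hv w hw hvw => hdet hv hw hvw)
  choose v hv hvu using huS
  have hsucc : ∀ i, v i ≠ v (i + 1) := by
    intro i hi
    have h := hu i
    rw [← hvu i, hi, hvu, det2_self] at h
    exact lt_irrefl _ h
  refine ⟨v, u, fun i j hij => ?_, fun i => hvu i ▸ hf _ (hv i), hu⟩
  by_contra hne
  rcases eq_add_one_or_eq_add_one_of_ne hne with rfl | rfl
  · exact hsucc i hij
  · exact hsucc j hij.symm

end BalancedDirections

section DescendingArcs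
open Finset

-- Discrete intermediate value: moving the threshold upwards past an element `z` changes the count
-- by `+1` if `p z` and by `-1` if not.
theorem exists_card_filter_add_card_filter_add_one_eq {α β : Type*} [LinearOrder β]
    (S : Finset α) (τ : α → β) (hτ : Set.InjOn τ S) (p : α → Prop) [DecidablePred p] {m : ℕ}
    (hlt : #{z ∈ S | ¬ p z} < m) (hle : m ≤ #{z ∈ S | p z}) :
    ∃ y ∈ S, p y ∧ #{z ∈ S | p z ∧ τ z < τ y} + #{z ∈ S | ¬ p z ∧ τ y < τ z} + 1 = m := by
  classical
  induction S using Finset.induction_on_max_value τ generalizing m with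
  | empty => simp at hlt hle; omega
  | insert a S ha hmax ih =>
    have hSa : ∀ y ∈ S, τ y < τ a := fun y hy => (hmax y hy).lt_of_ne <|
      hτ.ne (mem_insert_of_mem hy) (mem_insert_self a S) (ne_of_mem_of_not_mem hy ha)
    have hτ' := hτ.mono (coe_subset.2 (subset_insert a S))
    by_cases hpa : p a
    · rw [filter_insert, if_neg (not_not.2 hpa)] at hlt
      rw [filter_insert, if_pos hpa, card_insert_of_notMem (by simp [ha])] at hle
      obtain hle' | rfl := Nat.le_or_eq_of_le_succ hle
      · obtain ⟨y, hy, hpy, hcard⟩ := ih hτ' hlt hle'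
        refine ⟨y, mem_insert_of_mem hy, hpy, ?_⟩
        rwa [filter_insert, if_neg fun h => (hSa y hy).not_gt h.2, filter_insert,
          if_neg (not_and_of_not_left _ (not_not.2 hpa))]
      · refine ⟨a, mem_insert_self a S, hpa, ?_⟩
        rw [filter_insert, if_neg fun h => lt_irrefl _ h.2, filter_insert,
          if_neg (not_and_of_not_left _ (not_not.2 hpa)),
          filter_congr fun z hz => and_iff_left (hSa z hz),
          filter_false_of_mem (p := fun z => ¬ p z ∧ τ a < τ z) fun z hz h =>
            (hSa z hz).not_gt h.2, card_empty, add_zero]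
    · rw [filter_insert, if_pos hpa, card_insert_of_notMem (by simp [ha])] at hlt
      rw [filter_insert, if_neg hpa] at hle
      obtain ⟨y, hy, hpy, hcard⟩ := ih hτ' (Nat.lt_sub_of_add_lt hlt) ((Nat.sub_le m 1).trans hle)
      refine ⟨y, mem_insert_of_mem hy, hpy, ?_⟩
      rw [filter_insert, if_neg fun h => hpa h.1, filter_insert, if_pos ⟨hpa, hSa y hy⟩,
        card_insert_of_notMem (by simp [ha])]
      omega

/-- The ordered pairs of points of `P` with exactly `k - 1` points on their left along which both
linear functionals `dot2 u` and `dot2 v` decrease; there are none for `k = 0`. -/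
noncomputable def descendingArcs (P : Finset (ℝ × ℝ)) (k : ℕ) (u v : ℝ × ℝ) :
    Finset ((ℝ × ℝ) × (ℝ × ℝ)) :=
  {t ∈ P.offDiag | dot2 u t.2 < dot2 u t.1 ∧ dot2 v t.2 < dot2 v t.1 ∧ numLeft P t.1 t.2 + 1 = k}

variable {P : Finset (ℝ × ℝ)} {a b x y : ℝ × ℝ} {k : ℕ}

theorem mem_descendingArcs {t : (ℝ × ℝ) × (ℝ × ℝ)} :
    t ∈ descendingArcs P k a b ↔ (t.1 ∈ P ∧ t.2 ∈ P ∧ t.1 ≠ t.2) ∧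
      dot2 a t.2 < dot2 a t.1 ∧ dot2 b t.2 < dot2 b t.1 ∧ numLeft P t.1 t.2 + 1 = k := by
  rw [descendingArcs, mem_filter, mem_offDiag]

theorem det2_sub_sub_pos_iff (hab : 0 < det2 a b) (x y z : ℝ × ℝ) :
    0 < det2 (x - y) (z - y) ↔
      dot2 a (y - x) * dot2 b (z - x) < dot2 a (z - x) * dot2 b (y - x) := by
  rw [← det2_sub_sub_rotate y x z, ← mul_pos_iff_of_pos_left hab, det2_mul_det2_eq, sub_pos]

theorem card_filter_neg_eq {α : Type*} (S : Finset α) {A B : α → ℝ}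
    (h : ∀ z ∈ S, A z < 0 → B z ≠ 0) :
    #{z ∈ S | A z < 0} =
      #{z ∈ S | A z < 0 ∧ 0 < B z} + #{z ∈ {z ∈ S | 0 < A z * B z} | ¬ 0 < B z} := by
  rw [← card_filter_add_card_filter_not (fun z => 0 < B z), filter_filter, filter_filter,
    filter_filter]
  congr 2
  refine filter_congr fun z hz => ⟨fun ⟨hA, hB⟩ => ⟨?_, hB⟩, fun ⟨hAB, hB⟩ => ⟨?_, hB⟩⟩
  · exact mul_pos_of_neg_of_neg hA ((not_lt.1 hB).lt_of_ne (h z hz hA))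
  · exact neg_of_mul_pos_left hAB (not_lt.1 hB)

theorem card_filter_pos_eq {α : Type*} (S : Finset α) {A B : α → ℝ}
    (h : ∀ z ∈ S, 0 < B z → A z ≠ 0) :
    #{z ∈ S | 0 < B z} =
      #{z ∈ S | A z < 0 ∧ 0 < B z} + #{z ∈ {z ∈ S | 0 < A z * B z} | 0 < B z} := by
  rw [← card_filter_add_card_filter_not (fun z => A z < 0), filter_filter, filter_filter,
    filter_filter]
  congr 2
  · exact filter_congr fun z _ => and_comm
  refine filter_congr fun z hz => ⟨fun ⟨hB, hA⟩ => ⟨?_, hB⟩, fun ⟨hAB, hB⟩ => ⟨hB, ?_⟩⟩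
  · exact mul_pos ((not_lt.1 hA).lt_of_ne (h z hz hB).symm) hB
  · exact (pos_of_mul_pos_left hAB hB.le).not_gt

theorem injOn_dot2_div_dot2 (hP : GenPos P) (hba : 0 < det2 b a) (hx : x ∈ P) :
    Set.InjOn (fun z => dot2 a (z - x) / dot2 b (z - x))
      {z ∈ P | 0 < dot2 a (z - x) * dot2 b (z - x)} := by
  rintro z ⟨hz, hzpos⟩ w ⟨hw, hwpos⟩ heq
  have hne : ∀ {z}, 0 < dot2 a (z - x) * dot2 b (z - x) → x ≠ z := by
    rintro z hz rfl
    simp [dot2] at hz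
  by_contra hzw
  have hdet : det2 b a * det2 (z - x) (w - x) = 0 := by
    rw [det2_mul_det2_eq, sub_eq_zero, mul_comm, eq_comm, mul_comm (dot2 b _)]
    exact (div_eq_div_iff (right_ne_zero_of_mul hzpos.ne') (right_ne_zero_of_mul hwpos.ne')).1 heq
  exact hP.det2_ne_zero hx hz hw (hne hzpos) (hne hwpos) hzw
    ((mul_eq_zero_iff_left hba.ne').1 hdet)

theorem numLeft_eq_card_add_card_add_card (hba : 0 < det2 b a)
    (hne : ∀ z ∈ P, z ≠ x → dot2 a (z - x) ≠ 0 ∧ dot2 b (z - x) ≠ 0)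
    (hay : 0 < dot2 a (y - x)) (hby : 0 < dot2 b (y - x)) :
    let τ := fun z => dot2 a (z - x) / dot2 b (z - x)
    let S := {z ∈ P | 0 < dot2 a (z - x) * dot2 b (z - x)}
    numLeft P y x = #{z ∈ P | dot2 a (z - x) < 0 ∧ 0 < dot2 b (z - x)} +
      (#{z ∈ S | 0 < dot2 b (z - x) ∧ τ z < τ y} +
        #{z ∈ S | ¬ 0 < dot2 b (z - x) ∧ τ y < τ z}) := by
  intro τ S
  rw [← card_union_of_disjoint (disjoint_filter.2 fun z _ h h' => h'.1 h.1), ← filter_or,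
    filter_filter, ← card_union_of_disjoint, ← filter_or, numLeft]
  · refine congrArg card (filter_congr fun z hz => ?_)
    rw [det2_sub_sub_pos_iff hba]
    rcases eq_or_ne z x with rfl | hzx
    · simp [dot2]
    obtain ⟨hAz, hBz⟩ := hne z hz hzx
    rcases hAz.lt_or_gt with hA | hA <;> rcases hBz.lt_or_gt with hB | hB
    · have hτ : τ y < τ z ↔
          dot2 b (y - x) * dot2 a (z - x) < dot2 b (z - x) * dot2 a (y - x) := by
        rw [lt_div_iff_of_neg hB, div_mul_eq_mul_div, lt_div_iff₀ hby, mul_comm (dot2 a _),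
          mul_comm (dot2 a _)]
      simp only [hτ, hB.not_gt, mul_pos_of_neg_of_neg hA hB, and_false, false_and, false_or,
        not_false_eq_true, true_and]
    · simp only [hA, hB, (mul_neg_of_pos_of_neg hby hA).trans (mul_pos hB hay), and_self, true_or]
    · simp only [hA.not_gt, hB.not_gt, (mul_neg_of_pos_of_neg hA hB).not_gt, false_and, or_false,
        iff_false, not_lt]
      exact ((mul_neg_of_neg_of_pos hB hay).trans (mul_pos hby hA)).le
    · have hτ : τ z < τ y ↔
          dot2 b (y - x) * dot2 a (z - x) < dot2 b (z - x) * dot2 a (y - x) := by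
        rw [div_lt_div_iff₀ hB hby, mul_comm (dot2 a _), mul_comm (dot2 a _)]
      simp only [hτ, hA.not_gt, hB, mul_pos hA hB, false_and, not_true_eq_false, or_false, false_or,
        true_and]
  · exact disjoint_filter.2 fun z _ h h' => (mul_neg_of_neg_of_pos h.1 h.2).not_gt h'.1

theorem exists_numLeft_add_one_eq (hP : GenPos P) (ha : Set.InjOn (dot2 a) P)
    (hb : Set.InjOn (dot2 b) P) (hba : 0 < det2 b a) (hx : x ∈ P)
    (hlt : #{z ∈ P | dot2 a z < dot2 a x} < k) (hle : k ≤ #{z ∈ P | dot2 b x < dot2 b z}) :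
    ∃ y ∈ P, dot2 a x < dot2 a y ∧ dot2 b x < dot2 b y ∧ numLeft P y x + 1 = k := by
  have hne : ∀ z ∈ P, z ≠ x → dot2 a (z - x) ≠ 0 ∧ dot2 b (z - x) ≠ 0 := by
    intro z hz hzx
    rw [dot2_sub_right, dot2_sub_right, sub_ne_zero, sub_ne_zero]
    exact ⟨ha.ne hz hx hzx, hb.ne hz hx hzx⟩
  have hx0 : ∀ c, dot2 c (x - x) = 0 := fun c => by simp [dot2]
  set N := {z ∈ P | dot2 a (z - x) < 0 ∧ 0 < dot2 b (z - x)}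
  set S := {z ∈ P | 0 < dot2 a (z - x) * dot2 b (z - x)}
  have hneg : #{z ∈ P | dot2 a z < dot2 a x} = #N + #{z ∈ S | ¬ 0 < dot2 b (z - x)} := by
    rw [← card_filter_neg_eq P fun z hz h => (hne z hz (by rintro rfl; simp [dot2] at h)).2]
    simp only [dot2_sub_right, sub_neg]
  have hpos : #{z ∈ P | dot2 b x < dot2 b z} = #N + #{z ∈ S | 0 < dot2 b (z - x)} := by
    rw [← card_filter_pos_eq P fun z hz h => (hne z hz (by rintro rfl; simp [dot2] at h)).1]
    simp only [dot2_sub_right, sub_pos]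
  obtain ⟨m, rfl⟩ := Nat.exists_eq_add_of_lt (lt_of_le_of_lt (hneg.ge.trans' le_self_add) hlt)
  rw [hneg, add_assoc, add_lt_add_iff_left] at hlt
  rw [hpos, add_assoc, add_le_add_iff_left] at hle
  obtain ⟨y, hyS, hby, hcard⟩ := exists_card_filter_add_card_filter_add_one_eq S _
    (by simpa only [S, coe_filter] using injOn_dot2_div_dot2 hP hba hx)
    (fun z => 0 < dot2 b (z - x)) hlt hle
  obtain ⟨hy, hyS⟩ := mem_filter.1 hyS
  have hay := pos_of_mul_pos_left hyS hby.le
  have hleft := numLeft_eq_card_add_card_add_card hba hne hay hby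
  rw [dot2_sub_right, sub_pos] at hay
  refine ⟨y, hy, hay, ?_, ?_⟩
  · simpa only [dot2_sub_right, sub_pos] using hby
  · rw [hleft, add_assoc, add_assoc]
    exact congrArg (#N + ·) hcard

theorem card_lowest_sdiff_lowest_le_card_descendingArcs (hP : GenPos P)
    (ha : Set.InjOn (dot2 a) P) (hb : Set.InjOn (dot2 b) P) (hba : 0 < det2 b a) :
    #(lowest P (dot2 a) k \ lowest P (dot2 (-b)) k) ≤ #(descendingArcs P k b a) := by
  refine (card_le_card fun x hx => ?_).trans (card_image_le (f := Prod.snd))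
  obtain ⟨hxa, hxb⟩ := mem_sdiff.1 hx
  obtain ⟨hxP, hlt⟩ := mem_filter.1 hxa
  simp only [lowest, mem_filter, hxP, true_and, not_lt, dot2_neg_left, neg_lt_neg_iff] at hxb
  obtain ⟨y, hy, hay, hby, hcard⟩ := exists_numLeft_add_one_eq hP ha hb hba hxP hlt hxb
  exact mem_image.2 ⟨(y, x), mem_descendingArcs.2
    ⟨⟨hy, hxP, ne_of_apply_ne _ hay.ne'⟩, hby, hay, hcard⟩, rfl⟩

end DescendingArcs

section Recursion
open Finset

variable {P : Finset (ℝ × ℝ)} {k : ℕ} {v u : Fin 3 → ℝ × ℝ} {x y : ℝ × ℝ}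

theorem exists_dot2_pos_of_cyclic (hu : ∀ i, 0 < det2 (u i) (u (i + 1))) {d : ℝ × ℝ}
    (hd : d ≠ 0) : ∃ i, 0 < dot2 (u i) d := by
  by_contra! hle
  have hsum : det2 (u 1) (u 2) * dot2 (u 0) d + det2 (u 2) (u 0) * dot2 (u 1) d +
      det2 (u 0) (u 1) * dot2 (u 2) d = 0 := by
    simp only [det2, dot2]
    ring
  have hu0 : 0 < det2 (u 0) (u 1) := hu 0
  have hu1 : 0 < det2 (u 1) (u 2) := hu 1
  have hu2 : 0 < det2 (u 2) (u 0) := hu 2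
  have h0 := mul_nonpos_of_nonneg_of_nonpos hu1.le (hle 0)
  have h1 := mul_nonpos_of_nonneg_of_nonpos hu2.le (hle 1)
  have h2 := mul_nonpos_of_nonneg_of_nonpos hu0.le (hle 2)
  exact hd (eq_zero_of_dot2_eq_zero_of_dot2_eq_zero hu0.ne'
    ((mul_eq_zero_iff_left hu1.ne').1 (by linarith))
    ((mul_eq_zero_iff_left hu2.ne').1 (by linarith)))

theorem IsBalanced.lt_card_det2_lt {v u : ℝ × ℝ} (h : IsBalanced P k v u)
    (hxy : dot2 u y < dot2 u x) :
    k < #{z ∈ P | det2 (y - x) (v - x) < det2 (y - x) (z - x)} := by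
  have hpos : 0 < det2 (perp (y - x)) u := by
    rwa [det2_swap, det2_perp_right, neg_pos, dot2_sub_right, sub_neg]
  simpa only [← dot2_perp_left, dot2_sub_right, sub_lt_sub_iff_right] using h.lt_card_lt_dot2 hpos

theorem add_card_lt_numLeft {W : Finset (ℝ × ℝ)} (hW : W.Nonempty)
    (hleft : ∀ v ∈ W, 0 < det2 (y - x) (v - x))
    (hbal : ∀ v ∈ W, ∃ u, IsBalanced P k v u ∧ dot2 u y < dot2 u x) :
    k + #W < numLeft P x y := by
  obtain ⟨v, hv, hmax⟩ := exists_max_image W (fun w => det2 (y - x) (w - x)) hW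
  obtain ⟨u, hu, hxy⟩ := hbal v hv
  refine (Nat.add_lt_add_right (hu.lt_card_det2_lt hxy) #W).trans_le ?_
  rw [← card_union_of_disjoint]
  · refine card_le_card (union_subset (fun z hz => ?_) fun w hw => ?_)
    · obtain ⟨hz, hlt⟩ := mem_filter.1 hz
      exact mem_filter.2 ⟨hz, (hleft v hv).trans hlt⟩
    · obtain ⟨u', hu', -⟩ := hbal w hw
      exact mem_filter.2 ⟨hu'.mem, hleft w hw⟩
  · exact disjoint_left.2 fun w hw hwW => (hmax w hwW).not_gt (mem_filter.1 hw).2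

theorem IsBalancedTriple.numLeft_le (h : IsBalancedTriple P k v u)
    (hle : numLeft (P \ univ.image v) x y + 3 ≤ k + #{i | dot2 (u i) y < dot2 (u i) x}) :
    numLeft P x y ≤ k := by
  set J : Finset (Fin 3) := {i | dot2 (u i) y < dot2 (u i) x ∧ 0 < det2 (y - x) (v i - x)}
  have hleft : numLeft (univ.image v) x y ≤ #J + #{i | ¬ dot2 (u i) y < dot2 (u i) x} := by
    rw [numLeft, filter_image]
    refine card_image_le.trans ((card_le_card fun i hi => ?_).trans (card_union_le _ _))
    by_cases hdot : dot2 (u i) y < dot2 (u i) x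
    · exact mem_union_left _ (mem_filter.2 ⟨mem_univ i, hdot, (mem_filter.1 hi).2⟩)
    · exact mem_union_right _ (mem_filter.2 ⟨mem_univ i, hdot⟩)
  have hsplit := card_filter_add_card_filter_not (s := univ) fun i => dot2 (u i) y < dot2 (u i) x
  have hsub : univ.image v ⊆ P := image_subset_iff.2 fun i _ => (h.balanced i).mem
  rw [← numLeft_sdiff_add P hsub]
  rw [card_fin] at hsplit
  suffices hJ : J = ∅ by
    rw [hJ, card_empty] at hleft
    omega
  by_contra hJ
  have hlt : k + #(J.image v) < numLeft P x y := by
    refine add_card_lt_numLeft ((nonempty_iff_ne_empty.2 hJ).image v) ?_ ?_ <;>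
      refine forall_mem_image.2 fun i hi => ?_
    · exact (mem_filter.1 hi).2.2
    · exact ⟨u i, h.balanced i, (mem_filter.1 hi).2.1⟩
  rw [card_image_of_injective _ h.inj, ← numLeft_sdiff_add P hsub] at hlt
  omega

theorem IsBalancedTriple.arcsLT_subset (h : IsBalancedTriple P k v u) :
    arcsLT (P \ univ.image v) (k - 1) ⊆ arcsLT P (k + 1) := by
  intro t ht
  obtain ⟨⟨h1, h2, hne⟩, hlt⟩ := mem_arcsLT.1 ht
  obtain ⟨i, hi⟩ := exists_dot2_pos_of_cyclic h.cyclic (sub_ne_zero.2 hne)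
  rw [dot2_sub_right, sub_pos] at hi
  have hcard : 0 < #{i | dot2 (u i) t.2 < dot2 (u i) t.1} :=
    card_pos.2 ⟨i, mem_filter.2 ⟨mem_univ i, hi⟩⟩
  exact mem_arcsLT.2 ⟨⟨sdiff_subset h1, sdiff_subset h2, hne⟩,
    Nat.lt_succ_of_le (h.numLeft_le (by omega))⟩

theorem IsBalancedTriple.descendingArcs_subset (h : IsBalancedTriple P k v u) (i : Fin 3) :
    descendingArcs (P \ univ.image v) k (u i) (u (i + 1)) ⊆ arcsLT P (k + 1) := by
  intro t ht
  obtain ⟨⟨h1, h2, hne⟩, hi, hi', hcard⟩ := mem_descendingArcs.1 ht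
  have hsub : {i, i + 1} ⊆ ({i | dot2 (u i) t.2 < dot2 (u i) t.1} : Finset (Fin 3)) := by
    simp only [insert_subset_iff, singleton_subset_iff, mem_filter, mem_univ, hi, hi', and_self]
  have := card_le_card hsub
  rw [card_pair (by simp)] at this
  exact mem_arcsLT.2 ⟨⟨sdiff_subset h1, sdiff_subset h2, hne⟩,
    Nat.lt_succ_of_le (h.numLeft_le (by omega))⟩

theorem disjoint_descendingArcs (hu : ∀ i, 0 < det2 (u i) (u (i + 1))) (E : Finset (ℝ × ℝ))
    {i j : Fin 3} (hij : i ≠ j) :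
    Disjoint (descendingArcs E k (u i) (u (i + 1))) (descendingArcs E k (u j) (u (j + 1))) := by
  refine disjoint_left.2 fun t hti htj => ?_
  obtain ⟨⟨-, -, hne⟩, hi, hi', -⟩ := mem_descendingArcs.1 hti
  obtain ⟨-, hj, hj', -⟩ := mem_descendingArcs.1 htj
  obtain ⟨l, hl⟩ := exists_dot2_pos_of_cyclic hu (sub_ne_zero.2 hne.symm)
  rw [dot2_sub_right, sub_pos] at hl
  have hcover : ∀ i j : Fin 3, i ≠ j → ∀ l, l = i ∨ l = i + 1 ∨ l = j ∨ l = j + 1 := by decide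
  rcases hcover i j hij l with rfl | rfl | rfl | rfl <;> exact hl.not_gt ‹_›

theorem IsBalancedTriple.card_image (h : IsBalancedTriple P k v u) : #(univ.image v) = 3 := by
  rw [card_image_of_injective _ h.inj, card_fin]

theorem IsBalancedTriple.card_sdiff_add (h : IsBalancedTriple P k v u) :
    #(P \ univ.image v) + 3 = #P := by
  have hsub : univ.image v ⊆ P := image_subset_iff.2 fun i _ => (h.balanced i).mem
  simpa only [h.card_image] using card_sdiff_add_card_eq_card hsub

theorem IsBalancedTriple.card_arcsLT_ge (h : IsBalancedTriple P k v u) (hP : GenPos P)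
    (hk : 2 * k + 3 ≤ #P) :
    6 * k + 3 + #(arcsLT (P \ univ.image v) (k - 1)) +
      ∑ i, #(descendingArcs (P \ univ.image v) k (u i) (u (i + 1))) ≤ #(arcsLT P (k + 1)) := by
  classical
  set V := univ.image v
  have htouch : 2 * (#V * (k + 1)) ≤ #{t ∈ arcsLT P (k + 1) | t.1 ∈ V ∨ t.2 ∈ V} + (#V).choose 2 :=
    card_arcsLT_touching hP (forall_mem_image.2 fun i _ => (h.balanced i).exposed.imp
      fun _ => And.left) (by omega)
  have hrest : arcsLT (P \ V) (k - 1) ∪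
      univ.biUnion (fun i => descendingArcs (P \ V) k (u i) (u (i + 1))) ⊆
        {t ∈ arcsLT P (k + 1) | ¬ (t.1 ∈ V ∨ t.2 ∈ V)} := by
    refine union_subset (fun t ht => ?_) (biUnion_subset.2 fun i _ t ht => ?_)
    · obtain ⟨⟨h1, h2, -⟩, -⟩ := mem_arcsLT.1 ht
      exact mem_filter.2 ⟨h.arcsLT_subset ht, not_or.2 ⟨(mem_sdiff.1 h1).2, (mem_sdiff.1 h2).2⟩⟩
    · obtain ⟨⟨h1, h2, -⟩, -⟩ := mem_descendingArcs.1 ht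
      exact mem_filter.2
        ⟨h.descendingArcs_subset i ht, not_or.2 ⟨(mem_sdiff.1 h1).2, (mem_sdiff.1 h2).2⟩⟩
  have hcard := card_le_card hrest
  rw [card_union_of_disjoint,
    card_biUnion fun i _ j _ => disjoint_descendingArcs h.cyclic _] at hcard
  · have hsplit := card_filter_add_card_filter_not (s := arcsLT P (k + 1))
      fun t => t.1 ∈ V ∨ t.2 ∈ V
    rw [h.card_image, show Nat.choose 3 2 = 3 from rfl] at htouch
    omega
  · refine disjoint_left.2 fun t ht ht' => ?_
    obtain ⟨i, -, hi⟩ := mem_biUnion.1 ht'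
    have hlt := (mem_arcsLT.1 ht).2
    have heq := (mem_descendingArcs.1 hi).2.2.2
    omega

theorem IsBalancedTriple.injOn_sdiff (h : IsBalancedTriple P k v u) (i : Fin 3) :
    Set.InjOn (dot2 (u i)) (P \ univ.image v : Finset (ℝ × ℝ)) :=
  (h.balanced i).inj.mono (coe_subset.2 sdiff_subset)

theorem IsBalancedTriple.card_lowest_sdiff_le (h : IsBalancedTriple P k v u) (hP : GenPos P)
    (i : Fin 3) :
    #(lowest (P \ univ.image v) (dot2 (u (i + 1))) k \
        lowest (P \ univ.image v) (dot2 (-u i)) k) ≤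
      #(descendingArcs (P \ univ.image v) k (u i) (u (i + 1))) :=
  card_lowest_sdiff_lowest_le_card_descendingArcs (hP.mono sdiff_subset) (h.injOn_sdiff _)
    (h.injOn_sdiff i) (h.cyclic i)

theorem IsBalancedTriple.le_sum_card_descendingArcs_add (h : IsBalancedTriple P k v u)
    (hP : GenPos P) (hk : 2 * k + 3 ≤ #P) :
    3 * k + 3 ≤ ∑ i, #(descendingArcs (P \ univ.image v) k (u i) (u (i + 1))) + #P := by
  classical
  set E := P \ univ.image v
  have hE : #E + 3 = #P := h.card_sdiff_add
  set T : Fin 3 → Finset (ℝ × ℝ) := fun i =>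
    lowest E (dot2 (u (i + 1))) k ∩ lowest E (dot2 (-u i)) k
  have hdisj : ∀ i, Disjoint (T i) (T (i + 1)) := fun i =>
    (disjoint_lowest_dot2_neg (P := E) (h.injOn_sdiff (i + 1)) (by omega)).mono inter_subset_left
      inter_subset_right
  have hT : ∑ i, #(T i) ≤ #E := by
    rw [← card_biUnion fun i _ j _ hij => ?_]
    · exact card_le_card (biUnion_subset.2 fun i _ =>
        inter_subset_left.trans (lowest_subset _ _ _))
    · rcases eq_add_one_or_eq_add_one_of_ne hij with rfl | rfl
      exacts [hdisj i, (hdisj j).symm]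
  have hterm : ∀ i, k ≤ #(descendingArcs E k (u i) (u (i + 1))) + #(T i) := fun i =>
    calc
      k = #(lowest E (dot2 (u (i + 1))) k) :=
        (card_lowest (h.injOn_sdiff (i + 1)) (show k ≤ #E by omega)).symm
      _ = #(lowest E (dot2 (u (i + 1))) k \ lowest E (dot2 (-u i)) k) + #(T i) :=
        (card_sdiff_add_card_inter _ _).symm
      _ ≤ _ := Nat.add_le_add_right (h.card_lowest_sdiff_le hP i) _
  have := sum_le_sum fun i (_ : i ∈ univ) => hterm i
  simp only [sum_const, card_fin, smul_eq_mul, sum_add_distrib] at this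
  omega

theorem le_card_arcsLT {h : ℕ} (hP : GenPos P) (hh : #P ≤ 3 * h) (hk : 2 * k + 3 ≤ #P) :
    3 * (k + 2).choose 2 + 3 * (k + 2 - h).choose 2 ≤ #(arcsLT P (k + 1)) := by
  induction h generalizing P k with
  | zero => omega
  | succ h ih =>
    obtain ⟨v, u, huv⟩ := exists_isBalancedTriple hP hk
    have hle := huv.card_arcsLT_ge hP hk
    have hdesc := huv.le_sum_card_descendingArcs_add hP hk
    have hE := huv.card_sdiff_add
    have hchoose : ∀ m : ℕ, (m + 1).choose 2 = m.choose 2 + m := fun m => by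
      rw [Nat.choose_succ_succ' m 1, Nat.choose_one_right, add_comm]
    obtain _ | _ | k := k
    · rw [Nat.choose_eq_zero_of_lt (show 0 + 2 - (h + 1) < 2 by omega), Nat.choose_self]
      omega
    · rw [Nat.choose_eq_zero_of_lt (show 0 + 1 + 2 - (h + 1) < 2 by omega), hchoose,
        Nat.choose_self]
      omega
    · have hih := ih (hP.mono sdiff_subset) (P := P \ univ.image v) (k := k) (by omega) (by omega)
      rw [Nat.add_sub_cancel] at hle
      rw [hchoose (k + 3), hchoose (k + 2)]
      rcases le_or_gt h (k + 2) with hhk | hhk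
      · rw [show k + 1 + 1 + 2 - (h + 1) = k + 2 - h + 1 by omega, hchoose (k + 2 - h)]
        omega
      · rw [Nat.choose_eq_zero_of_lt (show k + 1 + 1 + 2 - (h + 1) < 2 by omega)]
        omega

end Recursion

section HalvingArcs
open Finset

variable {P : Finset (ℝ × ℝ)} {o x x' z w : ℝ × ℝ} {h : ℕ}

/-- The cotangent of the angle at `o` from `x` to `w`. -/
noncomputable def cotAt (o x w : ℝ × ℝ) : ℝ := dot2 (x - o) (w - o) / det2 (x - o) (w - o)

/-- Turned counterclockwise about `o`, starting at `x`, the ray from `o` first meets `z` among the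
points of `P` on the left of the line from `o` to `x`. -/
def IsFirstLeft (P : Finset (ℝ × ℝ)) (o x z : ℝ × ℝ) : Prop :=
  z ∈ P ∧ 0 < det2 (x - o) (z - o) ∧
    ∀ w ∈ P, 0 < det2 (x - o) (w - o) → 0 ≤ det2 (z - o) (w - o)

theorem ne_of_det2_sub_pos (hz : 0 < det2 (x - o) (z - o)) : o ≠ x ∧ o ≠ z := by
  constructor <;> rintro rfl <;> simp [det2] at hz

theorem IsFirstLeft.unique (hP : GenPos P) (ho : o ∈ P) (hx : x ∈ P) (hx' : x' ∈ P)
    (h : IsFirstLeft P o x z) (h' : IsFirstLeft P o x' z) : x = x' := by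
  by_contra hne
  rcases lt_or_gt_of_ne (hP.det2_ne_zero ho hx hx' (ne_of_det2_sub_pos h.2.1).1
    (ne_of_det2_sub_pos h'.2.1).1 hne) with hlt | hlt
  · have := h'.2.2 x hx (by rwa [det2_swap, neg_pos])
    rw [det2_swap, neg_nonneg] at this
    exact this.not_gt h.2.1
  · have := h.2.2 x' hx' hlt
    rw [det2_swap, neg_nonneg] at this
    exact this.not_gt h'.2.1

theorem det2_nonneg_of_cotAt_le (hz : 0 < det2 (x - o) (z - o)) (hw : 0 < det2 (x - o) (w - o))
    (hle : cotAt o x w ≤ cotAt o x z) : 0 ≤ det2 (z - o) (w - o) := by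
  have hpos := dot2_self_pos (sub_ne_zero.2 (ne_of_det2_sub_pos hz).1.symm)
  rw [cotAt, cotAt, div_le_div_iff₀ hw hz] at hle
  refine nonneg_of_mul_nonneg_right ?_ hpos
  rw [det2_mul_dot2_self]
  linarith

theorem det2_neg_of_cotAt_le (hz : 0 < det2 (x - o) (z - o)) (hw : 0 < det2 (o - x) (w - x))
    (hle : cotAt x o w ≤ cotAt o x z) : det2 (z - o) (w - o) < 0 := by
  have hpos := dot2_self_pos (sub_ne_zero.2 (ne_of_det2_sub_pos hz).1.symm)
  have hdot : dot2 (o - x) (w - x) = dot2 (x - o) (x - o) - dot2 (x - o) (w - o) := by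
    simp only [dot2, Prod.fst_sub, Prod.snd_sub]
    ring
  rw [cotAt, cotAt, div_le_div_iff₀ hw hz, hdot, det2_sub_sub_swap o x] at hle
  refine neg_of_mul_neg_right ?_ hpos.le
  rw [det2_mul_dot2_self]
  linarith [mul_pos hpos hz]

theorem isFirstLeft_and_numLeft_of_cotAt_le (hP : GenPos P) (ho : o ∈ P) (hx : x ∈ P) (hz : z ∈ P)
    (hoz : 0 < det2 (x - o) (z - o))
    (hleft : ∀ w ∈ P, 0 < det2 (x - o) (w - o) → cotAt o x w ≤ cotAt o x z)
    (hright : ∀ w ∈ P, 0 < det2 (o - x) (w - x) → cotAt x o w ≤ cotAt o x z) :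
    IsFirstLeft P o x z ∧ numLeft P o z + 1 = numLeft P o x := by
  have hfirst : ∀ w ∈ P, 0 < det2 (x - o) (w - o) → 0 ≤ det2 (z - o) (w - o) := fun w hw hlt =>
    det2_nonneg_of_cotAt_le hoz hlt (hleft w hw hlt)
  obtain ⟨hox, hoz'⟩ := ne_of_det2_sub_pos hoz
  refine ⟨⟨hz, hoz, hfirst⟩, ?_⟩
  have herase :
      {w ∈ P | 0 < det2 (z - o) (w - o)} = {w ∈ P | 0 < det2 (x - o) (w - o)}.erase z := by
    ext w
    simp only [mem_filter, mem_erase]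
    constructor
    · rintro ⟨hw, hpos⟩
      obtain ⟨-, how⟩ := ne_of_det2_sub_pos hpos
      refine ⟨?_, hw, ?_⟩
      · rintro rfl
        exact (det2_self _).not_gt hpos
      by_contra hnot
      rcases eq_or_ne x w with rfl | hxw
      · rw [det2_swap, neg_pos] at hpos
        exact hpos.not_gt hoz
      have hneg := (not_lt.1 hnot).lt_of_ne (hP.det2_ne_zero ho hx hw hox how hxw)
      rw [← neg_pos, ← det2_sub_sub_swap] at hneg
      exact (det2_neg_of_cotAt_le hoz hneg (hright w hw hneg)).not_gt hpos
    · rintro ⟨hwz, hw, hlt⟩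
      obtain ⟨-, how⟩ := ne_of_det2_sub_pos hlt
      exact ⟨hw, (hfirst w hw hlt).lt_of_ne (hP.det2_ne_zero ho hz hw hoz' how hwz.symm).symm⟩
  rw [numLeft, numLeft, herase, card_erase_add_one (mem_filter.2 ⟨hz, hoz⟩)]

theorem card_le_card_arcs_of_isFirstLeft (hP : GenPos P) (j : ℕ) {A : Finset ((ℝ × ℝ) × (ℝ × ℝ))}
    (hA : A ⊆ P.offDiag)
    (hfirst : ∀ t ∈ A, ∃ z, IsFirstLeft P t.1 t.2 z ∧ numLeft P t.1 z = j) :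
    #A ≤ #(arcs P j) := by
  refine card_le_card_of_forall_subsingleton
    (fun t s => s.1 = t.1 ∧ IsFirstLeft P t.1 t.2 s.2) (fun t ht => ?_) ?_
  · obtain ⟨z, hz, hcard⟩ := hfirst t ht
    exact ⟨(t.1, z), mem_arcs.2 ⟨⟨(mem_offDiag.1 (hA ht)).1, hz.1, (ne_of_det2_sub_pos hz.2.1).2⟩,
      hcard⟩, rfl, hz⟩
  · rintro ⟨o, z⟩ - ⟨o₁, x₁⟩ ⟨h₁, rfl, hx₁⟩ ⟨o₂, x₂⟩ ⟨h₂, rfl, hx₂⟩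
    obtain ⟨ho, h₁, -⟩ := mem_offDiag.1 (hA h₁)
    obtain ⟨-, h₂, -⟩ := mem_offDiag.1 (hA h₂)
    exact Prod.ext rfl (hx₁.unique hP ho h₁ h₂ hx₂)

theorem exists_isFirstLeft_or (hP : GenPos P) {p q : ℝ × ℝ} (hp : p ∈ P) (hq : q ∈ P)
    (hpq : 0 < numLeft P p q) (hqp : 0 < numLeft P q p) :
    (∃ z, IsFirstLeft P p q z ∧ numLeft P p z + 1 = numLeft P p q) ∨
      ∃ z, IsFirstLeft P q p z ∧ numLeft P q z + 1 = numLeft P q p := by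
  obtain ⟨a, ha, hamax⟩ := exists_max_image _ (cotAt p q) (card_pos.1 hpq)
  obtain ⟨b, hb, hbmax⟩ := exists_max_image _ (cotAt q p) (card_pos.1 hqp)
  rw [mem_filter] at ha hb
  rcases le_total (cotAt q p b) (cotAt p q a) with hle | hle
  · exact Or.inl ⟨a, isFirstLeft_and_numLeft_of_cotAt_le hP hp hq ha.1 ha.2
      (fun w hw hlt => hamax w (mem_filter.2 ⟨hw, hlt⟩))
      (fun w hw hlt => (hbmax w (mem_filter.2 ⟨hw, hlt⟩)).trans hle)⟩
  · exact Or.inr ⟨b, isFirstLeft_and_numLeft_of_cotAt_le hP hq hp hb.1 hb.2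
      (fun w hw hlt => hbmax w (mem_filter.2 ⟨hw, hlt⟩))
      (fun w hw hlt => (hamax w (mem_filter.2 ⟨hw, hlt⟩)).trans hle)⟩

theorem card_arcs_succ_le (hP : GenPos P) (hcard : #P = 2 * h + 4) :
    #(arcs P (h + 1)) ≤ 2 * #(arcs P h) := by
  classical
  set A := {t ∈ arcs P (h + 1) | ∃ z, IsFirstLeft P t.1 t.2 z ∧ numLeft P t.1 z = h}
  have hA : #A ≤ #(arcs P h) := card_le_card_arcs_of_isFirstLeft hP h
    ((filter_subset _ _).trans (filter_subset _ _)) fun t ht => (mem_filter.1 ht).2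
  have hcover : arcs P (h + 1) ⊆ A ∪ A.image Prod.swap := by
    intro t ht
    have hswap := swap_mem_arcs hP (show h + 1 + (h + 1) + 2 = #P by omega) ht
    obtain ⟨⟨hp, hq, -⟩, hpq⟩ := mem_arcs.1 ht
    have hqp : numLeft P t.2 t.1 = h + 1 := (mem_arcs.1 hswap).2
    rw [mem_union]
    refine (exists_isFirstLeft_or hP hp hq (by omega) (by omega)).imp ?_ ?_ <;>
      rintro ⟨z, hz, hcard⟩
    · exact mem_filter.2 ⟨ht, z, hz, by omega⟩
    · exact mem_image.2 ⟨t.swap, mem_filter.2 ⟨hswap, z, hz, by simp; omega⟩, t.swap_swap⟩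
  calc #(arcs P (h + 1)) ≤ #A + #(A.image Prod.swap) :=
        (card_le_card hcover).trans (card_union_le _ _)
    _ ≤ #A + #A := Nat.add_le_add_left card_image_le _
    _ ≤ 2 * #(arcs P h) := by omega

end HalvingArcs

section CrossingNumber
open Finset

variable {P s : Finset (ℝ × ℝ)}

theorem filter_det2_pos_quadruple {x y z w : ℝ × ℝ} (hz : 0 < det2 (y - x) (z - x))
    (hw : det2 (y - x) (w - x) < 0) :
    {v ∈ ({x, y, z, w} : Finset (ℝ × ℝ)) | 0 < det2 (y - x) (v - x)} = {z} := by
  rw [filter_insert, filter_insert, filter_insert, filter_singleton, if_neg, if_neg, if_pos hz,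
    if_neg hw.not_gt, insert_empty_eq]
  · exact (det2_self _).not_gt
  · simp [det2]

theorem filter_det2_neg_quadruple {x y z w : ℝ × ℝ} (hz : 0 < det2 (y - x) (z - x))
    (hw : det2 (y - x) (w - x) < 0) :
    {v ∈ ({x, y, z, w} : Finset (ℝ × ℝ)) | det2 (y - x) (v - x) < 0} = {w} := by
  rw [filter_insert, filter_insert, filter_insert, filter_singleton, if_neg, if_neg,
    if_neg hz.not_gt, if_pos hw]
  · exact (det2_self _).not_lt
  · simp [det2]

theorem mk_mem_arcs_one_iff (hP : GenPos P) {x y : ℝ × ℝ} (hxy : x ≠ y) (hs : s ⊆ P) :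
    #s = 4 ∧ (x, y) ∈ arcs s 1 ↔ ∃ z ∈ P, ∃ w ∈ P, 0 < det2 (y - x) (z - x) ∧
      det2 (y - x) (w - x) < 0 ∧ {x, y, z, w} = s := by
  have hquad {z w : ℝ × ℝ} (hsub : {x, y, z, w} ⊆ P) (hz : 0 < det2 (y - x) (z - x))
      (hw : det2 (y - x) (w - x) < 0) : #({x, y, z, w} : Finset (ℝ × ℝ)) = 4 := by
    rw [← numLeft_add_numLeft_swap (hP.mono hsub) (by simp) (by simp) hxy, numLeft_swap _ x y,
      numLeft, filter_det2_pos_quadruple hz hw, filter_det2_neg_quadruple hz hw, card_singleton,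
      card_singleton]
  constructor
  · rintro ⟨hcard, hmem⟩
    obtain ⟨⟨hxs, hys, -⟩, hleft⟩ := mem_arcs.1 hmem
    have hright : numLeft s y x = 1 := by
      have := numLeft_add_numLeft_swap (hP.mono hs) hxs hys hxy
      dsimp only at this hleft
      omega
    rw [numLeft_swap s x y] at hright
    obtain ⟨z, hz⟩ := card_eq_one.1 hleft
    obtain ⟨w, hw⟩ := card_eq_one.1 hright
    obtain ⟨hzs, hz⟩ := mem_filter.1 (hz.ge (mem_singleton_self z))
    obtain ⟨hws, hw⟩ := mem_filter.1 (hw.ge (mem_singleton_self w))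
    have hsub : {x, y, z, w} ⊆ s := by simp [insert_subset_iff, hxs, hys, hzs, hws]
    exact ⟨z, hs hzs, w, hs hws, hz, hw,
      eq_of_subset_of_card_le hsub (hcard.trans (hquad (hsub.trans hs) hz hw).symm).le⟩
  · rintro ⟨z, -, w, -, hz, hw, rfl⟩
    refine ⟨hquad hs hz hw, mem_arcs.2 ⟨⟨by simp, by simp, hxy⟩, ?_⟩⟩
    rw [numLeft, filter_det2_pos_quadruple hz hw, card_singleton]

theorem card_powersetCard_filter_mem_arcs_one (hP : GenPos P) {t : (ℝ × ℝ) × (ℝ × ℝ)}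
    (ht : t ∈ P.offDiag) :
    #{s ∈ P.powersetCard 4 | t ∈ arcs s 1} = numLeft P t.1 t.2 * numLeft P t.2 t.1 := by
  obtain ⟨x, y⟩ := t
  obtain ⟨hx, hy, hxy⟩ := mem_offDiag.1 ht
  dsimp only at hx hy hxy ⊢
  rw [numLeft_swap P x y, numLeft, ← card_product]
  symm
  refine card_nbij (fun r => {x, y, r.1, r.2}) ?_ ?_ ?_
  · rintro ⟨z, w⟩ hzw
    simp only [coe_product, coe_filter, Set.mem_prod, Set.mem_ofPred_eq] at hzw
    obtain ⟨⟨hz, hz'⟩, hw, hw'⟩ := hzw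
    have hsub : {x, y, z, w} ⊆ P := by
      simp only [insert_subset_iff, singleton_subset_iff]
      exact ⟨hx, hy, hz, hw⟩
    rw [mem_coe, mem_filter, mem_powersetCard, and_assoc, mk_mem_arcs_one_iff hP hxy hsub]
    exact ⟨hsub, z, hz, w, hw, hz', hw', rfl⟩
  · rintro ⟨z, w⟩ hzw ⟨z', w'⟩ hzw' heq
    simp only [coe_product, coe_filter, Set.mem_prod, Set.mem_ofPred_eq] at hzw hzw' heq
    have hzz := filter_det2_pos_quadruple hzw.1.2 hzw.2.2
    have hww := filter_det2_neg_quadruple hzw.1.2 hzw.2.2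
    rw [heq, filter_det2_pos_quadruple hzw'.1.2 hzw'.2.2, singleton_inj] at hzz
    rw [heq, filter_det2_neg_quadruple hzw'.1.2 hzw'.2.2, singleton_inj] at hww
    rw [hzz, hww]
  · intro s hs
    rw [mem_coe, mem_filter, mem_powersetCard, and_assoc] at hs
    obtain ⟨z, hz, w, hw, hz', hw', hs'⟩ := (mk_mem_arcs_one_iff hP hxy hs.1).1 hs.2
    exact ⟨(z, w), by simpa using ⟨⟨hz, hz'⟩, hw, hw'⟩, hs'⟩

theorem three_le_card_hullVertices (hP : GenPos P) (hcard : 3 ≤ #P) : 3 ≤ #(hullVertices P) := by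
  classical
  obtain ⟨v, u, h⟩ := exists_isBalancedTriple (k := 0) hP (by omega)
  rw [← h.card_image]
  refine card_le_card (image_subset_iff.2 fun i _ => ?_)
  obtain ⟨e, he, -⟩ := (h.balanced i).exposed
  exact mem_hullVertices.2 ⟨e, he⟩

theorem convexPosition_iff_card_hullVertices :
    ConvexPosition s ↔ #(hullVertices s) = #s := by
  classical
  rw [hullVertices, card_filter_eq_iff]
  exact forall₂_congr fun v hv => (exists_isExposedBy_iff hv).symm

theorem sum_offDiag_numLeft_mul_numLeft_swap (hP : GenPos P) :
    ∑ t ∈ P.offDiag, numLeft P t.1 t.2 * numLeft P t.2 t.1 =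
      ∑ s ∈ P.powersetCard 4, #(arcs s 1) := by
  classical
  rw [← sum_congr rfl fun t ht => card_powersetCard_filter_mem_arcs_one hP ht]
  refine (sum_card_bipartiteAbove_eq_sum_card_bipartiteBelow (fun t s => t ∈ arcs s 1)).trans
    (sum_congr rfl fun s hs => congrArg card (filter_mem_eq_inter.trans (inter_eq_right.2 ?_)))
  exact (filter_subset _ _).trans (offDiag_mono (mem_powersetCard.1 hs).1)

open scoped Classical in
theorem card_arcs_one_add (hs : GenPos s) (hcard : #s = 4) :
    #(arcs s 1) + 2 * (if ConvexPosition s then 1 else 0) = 6 := by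
  have hhull := card_arcs_zero hs (by omega)
  have hsymm := card_arcs_symm hs (i := 0) (j := 2) (by omega)
  have hsum := sum_card_arcs hs
  have hthree := three_le_card_hullVertices hs (by omega)
  have hfour : #(hullVertices s) ≤ #s := card_le_card (filter_subset _ _)
  rw [hcard] at hsum hfour
  simp only [Nat.reduceSub, sum_range_succ, range_zero, sum_empty, zero_add] at hsum
  rw [convexPosition_iff_card_hullVertices, hcard]
  split_ifs <;> omega

theorem sum_offDiag_add_two_mul_crNum (hP : GenPos P) :
    ∑ t ∈ P.offDiag, numLeft P t.1 t.2 * numLeft P t.2 t.1 + 2 * crNum P = 6 * (#P).choose 4 := by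
  classical
  have hcr : crNum P = ∑ s ∈ P.powersetCard 4, if ConvexPosition s then 1 else 0 := by
    rw [← card_filter, crNum, ← Set.ncard_coe_finset]
    congr 1
    ext s
    simp only [coe_filter, mem_powersetCard]
    exact and_assoc.symm
  rw [hcr, sum_offDiag_numLeft_mul_numLeft_swap hP, mul_sum, ← sum_add_distrib,
    sum_congr rfl fun s hs => card_arcs_one_add (hP.mono (mem_powersetCard.1 hs).1)
      (mem_powersetCard.1 hs).2, sum_const, card_powersetCard, smul_eq_mul, mul_comm]

theorem sum_range_two_mul_add_one_eq_of_symm {f : ℕ → ℕ} {h : ℕ}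
    (hf : ∀ j < h, f (2 * h - j) = f j) :
    ∑ j ∈ range (2 * h + 1), f j = 2 * ∑ j ∈ range h, f j + f h := by
  have hreflect : ∑ j ∈ range h, f (h + 1 + j) = ∑ j ∈ range h, f j := by
    rw [← sum_range_reflect]
    refine sum_congr rfl fun j hj => ?_
    have hj := mem_range.1 hj
    rw [← hf j hj]
    congr 1
    omega
  rw [show 2 * h + 1 = h + 1 + h by omega, sum_range_add, sum_range_succ, hreflect]
  ring

theorem sum_range_odd (n : ℕ) : ∑ k ∈ range n, (2 * k + 1) = n ^ 2 := by
  induction n with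
  | zero => rfl
  | succ n ih => rw [sum_range_succ, ih]; ring

theorem sum_range_odd_mul_sum_range_sub (N : ℕ → ℕ) (h : ℕ) :
    ∑ k ∈ range h, (2 * k + 1) * ∑ j ∈ range (h - k), N j = ∑ j ∈ range h, N j * (h - j) ^ 2 := by
  simp only [mul_sum]
  rw [sum_comm' (t' := range h) (s' := fun j => range (h - j))]
  · refine sum_congr rfl fun j _ => ?_
    rw [← sum_mul, mul_comm, sum_range_odd]
  · simp only [mem_range]
    omega

theorem sum_card_arcs_eq_two_mul_add (hP : GenPos P) {h : ℕ} (hcard : #P = 2 * h + 2) :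
    #P * (#P - 1) = 2 * #(arcsLT P h) + #(arcs P h) := by
  rw [← sum_card_arcs hP, card_arcsLT, show #P - 1 = 2 * h + 1 by omega]
  exact sum_range_two_mul_add_one_eq_of_symm fun j hj => card_arcs_symm hP (by omega)

theorem two_mul_crNum_add (hP : GenPos P) {h : ℕ} (hcard : #P = 2 * h + 2) :
    2 * crNum P + h ^ 2 * (#P * (#P - 1)) =
      6 * (#P).choose 4 + 2 * ∑ k ∈ range h, (2 * k + 1) * #(arcsLT P (h - k)) := by
  have hoff : ∑ t ∈ P.offDiag, numLeft P t.1 t.2 * numLeft P t.2 t.1 =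
      ∑ j ∈ range (2 * h + 1), #(arcs P j) * (j * (2 * h - j)) := by
    rw [show 2 * h + 1 = #P - 1 by omega, ← sum_offDiag_numLeft hP]
    refine sum_congr rfl fun t ht => ?_
    obtain ⟨hp, hq, hpq⟩ := mem_offDiag.1 ht
    have := numLeft_add_numLeft_swap hP hp hq hpq
    congr 1
    omega
  have hfold := sum_range_two_mul_add_one_eq_of_symm (h := h)
    (f := fun j => #(arcs P j) * (j * (2 * h - j))) fun j hj => by
      rw [card_arcs_symm hP (j := j) (by omega), Nat.sub_sub_self (by omega), mul_comm j]
  have hsq : ∑ j ∈ range h, #(arcs P j) * (j * (2 * h - j)) +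
      ∑ j ∈ range h, #(arcs P j) * (h - j) ^ 2 = h ^ 2 * #(arcsLT P h) := by
    rw [← sum_add_distrib, card_arcsLT, mul_sum]
    refine sum_congr rfl fun j hj => ?_
    obtain ⟨i, rfl⟩ := Nat.exists_eq_add_of_lt (mem_range.1 hj)
    rw [show 2 * (j + i + 1) - j = j + 2 * (i + 1) by omega, show j + i + 1 - j = i + 1 by omega]
    ring
  have hcr := sum_offDiag_add_two_mul_crNum hP
  simp only [card_arcsLT] at *
  rw [sum_range_odd_mul_sum_range_sub, ← hcr, hoff, hfold, sum_card_arcs_eq_two_mul_add hP hcard]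
  simp only [card_arcsLT]
  rw [show 2 * h - h = h by omega]
  linarith

theorem le_four_mul_card_arcsLT (hP : GenPos P) {h : ℕ} (hcard : #P = 2 * h + 4) :
    #P * (#P - 1) + 2 * #(arcsLT P h) ≤ 4 * #(arcsLT P (h + 1)) := by
  have hhalf := card_arcs_succ_le hP hcard
  have hsucc := card_arcsLT_succ P h
  have hsum := sum_card_arcs_eq_two_mul_add hP (h := h + 1) (by omega)
  omega

theorem card_arcsLT_eq_of_crNum_le (hP : GenPos P) (hcard : #P = 30) (hcr : crNum P ≤ 9726) {k : ℕ}
    (hk : k ≤ 12) : #(arcsLT P (k + 1)) = 3 * (k + 2).choose 2 + 3 * (k - 8).choose 2 := by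
  have hlower (k : ℕ) (hk : k < 13) :
      3 * (k + 2).choose 2 + 3 * (k - 8).choose 2 ≤ #(arcsLT P (k + 1)) :=
    le_card_arcsLT (h := 10) hP (by omega) (by omega)
  have hhalf := le_four_mul_card_arcsLT hP (h := 13) (by omega)
  have hcount := two_mul_crNum_add hP (h := 14) (by omega)
  rw [hcard] at hhalf
  rw [hcard, show Nat.choose 30 4 = 27405 by decide +kernel] at hcount
  simp only [sum_range_succ, range_zero, sum_empty, Nat.reduceMul, Nat.reduceAdd, Nat.reduceSub]
    at hcount hhalf
  simp only [Nat.forall_lt_succ_right, Nat.choose_two_right, Nat.reduceMul, Nat.reduceAdd,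
    Nat.reduceSub, Nat.reduceDiv] at hlower
  -- Eliminating `#(arcsLT P 14)` leaves weights at least `7` on the other `#(arcsLT P (j + 1))`,
  -- whereas the lower bounds fall short of the total by at most `6`.
  interval_cases k <;> simp only [Nat.choose_two_right, Nat.reduceMul, Nat.reduceAdd,
    Nat.reduceSub, Nat.reduceDiv] <;> omega

end CrossingNumber

section OptimalConfiguration
open Finset

/-- The points of a configuration with `9726` crossings. -/
def optimalNatPoints : Finset (ℕ × ℕ) :=
  {(147046, 188604), (154783, 152780), (163756, 158719), (157322, 157183), (179287, 156842),
    (158369, 160697), (81754, 343712), (159463, 160167), (198219, 154553), (160870, 159777),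
    (140283, 134099), (167439, 158711), (157809, 163512), (162357, 158708), (151669, 177901),
    (158790, 157858), (38602, 0), (158702, 159071), (144186, 195441), (158336, 160483),
    (190868, 155494), (155974, 166706), (156632, 155966), (158519, 162306), (147241, 143454),
    (161038, 159642), (357841, 134485), (160032, 158960), (135792, 128203), (158991, 157936)}

/-- Whether `p`, `q`, `x` are in counterclockwise order; the terms of the orientation determinant
are distributed over the two sides so that no subtraction occurs. -/
def IsCounterclockwise (p q x : ℕ × ℕ) : Prop :=
  p.2 * q.1 + q.2 * x.1 + x.2 * p.1 < p.1 * q.2 + q.1 * x.2 + x.1 * p.2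

instance (p q x : ℕ × ℕ) : Decidable (IsCounterclockwise p q x) := Nat.decLt _ _

theorem isCounterclockwise_or_of_mem_optimalNatPoints : ∀ p ∈ optimalNatPoints,
    ∀ q ∈ optimalNatPoints, ∀ x ∈ optimalNatPoints,
      IsCounterclockwise p q x ∨ IsCounterclockwise q p x ∨ p = q ∨ p = x ∨ q = x := by
  decide +kernel

theorem sum_offDiag_optimalNatPoints :
    ∑ t ∈ optimalNatPoints.offDiag, #{x ∈ optimalNatPoints | IsCounterclockwise t.1 t.2 x} *
      #{x ∈ optimalNatPoints | IsCounterclockwise t.2 t.1 x} = 144978 := by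
  decide +kernel

/-- The real points with given natural coordinates. -/
def realPoint : ℕ × ℕ ↪ ℝ × ℝ :=
  ⟨Prod.map (↑) (↑), Nat.cast_injective.prodMap Nat.cast_injective⟩

theorem det2_realPoint_pos_iff (p q x : ℕ × ℕ) :
    0 < det2 (realPoint q - realPoint p) (realPoint x - realPoint p) ↔
      IsCounterclockwise p q x := by
  rw [IsCounterclockwise, ← Nat.cast_lt (α := ℝ)]
  simp only [det2, realPoint, Function.Embedding.coeFn_mk, Prod.map_fst, Prod.map_snd,
    Prod.fst_sub, Prod.snd_sub, Nat.cast_add, Nat.cast_mul]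
  constructor <;> intro h <;> linarith

/-- The configuration `optimalNatPoints` in the real plane. -/
def optimalPoints : Finset (ℝ × ℝ) := optimalNatPoints.map realPoint

theorem card_optimalPoints : #optimalPoints = 30 := by
  rw [optimalPoints, card_map]
  decide +kernel

theorem genPos_optimalPoints : GenPos optimalPoints := by
  simp only [GenPos, optimalPoints, forall_mem_map, realPoint.injective.ne_iff]
  intro p hp q hq x hx hpq hpx hqx hcol
  have hdet := (collinear_iff_det2_eq_zero _ _ _).1 hcol
  rcases isCounterclockwise_or_of_mem_optimalNatPoints p hp q hq x hx with h | h | h | h | h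
  · exact ((det2_realPoint_pos_iff p q x).2 h).ne' hdet
  · have hpos := (det2_realPoint_pos_iff q p x).2 h
    rw [det2_sub_sub_swap, hdet, neg_zero] at hpos
    exact lt_irrefl 0 hpos
  · exact hpq h
  · exact hpx h
  · exact hqx h

theorem numLeft_optimalPoints (p q : ℕ × ℕ) :
    numLeft optimalPoints (realPoint p) (realPoint q) =
      #{x ∈ optimalNatPoints | IsCounterclockwise p q x} := by
  simp only [numLeft, optimalPoints, filter_map, card_map, Function.comp_def,
    det2_realPoint_pos_iff]

theorem crNum_optimalPoints : crNum optimalPoints = 9726 := by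
  have hcount := sum_offDiag_add_two_mul_crNum genPos_optimalPoints
  have hsum : ∑ t ∈ optimalPoints.offDiag,
      numLeft optimalPoints t.1 t.2 * numLeft optimalPoints t.2 t.1 = 144978 := by
    rw [← sum_offDiag_optimalNatPoints]
    symm
    refine sum_nbij (Prod.map realPoint realPoint) ?_
      (realPoint.injective.prodMap realPoint.injective).injOn ?_ fun t _ => ?_
    · rintro ⟨p, q⟩ ht
      simpa [optimalPoints] using ht
    · rintro ⟨p, q⟩ ht
      simp only [optimalPoints, coe_offDiag, coe_map, Set.mem_offDiag] at ht
      obtain ⟨⟨p, hp, rfl⟩, ⟨q, hq, rfl⟩, hpq⟩ := ht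
      exact ⟨(p, q), mem_coe.2 (mem_offDiag.2 ⟨hp, hq, ne_of_apply_ne _ hpq⟩), rfl⟩
    · rw [Prod.map_fst, Prod.map_snd, numLeft_optimalPoints, numLeft_optimalPoints]
  rw [hsum, card_optimalPoints, show Nat.choose 30 4 = 27405 by decide +kernel] at hcount
  omega

end OptimalConfiguration

section ThreeDecomposability
open Finset

theorem mem_convexHull_of_det2_nonneg {v₁ v₂ v₃ z : ℝ × ℝ} (hpos : 0 < det2 (v₂ - v₁) (v₃ - v₁))
    (h₁ : 0 ≤ det2 (v₂ - v₁) (z - v₁)) (h₂ : 0 ≤ det2 (v₃ - v₂) (z - v₂))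
    (h₃ : 0 ≤ det2 (v₁ - v₃) (z - v₃)) : z ∈ convexHull ℝ ({v₁, v₂, v₃} : Set (ℝ × ℝ)) := by
  set D := det2 (v₂ - v₁) (v₃ - v₁) with hD
  have hsum : det2 (v₃ - v₂) (z - v₂) + det2 (v₁ - v₃) (z - v₃) + det2 (v₂ - v₁) (z - v₁) = D := by
    simp only [hD, det2, Prod.fst_sub, Prod.snd_sub]
    ring
  have hcomb : det2 (v₃ - v₂) (z - v₂) • v₁ + det2 (v₁ - v₃) (z - v₃) • v₂ +
      det2 (v₂ - v₁) (z - v₁) • v₃ = D • z := by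
    ext <;>
      simp only [hD, det2, Prod.fst_sub, Prod.snd_sub, Prod.fst_add, Prod.snd_add, Prod.smul_fst,
        Prod.smul_snd, smul_eq_mul] <;> ring
  have hmem := univ.centerMass_mem_convexHull
    (w := ![det2 (v₃ - v₂) (z - v₂), det2 (v₁ - v₃) (z - v₃), det2 (v₂ - v₁) (z - v₁)])
    (z := ![v₁, v₂, v₃]) (s := ({v₁, v₂, v₃} : Set (ℝ × ℝ))) (by simp [Fin.forall_fin_succ, *])
    (by simpa [Fin.sum_univ_three, hsum] using hpos) (by simp [Fin.forall_fin_succ])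
  simpa [centerMass, Fin.sum_univ_three, hsum, hcomb, inv_smul_smul₀ hpos.ne'] using hmem

theorem exists_triangle_of_add_add_eq_zero (P : Finset (ℝ × ℝ)) {a b c : ℝ × ℝ}
    (hsum : a + b + c = 0) (hab : 0 < det2 a b) :
    ∃ v₁ v₂ v₃ : ℝ × ℝ, ¬ Collinear ℝ ({v₁, v₂, v₃} : Set (ℝ × ℝ)) ∧
      (P : Set (ℝ × ℝ)) ⊆ convexHull ℝ {v₁, v₂, v₃} ∧
      ∃ l > 0, v₂ - v₁ = (l : ℝ) • a ∧ v₃ - v₂ = l • b ∧ v₁ - v₃ = l • c := by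
  obtain rfl : c = -a - b := by linear_combination (exp := 1) hsum
  have hbound : ∀ᶠ l : ℝ in Filter.atTop, ∀ z ∈ P, ∀ d ∈ ({a, b, -a - b} : Finset (ℝ × ℝ)),
      -det2 d z ≤ l * det2 a b := by
    simp only [Filter.eventually_all_finset]
    exact fun z _ d _ => (Filter.tendsto_id.atTop_mul_const hab).eventually_ge_atTop _
  obtain ⟨l, hl, hbound⟩ := ((Filter.eventually_gt_atTop 0).and hbound).exists
  have h₁ : l • (a - b) - l • (-a - b - a) = (3 * l) • a := by module
  have h₂ : l • (b - (-a - b)) - l • (a - b) = (3 * l) • b := by module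
  have h₃ : l • (-a - b - a) - l • (b - (-a - b)) = (3 * l) • (-a - b) := by module
  have hpos :
      0 < det2 (l • (a - b) - l • (-a - b - a)) (l • (b - (-a - b)) - l • (-a - b - a)) := by
    have h : det2 ((3 * l) • a) (l • (b - (-a - b)) - l • (-a - b - a)) = 9 * l ^ 2 * det2 a b := by
      simp only [det2, Prod.fst_sub, Prod.snd_sub, Prod.fst_neg, Prod.snd_neg, Prod.smul_fst,
        Prod.smul_snd, smul_eq_mul]
      ring
    rw [h₁, h]
    positivity
  refine ⟨l • (-a - b - a), l • (a - b), l • (b - (-a - b)), ?_, fun z hz => ?_, 3 * l,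
    by positivity, h₁, h₂, h₃⟩
  · rw [collinear_iff_det2_eq_zero]
    exact hpos.ne'
  · have hside : ∀ d w, d ∈ ({a, b, -a - b} : Finset (ℝ × ℝ)) → det2 d w = -det2 a b →
        0 ≤ det2 ((3 * l) • d) (z - l • w) := by
      intro d w hd hdw
      have h : det2 ((3 * l) • d) (z - l • w) = 3 * l * (det2 d z - l * det2 d w) := by
        simp only [det2, Prod.fst_sub, Prod.snd_sub, Prod.smul_fst, Prod.smul_snd, smul_eq_mul]
        ring
      rw [h, hdw]
      exact mul_nonneg (by positivity) (by linarith [hbound z hz d hd])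
    have hdet : det2 a (-a - b - a) = -det2 a b ∧ det2 b (a - b) = -det2 a b ∧
        det2 (-a - b) (b - (-a - b)) = -det2 a b := by
      simp only [det2, Prod.fst_sub, Prod.snd_sub, Prod.fst_neg, Prod.snd_neg]
      refine ⟨?_, ?_, ?_⟩ <;> ring
    exact mem_convexHull_of_det2_nonneg hpos (h₁ ▸ hside a _ (by simp) hdet.1)
      (h₂ ▸ hside b _ (by simp) hdet.2.1) (h₃ ▸ hside _ _ (by simp) hdet.2.2)

theorem projBetween_smul {d : ℝ × ℝ} {X Y Z : Finset (ℝ × ℝ)} {t : ℝ} (ht : 0 < t)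
    (h : ∀ x ∈ X, ∀ y ∈ Y, ∀ z ∈ Z, dot2 d y < dot2 d x ∧ dot2 d x < dot2 d z) :
    ProjBetween (t • d) X Y Z := by
  left
  simpa only [dot2_smul_left, mul_lt_mul_iff_right₀ ht] using h

theorem ptSet3Decomposable_of_cyclic {P : Finset (ℝ × ℝ)} {u : Fin 3 → ℝ × ℝ}
    (hu : ∀ i, 0 < det2 (u i) (u (i + 1))) {B : Fin 3 → Finset (ℝ × ℝ)}
    (hP : univ.biUnion B = P) (hdisj : ∀ i, Disjoint (B i) (B (i + 1)))
    (hcard : ∀ i, #(B i) = #(B (i + 1)))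
    (hproj : ∀ i, ∀ x ∈ B i, ∀ y ∈ B (i + 1), ∀ z ∈ B (i + 2),
      dot2 (u i) y < dot2 (u i) x ∧ dot2 (u i) x < dot2 (u i) z) : PtSet3Decomposable P := by
  have hu0 : 0 < det2 (u 0) (u 1) := hu 0
  have hu1 : 0 < det2 (u 1) (u 2) := hu 1
  have hu2 : 0 < det2 (u 2) (u 0) := hu 2
  have hdet : 0 < det2 (det2 (u 1) (u 2) • u 0) (det2 (u 2) (u 0) • u 1) := by
    have h : det2 (det2 (u 1) (u 2) • u 0) (det2 (u 2) (u 0) • u 1) =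
        det2 (u 1) (u 2) * det2 (u 2) (u 0) * det2 (u 0) (u 1) := by
      simp only [det2, Prod.smul_fst, Prod.smul_snd, smul_eq_mul]
      ring
    rw [h]
    positivity
  obtain ⟨v₁, v₂, v₃, hcol, hsub, l, hl, h₁, h₂, h₃⟩ := exists_triangle_of_add_add_eq_zero P
    (det2_smul_add_det2_smul_add_det2_smul (u 0) (u 1) (u 2)) hdet
  refine ⟨B 0, B 1, B 2, v₁, v₂, v₃, ?_, hdisj 0, (hdisj 2).symm, hdisj 1, hcard 0, hcard 1,
    hcol, hsub, ?_, ?_, ?_⟩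
  · rw [← hP]
    ext x
    simp [Fin.exists_fin_succ]
  · rw [h₁, smul_smul]
    exact projBetween_smul (mul_pos hl hu1) (hproj 0)
  · rw [h₂, smul_smul]
    exact projBetween_smul (mul_pos hl hu2) (hproj 1)
  · rw [h₃, smul_smul]
    exact projBetween_smul (mul_pos hl hu0) (hproj 2)

theorem lt_of_mem_lowest_sdiff {α β : Type*} [DecidableEq α] [LinearOrder β] {Y V : Finset α}
    {f : α → β} {m : ℕ} {c : β} {a x : α} (hc : m < #{y ∈ Y | f y < c})
    (hV : ∀ y ∈ V, f y < c → y = a) (hx : x ∈ lowest (Y \ V) f m) : f x < c := by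
  by_contra! hle
  have hsub : {y ∈ Y | f y < c} ⊆ insert a {y ∈ Y \ V | f y < f x} := by
    intro y hy
    obtain ⟨hyY, hyc⟩ := mem_filter.1 hy
    by_cases hyV : y ∈ V
    · exact mem_insert.2 (Or.inl (hV y hyV hyc))
    · exact mem_insert_of_mem (mem_filter.2 ⟨mem_sdiff.2 ⟨hyY, hyV⟩, hyc.trans_le hle⟩)
  have hcard := (card_le_card hsub).trans (card_insert_le _ _)
  have hxm := (mem_filter.1 hx).2
  omega

variable {P : Finset (ℝ × ℝ)} {k m : ℕ} {v u : Fin 3 → ℝ × ℝ}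

theorem IsBalancedTriple.image_eq_hullVertices (h : IsBalancedTriple P m v u) (hP : GenPos P)
    (hcard : 2 ≤ #P) (hhull : #(arcsLT P 1) = 3) : univ.image v = hullVertices P := by
  refine eq_of_subset_of_card_le ?_ ?_
  · exact image_subset_iff.2 fun i _ =>
      mem_hullVertices.2 ((h.balanced i).exposed.imp fun _ => And.left)
  · rw [← card_arcs_zero hP hcard, ← arcsLT_one, hhull, h.card_image]

theorem add_two_add_one_eq : ∀ i : Fin 3, i + 2 + 1 = i := by
  decide

theorem eq_or_eq_add_one_or_eq_add_two : ∀ i j : Fin 3, j = i ∨ j = i + 1 ∨ j = i + 2 := by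
  decide

theorem IsBalancedTriple.det2_add_two (h : IsBalancedTriple P m v u) (i : Fin 3) :
    0 < det2 (u (i + 2)) (u i) := by
  simpa only [add_two_add_one_eq] using h.cyclic (i + 2)

theorem IsBalancedTriple.exists_vertex_isExposedBy (h : IsBalancedTriple P m v u)
    (hV : univ.image v = hullVertices P) {s : ℝ × ℝ} (hs : Set.InjOn (dot2 s) P) :
    ∃ j, IsExposedBy P (v j) s := by
  obtain ⟨w, hw⟩ := exists_isExposedBy ⟨_, (h.balanced 0).mem⟩ hs
  have hwV := mem_hullVertices.2 ⟨_, hw⟩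
  rw [← hV] at hwV
  obtain ⟨j, -, rfl⟩ := mem_image.1 hwV
  exact ⟨j, hw⟩

theorem IsBalancedTriple.isExposedBy_add_one (h : IsBalancedTriple P m v u)
    (hV : univ.image v = hullVertices P) (i : Fin 3) : IsExposedBy P (v (i + 1)) (u i) := by
  obtain ⟨j, hj⟩ := h.exists_vertex_isExposedBy hV (h.balanced i).inj
  have hbelow : ¬ m < #{y ∈ P | dot2 (u i) y < dot2 (u i) (v j)} := by
    simp [hj.filter_dot2_lt_eq_empty]
  rcases eq_or_eq_add_one_or_eq_add_two i j with rfl | rfl | rfl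
  · exact absurd (h.balanced j).lt_card_below hbelow
  · exact hj
  · exact absurd ((h.balanced (i + 2)).lt_card_dot2_lt (h.det2_add_two i)) hbelow

theorem IsBalancedTriple.isExposedBy_add_two (h : IsBalancedTriple P m v u)
    (hV : univ.image v = hullVertices P) (i : Fin 3) : IsExposedBy P (v (i + 2)) (-u i) := by
  obtain ⟨j, hj⟩ := h.exists_vertex_isExposedBy hV (injOn_dot2_neg (h.balanced i).inj)
  have habove : ¬ m < #{y ∈ P | dot2 (u i) (v j) < dot2 (u i) y} := by
    simp [hj.filter_lt_dot2_eq_empty]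
  rcases eq_or_eq_add_one_or_eq_add_two i j with rfl | rfl | rfl
  · exact absurd (h.balanced j).lt_card_above habove
  · exact absurd ((h.balanced (i + 1)).lt_card_lt_dot2 (h.cyclic i)) habove
  · exact hj

theorem IsBalancedTriple.lowest_neg_eq (h : IsBalancedTriple P m v u) (hP : GenPos P)
    (hcard : #P = 3 * (m + 1)) (hm : #(arcsLT P (m + 1)) = 3 * (m + 2).choose 2) (i : Fin 3) :
    lowest (P \ univ.image v) (dot2 (-u i)) m =
      lowest (P \ univ.image v) (dot2 (u (i + 1))) m := by
  classical
  set E := P \ univ.image v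
  have hE : #E + 3 = #P := h.card_sdiff_add
  have hrec : 3 * m.choose 2 ≤ #(arcsLT E (m - 1)) := by
    obtain _ | _ | k := m
    · simp
    · simp
    · exact (Nat.le_add_right _ _).trans
        (le_card_arcsLT (h := k + 2) (hP.mono sdiff_subset) (by omega) (by omega))
  have hchoose : (m + 2).choose 2 = m.choose 2 + 2 * m + 1 := by
    rw [Nat.choose_succ_succ' (m + 1) 1, Nat.choose_succ_succ' m 1, Nat.choose_one_right,
      Nat.choose_one_right]
    ring
  have hge : 6 * m + 3 + #(arcsLT E (m - 1)) + ∑ i, #(descendingArcs E m (u i) (u (i + 1))) ≤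
      #(arcsLT P (m + 1)) := h.card_arcsLT_ge hP (by omega)
  have hzero : ∑ i, #(descendingArcs E m (u i) (u (i + 1))) = 0 := by omega
  have hsdiff := h.card_lowest_sdiff_le hP i
  rw [sum_eq_zero_iff.1 hzero i (mem_univ i), Nat.le_zero, card_eq_zero,
    sdiff_eq_empty_iff_subset] at hsdiff
  refine (eq_of_subset_of_card_le hsdiff ?_).symm
  rw [card_lowest (h.injOn_sdiff (i + 1)) (show m ≤ #E by omega),
    card_lowest (injOn_dot2_neg (h.injOn_sdiff i)) (show m ≤ #E by omega)]

/-- The three parts of the decomposition of `P`: the points outside the triple that come first along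
`u (j + 2)`, together with the hull vertex `v j`, which comes first of all along `u (j + 2)`. -/
noncomputable def block (P : Finset (ℝ × ℝ)) (m : ℕ) (v u : Fin 3 → ℝ × ℝ) (j : Fin 3) :
    Finset (ℝ × ℝ) :=
  insert (v j) (lowest (P \ univ.image v) (dot2 (u (j + 2))) m)

variable {x y z : ℝ × ℝ} {i : Fin 3}

theorem block_add_one (P : Finset (ℝ × ℝ)) (m : ℕ) (v u : Fin 3 → ℝ × ℝ) (i : Fin 3) :
    block P m v u (i + 1) = insert (v (i + 1)) (lowest (P \ univ.image v) (dot2 (u i)) m) := by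
  rw [block, show i + 1 + 2 = i by rw [add_assoc]; exact add_zero i]

theorem block_add_two (P : Finset (ℝ × ℝ)) (m : ℕ) (v u : Fin 3 → ℝ × ℝ) (i : Fin 3) :
    block P m v u (i + 2) =
      insert (v (i + 2)) (lowest (P \ univ.image v) (dot2 (u (i + 1))) m) := by
  rw [block, show i + 2 + 2 = i + 1 by rw [add_assoc]; rfl]

theorem notMem_lowest_sdiff_image {f : ℝ × ℝ → ℝ} (i : Fin 3) :
    v i ∉ lowest (P \ univ.image v) f m :=
  fun hi => (mem_sdiff.1 (lowest_subset _ _ _ hi)).2 (mem_image_of_mem v (mem_univ i))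

theorem IsBalancedTriple.card_block (h : IsBalancedTriple P k v u) (hm : m + 3 ≤ #P) (j : Fin 3) :
    #(block P m v u j) = m + 1 := by
  have hE := h.card_sdiff_add
  rw [block, card_insert_of_notMem (notMem_lowest_sdiff_image j),
    card_lowest (h.injOn_sdiff _) (by omega)]

theorem IsBalancedTriple.block_subset (h : IsBalancedTriple P k v u) (j : Fin 3) :
    block P m v u j ⊆ P :=
  insert_subset (h.balanced j).mem ((lowest_subset _ _ _).trans sdiff_subset)

theorem IsBalancedTriple.disjoint_lowest (h : IsBalancedTriple P k v u) (hcard : 2 * m + 3 ≤ #P)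
    (hS : lowest (P \ univ.image v) (dot2 (-u i)) m =
      lowest (P \ univ.image v) (dot2 (u (i + 1))) m) :
    Disjoint (lowest (P \ univ.image v) (dot2 (u i)) m)
      (lowest (P \ univ.image v) (dot2 (u (i + 1))) m) := by
  have hE := h.card_sdiff_add
  rw [← hS]
  exact disjoint_lowest_dot2_neg (h.injOn_sdiff i) (by omega)

theorem IsBalancedTriple.disjoint_block (h : IsBalancedTriple P k v u) (hcard : 2 * m + 3 ≤ #P)
    (hS : ∀ i, lowest (P \ univ.image v) (dot2 (-u i)) m =
      lowest (P \ univ.image v) (dot2 (u (i + 1))) m) (i : Fin 3) :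
    Disjoint (block P m v u i) (block P m v u (i + 1)) := by
  have hdisj := h.disjoint_lowest hcard (hS (i + 2))
  rw [add_two_add_one_eq] at hdisj
  rw [block_add_one, block, disjoint_insert_left, disjoint_insert_right, mem_insert, not_or]
  exact ⟨⟨by simp [h.inj.eq_iff], notMem_lowest_sdiff_image i⟩,
    notMem_lowest_sdiff_image (i + 1), hdisj⟩

theorem IsBalancedTriple.biUnion_block (h : IsBalancedTriple P k v u) (hcard : #P = 3 * (m + 1))
    (hdisj : ∀ i, Disjoint (block P m v u i) (block P m v u (i + 1))) :
    univ.biUnion (block P m v u) = P := by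
  refine eq_of_subset_of_card_le (biUnion_subset.2 fun j _ => h.block_subset j) ?_
  rw [card_biUnion]
  · simp only [h.card_block (show m + 3 ≤ #P by omega), sum_const, card_fin, smul_eq_mul, hcard,
      le_refl]
  · intro i _ j _ hij
    rcases eq_add_one_or_eq_add_one_of_ne hij with rfl | rfl
    exacts [hdisj i, (hdisj j).symm]

theorem IsExposedBy.dot2_lt_of_mem_insert_lowest {V : Finset (ℝ × ℝ)} {a b w s : ℝ × ℝ}
    (ha : IsExposedBy P a s) (hb : IsExposedBy P b (-s)) (hwP : w ∈ P)
    (hw : m < #{y ∈ P | dot2 s y < dot2 s w}) (hV : ∀ y ∈ V, y = w ∨ y = a ∨ y = b)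
    (hx : x ∈ insert w (P \ V)) (hx' : x ∉ insert a (lowest (P \ V) (dot2 s) m))
    (hy : y ∈ insert a (lowest (P \ V) (dot2 s) m)) : dot2 s y < dot2 s x := by
  obtain ⟨hxa, hxL⟩ := not_or.1 (mem_insert.not.1 hx')
  obtain rfl | hy := mem_insert.1 hy
  · exact ha.2 x (insert_subset hwP sdiff_subset hx) hxa
  obtain rfl | hx := mem_insert.1 hx
  · refine lt_of_mem_lowest_sdiff (a := a) hw (fun z hz hlt => ?_) hy
    obtain rfl | rfl | rfl := hV z hz
    · exact absurd hlt (lt_irrefl _)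
    · rfl
    · have hmax := hb.2 x hwP (ne_of_apply_ne _ hlt.ne')
      rw [dot2_neg_left, dot2_neg_left, neg_lt_neg_iff] at hmax
      exact absurd hlt hmax.not_gt
  · exact lt_of_mem_lowest_of_notMem_lowest hy hx hxL

theorem IsBalancedTriple.dot2_block_lt (h : IsBalancedTriple P m v u)
    (hV : univ.image v = hullVertices P)
    (hdisj : Disjoint (block P m v u i) (block P m v u (i + 1)))
    (hx : x ∈ block P m v u i) (hy : y ∈ block P m v u (i + 1)) :
    dot2 (u i) y < dot2 (u i) x := by
  have hx' := disjoint_left.1 hdisj hx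
  rw [block_add_one] at hy hx'
  exact (h.isExposedBy_add_one hV i).dot2_lt_of_mem_insert_lowest (h.isExposedBy_add_two hV i)
    (h.balanced i).mem (h.balanced i).lt_card_below
    (forall_mem_image.2 fun j _ => (eq_or_eq_add_one_or_eq_add_two i j).imp (congrArg v)
      (Or.imp (congrArg v) (congrArg v)))
    (insert_subset_insert _ (lowest_subset _ _ _) hx) hx' hy

theorem IsBalancedTriple.dot2_lt_block (h : IsBalancedTriple P m v u)
    (hV : univ.image v = hullVertices P)
    (hdisj : Disjoint (block P m v u i) (block P m v u (i + 2)))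
    (hS : lowest (P \ univ.image v) (dot2 (-u i)) m =
      lowest (P \ univ.image v) (dot2 (u (i + 1))) m)
    (hx : x ∈ block P m v u i) (hz : z ∈ block P m v u (i + 2)) :
    dot2 (u i) x < dot2 (u i) z := by
  have hx' := disjoint_left.1 hdisj hx
  rw [block_add_two, ← hS] at hz hx'
  rw [← neg_lt_neg_iff, ← dot2_neg_left, ← dot2_neg_left]
  refine (h.isExposedBy_add_two hV i).dot2_lt_of_mem_insert_lowest (b := v (i + 1)) ?_
    (h.balanced i).mem ?_ (forall_mem_image.2 fun j _ =>
      (eq_or_eq_add_one_or_eq_add_two i j).imp (congrArg v)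
        fun hj => hj.symm.imp (congrArg v) (congrArg v))
    (insert_subset_insert _ (lowest_subset _ _ _) hx) hx' hz
  · rw [neg_neg]
    exact h.isExposedBy_add_one hV i
  · simpa only [dot2_neg_left, neg_lt_neg_iff] using (h.balanced i).lt_card_above

theorem ptSet3Decomposable_of_card_arcsLT (hP : GenPos P) (hcard : #P = 3 * (m + 1))
    (hhull : #(arcsLT P 1) = 3) (hm : #(arcsLT P (m + 1)) = 3 * (m + 2).choose 2) :
    PtSet3Decomposable P := by
  obtain ⟨v, u, h⟩ := exists_isBalancedTriple hP (k := m) (by omega)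
  have hV := h.image_eq_hullVertices hP (by omega) hhull
  have hS := h.lowest_neg_eq hP hcard hm
  have hdisj := h.disjoint_block (by omega) hS
  have hdisj' : ∀ i, Disjoint (block P m v u i) (block P m v u (i + 2)) := fun i => by
    simpa only [add_two_add_one_eq] using (hdisj (i + 2)).symm
  exact ptSet3Decomposable_of_cyclic h.cyclic (h.biUnion_block hcard hdisj) hdisj
    (fun i => by rw [h.card_block (by omega), h.card_block (by omega)])
    fun i x hx y hy z hz =>
      ⟨h.dot2_block_lt hV (hdisj i) hx hy, h.dot2_lt_block hV (hdisj' i) (hS i) hx hz⟩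

end ThreeDecomposability

/-- Let `P` be a crossing-minimal set of 30 points in general position
in the plane. Then `E_{≤k}(P) = 3·C(k+2,2) + 3·C(k-8,2)` for every `0 ≤ k ≤ 12`
(with truncated subtraction, so `C(k-8,2) = 0` for `k ≤ 9`), and `P` is 3-decomposable. -/
theorem crossing_minimal_K30_is_threeDecomposable (P : Finset (ℝ × ℝ))
    (hcard : P.card = 30) (hgp : GenPos P)
    (hmin : ∀ Q : Finset (ℝ × ℝ), Q.card = 30 → GenPos Q → crNum P ≤ crNum Q) :
    (∀ k : ℕ, k ≤ 12 →
      EleK P k = 3 * Nat.choose (k + 2) 2 + 3 * Nat.choose (k - 8) 2) ∧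
    PtSet3Decomposable P := by
  have hcr : crNum P ≤ 9726 :=
    (hmin optimalPoints card_optimalPoints genPos_optimalPoints).trans_eq crNum_optimalPoints
  have harcs : ∀ k ≤ 12, (arcsLT P (k + 1)).card = 3 * (k + 2).choose 2 + 3 * (k - 8).choose 2 :=
    fun k hk => card_arcsLT_eq_of_crNum_le hgp hcard hcr hk
  refine ⟨fun k hk => ?_, ?_⟩
  · rw [EleK_eq_card_arcsLT hgp (by omega), harcs k hk]
  · exact ptSet3Decomposable_of_card_arcsLT (m := 9) hgp hcard (harcs 0 (by decide))
      (harcs 9 (by decide))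
end

section
/- Let k < n/2 and let Π be an n-half-period with initial arrangement π_0 = (a_k, a_{k−1}, …, a_1, b_1, …, b_m, c_1, …, c_k), m = n − 2k, having no confined transpositions. If Π is perfect, then in the liberation sequence σ(Π) either all the a's occur consecutively or all the c's occur consecutively. -/
/-- An `n`-half-period: a sequence `π_0, …, π_{n(n-1)/2}` of arrangements of `n`
labeled elements in the positions `1, …, n` (recorded by `pos t x` = the position of
element `x` at time `t`), in which consecutive arrangements differ by a transposition
of the elements in two adjacent positions, and the last arrangement is the reverse of
the first. -/
structure HalfPeriod (n : ℕ) where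
  pos : ℕ → Fin n → ℕ
  pos_mem : ∀ t, t ≤ n * (n - 1) / 2 → ∀ x, 1 ≤ pos t x ∧ pos t x ≤ n
  pos_inj : ∀ t, t ≤ n * (n - 1) / 2 → Function.Injective (pos t)
  step : ∀ t, t < n * (n - 1) / 2 → ∃ x y : Fin n,
    pos t y = pos t x + 1 ∧ pos (t + 1) x = pos t x + 1 ∧ pos (t + 1) y = pos t x ∧
    ∀ z, z ≠ x → z ≠ y → pos (t + 1) z = pos t z
  reverse : ∀ x, pos (n * (n - 1) / 2) x = n + 1 - pos 0 x

namespace HalfPeriod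

variable {n : ℕ}

/-- The number of transposition steps of an `n`-half-period. -/
def steps (n : ℕ) : ℕ := n * (n - 1) / 2

/-- Element `x` moves (changes position) at step `t`. -/
def Moved (hp : HalfPeriod n) (t : ℕ) (x : Fin n) : Prop :=
  hp.pos (t + 1) x ≠ hp.pos t x

/-- Step `t` is the transposition of the (distinct) elements `x` and `y`. -/
def SwapsAt (hp : HalfPeriod n) (t : ℕ) (x y : Fin n) : Prop :=
  x ≠ y ∧ hp.Moved t x ∧ hp.Moved t y

/-- Step `t` is an `i`-transposition: it swaps the elements at positions `i` and `i+1`. -/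
def GateAt (hp : HalfPeriod n) (t i : ℕ) : Prop :=
  ∃ x y : Fin n, hp.pos t x = i ∧ hp.pos t y = i + 1 ∧
    hp.pos (t + 1) x = i + 1 ∧ hp.pos (t + 1) y = i

/-- Step `t` is an `i`-critical transposition: an `i`- or an `(n-i)`-transposition. -/
def Critical (hp : HalfPeriod n) (t i : ℕ) : Prop :=
  hp.GateAt t i ∨ hp.GateAt t (n - i)

/-- Step `t` is a `(≤ k)`-critical transposition. -/
def LeCritical (hp : HalfPeriod n) (t k : ℕ) : Prop :=
  ∃ i, 1 ≤ i ∧ i ≤ k ∧ hp.Critical t i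

/-- `N_{≤ k}`: the number of `(≤ k)`-critical transpositions of the half-period. -/
noncomputable def NLe (hp : HalfPeriod n) (k : ℕ) : ℕ :=
  {t : ℕ | t < steps n ∧ hp.LeCritical t k}.ncard

end HalfPeriod
/-- The initial arrangement of `hp` is `(a_k, a_{k-1}, …, a_1, b_1, …, b_m, c_1, …, c_k)`
with `m = n - 2k` (1-indexed subscripts: `a_j = a ⟨j-1⟩`, etc.). -/
def StandardStart {n : ℕ} (hp : HalfPeriod n) (k : ℕ) (a : Fin k → Fin n)
    (b : Fin (n - 2 * k) → Fin n) (c : Fin k → Fin n) : Prop :=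
  Function.Injective (Sum.elim a (Sum.elim b c)) ∧
  (∀ i, hp.pos 0 (a i) = k - (i : ℕ)) ∧
  (∀ i, hp.pos 0 (b i) = k + (i : ℕ) + 1) ∧
  (∀ i, hp.pos 0 (c i) = n - k + (i : ℕ) + 1)

/-- Element `z` is still confined at step `t`: it is an `a` that has stayed in the
positions `{1, …, k}` up to time `t`, or a `c` that has stayed in `{n-k+1, …, n}`. -/
def ConfinedAt {n : ℕ} (hp : HalfPeriod n) (k : ℕ) (a c : Fin k → Fin n)
    (t : ℕ) (z : Fin n) : Prop :=
  ((∃ i, z = a i) ∧ ∀ s ≤ t, hp.pos s z ≤ k) ∨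
  ((∃ i, z = c i) ∧ ∀ s ≤ t, n - k < hp.pos s z)

/-- The half-period has no confined transpositions. -/
def NoConfinedSteps {n : ℕ} (hp : HalfPeriod n) (k : ℕ) (a c : Fin k → Fin n) : Prop :=
  ∀ t, t < HalfPeriod.steps n → ∀ x y, hp.SwapsAt t x y →
    ¬ (ConfinedAt hp k a c t x ∧ ConfinedAt hp k a c t y)

/-- An `a`-element `z` becomes free at time `u`: `u` is the first time at which its
position exceeds `k` (it has exited through the first `A`-gate). -/
def AFreedAt {n : ℕ} (hp : HalfPeriod n) (k : ℕ) (z : Fin n) (u : ℕ) : Prop :=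
  k < hp.pos u z ∧ ∀ s < u, hp.pos s z ≤ k

/-- A `c`-element `z` becomes free at time `u`: `u` is the first time at which its
position is at most `n - k` (it has exited through the first `C`-gate). -/
def CFreedAt {n : ℕ} (hp : HalfPeriod n) (k : ℕ) (z : Fin n) (u : ℕ) : Prop :=
  hp.pos u z ≤ n - k ∧ ∀ s < u, n - k < hp.pos s z

/-- Step `t` occurs in the `A`-Zone: it swaps positions `(p, p+1)` with `p ≤ k`. -/
def AZoneStep {n : ℕ} (hp : HalfPeriod n) (k t : ℕ) : Prop :=
  ∃ p, 1 ≤ p ∧ p ≤ k ∧ hp.GateAt t p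

/-- Step `t` occurs in the `C`-Zone: it swaps positions `(p, p+1)` with `p ≥ k + m = n - k`. -/
def CZoneStep {n : ℕ} (hp : HalfPeriod n) (k t : ℕ) : Prop :=
  ∃ p, n - k ≤ p ∧ hp.GateAt t p

/-- At step `t`, element `z` moves from position `p` to position `q` for the first time. -/
def FirstMove {n : ℕ} (hp : HalfPeriod n) (t : ℕ) (z : Fin n) (p q : ℕ) : Prop :=
  hp.pos t z = p ∧ hp.pos (t + 1) z = q ∧
    ∀ s < t, ¬ (hp.pos s z = p ∧ hp.pos (s + 1) z = q)

/-- Step `t` is a discovery transposition for the element `z`: for some `1 ≤ i ≤ j`,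
`z` is `a_j` (resp. `c_j`) and `z` exits its compulsory exit-gate (the `i`-th `A`-gate,
resp. the `i`-th `C`-gate) or enters its compulsory entry-gate (the `i`-th `C`-gate,
resp. the `i`-th `A`-gate) for the first time. The `i`-th `A`-gate is the pair of
positions `(k-i+1, k-i+2)` and the `i`-th `C`-gate is `(n-k+i-1, n-k+i)`. -/
def DiscoveryFor {n : ℕ} (hp : HalfPeriod n) (k : ℕ) (a c : Fin k → Fin n)
    (t : ℕ) (z : Fin n) : Prop :=
  ∃ i : ℕ, 1 ≤ i ∧
    ((∃ j : Fin k, z = a j ∧ i ≤ (j : ℕ) + 1 ∧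
       (FirstMove hp t z (k - i + 1) (k - i + 2) ∨
        FirstMove hp t z (n - k + i - 1) (n - k + i))) ∨
     (∃ j : Fin k, z = c j ∧ i ≤ (j : ℕ) + 1 ∧
       (FirstMove hp t z (k - i + 2) (k - i + 1) ∨
        FirstMove hp t z (n - k + i) (n - k + i - 1))))

/-- Step `t` is a double-discovery transposition. -/
def DoubleDiscoveryAt {n : ℕ} (hp : HalfPeriod n) (k : ℕ) (a c : Fin k → Fin n)
    (t : ℕ) : Prop :=
  ∃ x y, hp.SwapsAt t x y ∧ DiscoveryFor hp k a c t x ∧ DiscoveryFor hp k a c t y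

/-- `|T(a_{i+1})|`: the number of `c`'s that become free after `a_{i+1}` does. -/
noncomputable def TCardA {n : ℕ} (hp : HalfPeriod n) (k : ℕ) (a c : Fin k → Fin n)
    (i : Fin k) : ℕ :=
  {l : Fin k | ∃ u v, AFreedAt hp k (a i) u ∧ CFreedAt hp k (c l) v ∧ u < v}.ncard

/-- `|T(c_{i+1})|`: the number of `a`'s that become free after `c_{i+1}` does. -/
noncomputable def TCardC {n : ℕ} (hp : HalfPeriod n) (k : ℕ) (a c : Fin k → Fin n)
    (i : Fin k) : ℕ :=
  {l : Fin k | ∃ u v, CFreedAt hp k (c i) u ∧ AFreedAt hp k (a l) v ∧ u < v}.ncard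

/-- The half-period is perfect: it has no confined transpositions, every transposition
in the `A`-Zone or `C`-Zone is a discovery transposition, each `a_{i+1}` is involved in
exactly `min (i+1) |T(a_{i+1})|` double-discovery transpositions in the `C`-Zone, and
each `c_{i+1}` is involved in exactly `min (i+1) |T(c_{i+1})|` double-discovery
transpositions in the `A`-Zone. -/
def PerfectHalfPeriod {n : ℕ} (hp : HalfPeriod n) (k : ℕ) (a c : Fin k → Fin n) : Prop :=
  NoConfinedSteps hp k a c ∧
  (∀ t, t < HalfPeriod.steps n → (AZoneStep hp k t ∨ CZoneStep hp k t) →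
    ∃ z, hp.Moved t z ∧ DiscoveryFor hp k a c t z) ∧
  (∀ i : Fin k,
    {t : ℕ | t < HalfPeriod.steps n ∧ CZoneStep hp k t ∧ hp.Moved t (a i) ∧
      DoubleDiscoveryAt hp k a c t}.ncard = min ((i : ℕ) + 1) (TCardA hp k a c i)) ∧
  (∀ i : Fin k,
    {t : ℕ | t < HalfPeriod.steps n ∧ AZoneStep hp k t ∧ hp.Moved t (c i) ∧
      DoubleDiscoveryAt hp k a c t}.ncard = min ((i : ℕ) + 1) (TCardC hp k a c i))

/-!
The situation is symmetric under reading the half-period from right to left, so let the last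
liberated element be an `a`, and let `τ` be the time at which the last `c` becomes free. From `τ`
on, only `a`s make discoveries in the `C`-Zone, so an `a` that has moved right through one of its
compulsory `C`-gates cannot fall back through it. The last liberated `a` has yet to pass every `a`
freed before `τ`, pushing it one position back; so each of these, say `a_i`, is at time `τ` beyond
all its `i` compulsory `C`-gates, and even beyond the next gate. It crossed that gate while passing
an element of `T(a_i)`, so its `min {i, |T(a_i)|}` double discoveries do not exhaust `T(a_i)`. Hence
there are `i` of them, one at each of its compulsory `C`-gates. Consequently, before `τ` every
transposition in the `C`-Zone is a discovery for a `c`, and from `τ` on no `a` freed before `τ`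
moves right any more.

If some `a_l` became free between two `c`s, the element `x` that liberated the first of these `c`s
could not be pushed back before `τ`. So `a_l` would still have to pass `x` after `τ`, which is
impossible.
-/

namespace HalfPeriod

/-- At step `t` the element `x` moves one position to the right, past its neighbour `y`. This
orients the unordered `HalfPeriod.SwapsAt`. -/
structure Passes (hp : HalfPeriod n) (t : ℕ) (x y : Fin n) : Prop where
  lt_steps : t < steps n
  pos_right : hp.pos t y = hp.pos t x + 1
  pos_succ_left : hp.pos (t + 1) x = hp.pos t x + 1
  pos_succ_right : hp.pos (t + 1) y = hp.pos t x
  pos_succ_of_ne : ∀ z, z ≠ x → z ≠ y → hp.pos (t + 1) z = hp.pos t z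

variable {hp : HalfPeriod n} {s t : ℕ} {x y z : Fin n}

theorem exists_passes (hp : HalfPeriod n) (ht : t < steps n) : ∃ x y, hp.Passes t x y := by
  obtain ⟨x, y, h₁, h₂, h₃, h₄⟩ := hp.step t ht
  exact ⟨x, y, ht, h₁, h₂, h₃, h₄⟩

namespace Passes

theorem moved_left (h : hp.Passes t x y) : hp.Moved t x := by
  have := h.pos_succ_left
  unfold Moved
  lia

theorem moved_right (h : hp.Passes t x y) : hp.Moved t y := by
  have := h.pos_right
  have := h.pos_succ_right
  unfold Moved
  lia

theorem swapsAt (h : hp.Passes t x y) : hp.SwapsAt t x y := by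
  refine ⟨?_, h.moved_left, h.moved_right⟩
  rintro rfl
  have := h.pos_right
  lia

theorem eq_or_eq_of_moved (h : hp.Passes t x y) (hz : hp.Moved t z) : z = x ∨ z = y := by
  by_contra! hne
  exact hz (h.pos_succ_of_ne z hne.1 hne.2)

theorem eq_left_of_lt (h : hp.Passes t x y) (hz : hp.pos t z < hp.pos (t + 1) z) : z = x := by
  refine (h.eq_or_eq_of_moved hz.ne').resolve_right ?_
  rintro rfl
  have := h.pos_right
  have := h.pos_succ_right
  lia

theorem eq_right_of_lt (h : hp.Passes t x y) (hz : hp.pos (t + 1) z < hp.pos t z) : z = y := by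
  refine (h.eq_or_eq_of_moved hz.ne).resolve_left ?_
  rintro rfl
  have := h.pos_succ_left
  lia

theorem right_unique (h : hp.Passes t x y) (h' : hp.Passes t x z) : y = z :=
  hp.pos_inj t h.lt_steps.le (h.pos_right.trans h'.pos_right.symm)

end Passes

theorem pos_succ_le (hp : HalfPeriod n) (ht : t < steps n) (z : Fin n) :
    hp.pos (t + 1) z ≤ hp.pos t z + 1 := by
  obtain ⟨x, y, h⟩ := hp.exists_passes ht
  by_contra! hz
  obtain rfl := h.eq_left_of_lt (z := z) (by lia)
  exact hz.ne' h.pos_succ_left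

theorem pos_le_pos_succ_add_one (hp : HalfPeriod n) (ht : t < steps n) (z : Fin n) :
    hp.pos t z ≤ hp.pos (t + 1) z + 1 := by
  obtain ⟨x, y, h⟩ := hp.exists_passes ht
  by_contra! hz
  obtain rfl := h.eq_right_of_lt (z := z) (by lia)
  have := h.pos_right
  have := h.pos_succ_right
  lia

theorem exists_passes_of_le_of_lt {p : ℕ} (hst : s ≤ t) (ht : t ≤ steps n)
    (hs : hp.pos s z ≤ p) (hp' : p < hp.pos t z) :
    ∃ r y, s ≤ r ∧ r < t ∧ hp.Passes r z y ∧ hp.pos r z = p := by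
  induction t, hst using Nat.le_induction with
  | base => lia
  | succ t hst ih =>
    by_cases h : p < hp.pos t z
    · obtain ⟨r, y, hsr, hrt, hr⟩ := ih (by lia) h
      exact ⟨r, y, hsr, by lia, hr⟩
    · obtain ⟨x, y, hxy⟩ := hp.exists_passes (t := t) ht
      obtain rfl := hxy.eq_left_of_lt (z := z) (by lia)
      have := hxy.pos_succ_left
      exact ⟨t, y, hst, by lia, hxy, by lia⟩

theorem exists_passes_of_lt_of_le {p : ℕ} (hst : s ≤ t) (ht : t ≤ steps n)
    (hs : p < hp.pos s z) (hp' : hp.pos t z ≤ p) :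
    ∃ r x, s ≤ r ∧ r < t ∧ hp.Passes r x z ∧ hp.pos r x = p := by
  induction t, hst using Nat.le_induction with
  | base => lia
  | succ t hst ih =>
    by_cases h : hp.pos t z ≤ p
    · obtain ⟨r, x, hsr, hrt, hr⟩ := ih (by lia) h
      exact ⟨r, x, hsr, by lia, hr⟩
    · obtain ⟨x, y, hxy⟩ := hp.exists_passes (t := t) ht
      obtain rfl := hxy.eq_right_of_lt (z := z) (by lia)
      have := hxy.pos_right
      have := hxy.pos_succ_right
      exact ⟨t, x, hst, by lia, hxy, by lia⟩

theorem pos_succ_lt_of_not_passes (ht : t < steps n) (hxy : hp.pos t x < hp.pos t y)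
    (hn : ¬ hp.Passes t x y) : hp.pos (t + 1) x < hp.pos (t + 1) y := by
  by_contra! h
  have hne : hp.pos (t + 1) y ≠ hp.pos (t + 1) x :=
    (hp.pos_inj (t + 1) ht).ne (by rintro rfl; exact hxy.false)
  have := hp.pos_succ_le ht x
  have := hp.pos_le_pos_succ_add_one ht y
  obtain ⟨x', y', h'⟩ := hp.exists_passes ht
  obtain rfl := h'.eq_left_of_lt (z := x) (by lia)
  obtain rfl := h'.eq_right_of_lt (z := y) (by lia)
  exact hn h'

theorem exists_passes_of_overtakes (hst : s ≤ t) (ht : t ≤ steps n)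
    (hs : hp.pos s x < hp.pos s y) (hxy : hp.pos t y < hp.pos t x) :
    ∃ r, s ≤ r ∧ r < t ∧ hp.Passes r x y := by
  by_contra! hn
  have behind : ∀ r, s ≤ r → r ≤ t → hp.pos r x < hp.pos r y := by
    intro r hr
    induction r, hr using Nat.le_induction with
    | base => exact fun _ => hs
    | succ r hr ih => exact fun hrt =>
        pos_succ_lt_of_not_passes (by lia) (ih (by lia)) (hn r hr (by lia))
  exact (behind t hst le_rfl).not_gt hxy

theorem exists_passes_of_pos_zero_lt (hxy : hp.pos 0 x < hp.pos 0 y) : ∃ t, hp.Passes t x y := by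
  have hrev : hp.pos (steps n) y < hp.pos (steps n) x := by
    have hx : hp.pos (steps n) x = n + 1 - hp.pos 0 x := hp.reverse x
    have hy : hp.pos (steps n) y = n + 1 - hp.pos 0 y := hp.reverse y
    have := (hp.pos_mem 0 (Nat.zero_le _) y).2
    lia
  obtain ⟨t, -, -, ht⟩ := exists_passes_of_overtakes (Nat.zero_le _) le_rfl hxy hrev
  exact ⟨t, ht⟩

-- There are as many steps as unordered pairs, and every pair is reversed at some step.
theorem Passes.time_unique (h : hp.Passes s x y) (h' : hp.Passes t x y) : s = t := by
  choose left right hpass using fun r : Fin (steps n) => hp.exists_passes r.2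
  let pair (r : Fin (steps n)) : {e : Sym2 (Fin n) // ¬ e.IsDiag} :=
    ⟨s(left r, right r), (hpass r).swapsAt.1⟩
  have pair_eq {r : ℕ} {u v : Fin n} (hr : hp.Passes r u v) :
      (pair ⟨r, hr.lt_steps⟩ : Sym2 (Fin n)) = s(u, v) := by
    have hlr := hpass ⟨r, hr.lt_steps⟩
    have hu := hlr.eq_left_of_lt (z := u) (by have := hr.pos_succ_left; lia)
    have hv := hlr.eq_right_of_lt (z := v)
      (by have := hr.pos_right; have := hr.pos_succ_right; lia)
    simp only [pair, hu, hv]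
  have hsurj : Function.Surjective pair := by
    rintro ⟨⟨u, v⟩, huv⟩
    rcases ((hp.pos_inj 0 (Nat.zero_le _)).ne huv).lt_or_gt with hlt | hgt
    · obtain ⟨r, hr⟩ := exists_passes_of_pos_zero_lt hlt
      exact ⟨_, Subtype.ext (pair_eq hr)⟩
    · obtain ⟨r, hr⟩ := exists_passes_of_pos_zero_lt hgt
      exact ⟨_, Subtype.ext ((pair_eq hr).trans Sym2.eq_swap)⟩
  have hinj : Function.Injective pair := by
    refine (hsurj.bijective_of_nat_card_le ?_).1
    rw [Nat.card_eq_fintype_card, Nat.card_eq_fintype_card, Sym2.card_subtype_not_diag,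
      Fintype.card_fin, Fintype.card_fin, Nat.choose_two_right, steps]
  simpa using hinj (Subtype.ext ((pair_eq h).trans (pair_eq h').symm))

end HalfPeriod

section Mirror

variable {n k : ℕ} {hp : HalfPeriod n} {a c : Fin k → Fin n} {b : Fin (n - 2 * k) → Fin n}
  {t u : ℕ} {z : Fin n}

/-- The half-period read from right to left; it exchanges the roles of the `a`s and the `c`s. -/
def HalfPeriod.mirror (hp : HalfPeriod n) : HalfPeriod n where
  pos t x := n + 1 - hp.pos t x
  pos_mem t ht x := by
    have := hp.pos_mem t ht x
    lia
  pos_inj t ht x y hxy := by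
    have := hp.pos_mem t ht x
    have := hp.pos_mem t ht y
    exact hp.pos_inj t ht (by lia)
  step t ht := by
    obtain ⟨x, y, h⟩ := hp.exists_passes ht
    have := h.pos_right
    have := h.pos_succ_left
    have := h.pos_succ_right
    have := hp.pos_mem t ht.le y
    refine ⟨y, x, by lia, by lia, by lia, fun z hy hx => ?_⟩
    rw [h.pos_succ_of_ne z hx hy]
  reverse x := by rw [hp.reverse x]

namespace HalfPeriod

theorem mirror_pos (hp : HalfPeriod n) (t : ℕ) (x : Fin n) :
    hp.mirror.pos t x = n + 1 - hp.pos t x := rfl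

theorem moved_mirror (ht : t < steps n) : hp.mirror.Moved t z ↔ hp.Moved t z := by
  have := hp.pos_mem t ht.le z
  have := hp.pos_mem (t + 1) ht z
  simp only [Moved, mirror_pos]
  lia

theorem swapsAt_mirror (ht : t < steps n) {x y : Fin n} :
    hp.mirror.SwapsAt t x y ↔ hp.SwapsAt t x y := by
  simp only [SwapsAt, moved_mirror ht]

theorem gateAt_mirror (ht : t < steps n) {p : ℕ} (hpn : p ≤ n) :
    hp.mirror.GateAt t p ↔ hp.GateAt t (n - p) := by
  simp only [GateAt, mirror_pos]
  constructor <;> rintro ⟨x, y, hx, hy, hx', hy'⟩ <;>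
    have := hp.pos_mem t ht.le x <;> have := hp.pos_mem t ht.le y <;>
    exact ⟨y, x, by lia, by lia, by lia, by lia⟩

end HalfPeriod

open HalfPeriod

theorem StandardStart.mirror (hk : k ≤ n) (h : StandardStart hp k a b c) :
    StandardStart hp.mirror k c (b ∘ Fin.rev) a := by
  obtain ⟨hinj, ha, hb, hc⟩ := h
  refine ⟨?_, fun i => ?_, fun i => ?_, fun i => ?_⟩
  · have hperm : Sum.elim c (Sum.elim (b ∘ Fin.rev) a) = Sum.elim a (Sum.elim b c) ∘
        Sum.elim (Sum.inr ∘ Sum.inr) (Sum.elim (Sum.inr ∘ Sum.inl ∘ Fin.rev) Sum.inl) := by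
      ext (i | i | i) <;> rfl
    rw [hperm]
    refine hinj.comp ?_
    rintro (i | i | i) (j | j | j) hij <;> simp_all
  · rw [mirror_pos, hc]
    lia
  · rw [mirror_pos, Function.comp_apply, hb, Fin.val_rev]
    lia
  · rw [mirror_pos, ha]
    lia

theorem aFreedAt_mirror (hk : k ≤ n) : AFreedAt hp.mirror k z u ↔ CFreedAt hp k z u := by
  simp only [AFreedAt, CFreedAt, mirror_pos]
  exact and_congr (by lia) (forall₂_congr fun s _ => by lia)

theorem cFreedAt_mirror (hk : k ≤ n) : CFreedAt hp.mirror k z u ↔ AFreedAt hp k z u := by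
  simp only [AFreedAt, CFreedAt, mirror_pos]
  exact and_congr (by lia) (forall₂_congr fun s _ => by lia)

theorem confinedAt_mirror (hk : k ≤ n) :
    ConfinedAt hp.mirror k c a t z ↔ ConfinedAt hp k a c t z := by
  simp only [ConfinedAt, mirror_pos]
  rw [or_comm]
  exact or_congr (and_congr_right fun _ => forall₂_congr fun s _ => by lia)
    (and_congr_right fun _ => forall₂_congr fun s _ => by lia)

theorem aZoneStep_mirror (hk : k ≤ n) (ht : t < steps n) :
    AZoneStep hp.mirror k t ↔ CZoneStep hp k t := by
  constructor
  · rintro ⟨p, _, _, hg⟩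
    exact ⟨n - p, by lia, (gateAt_mirror ht (by lia)).1 hg⟩
  · rintro ⟨p, _, hg⟩
    obtain ⟨_, y, _, _, -⟩ := id hg
    have := hp.pos_mem t ht.le y
    refine ⟨n - p, by lia, by lia, (gateAt_mirror ht (by lia)).2 ?_⟩
    rwa [Nat.sub_sub_self (by lia)]

theorem cZoneStep_mirror (hk : k ≤ n) (ht : t < steps n) :
    CZoneStep hp.mirror k t ↔ AZoneStep hp k t := by
  constructor
  · rintro ⟨p, _, hg⟩
    obtain ⟨_, y, _, _, -⟩ := id hg
    have := hp.mirror.pos_mem t ht.le y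
    exact ⟨n - p, by lia, by lia, (gateAt_mirror ht (by lia)).1 hg⟩
  · rintro ⟨p, _, _, hg⟩
    refine ⟨n - p, by lia, (gateAt_mirror ht (by lia)).2 ?_⟩
    rwa [Nat.sub_sub_self (by lia)]

theorem firstMove_mirror {p q p' q' : ℕ} (hp₁ : 1 ≤ p) (hq₁ : 1 ≤ q)
    (hpp' : p + p' = n + 1) (hqq' : q + q' = n + 1) :
    FirstMove hp.mirror t z p q ↔ FirstMove hp t z p' q' := by
  simp only [FirstMove, mirror_pos]
  exact and_congr (by lia) (and_congr (by lia) (forall₂_congr fun s _ => by lia))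

theorem discoveryFor_mirror (hk : k < n) :
    DiscoveryFor hp.mirror k c a t z ↔ DiscoveryFor hp k a c t z := by
  refine exists_congr fun i => and_congr_right fun hi => ?_
  rw [or_comm]
  refine or_congr (exists_congr fun j => and_congr_right fun _ => and_congr_right fun hij => ?_)
    (exists_congr fun j => and_congr_right fun _ => and_congr_right fun hij => ?_)
  all_goals
    have := j.2
    rw [or_comm]
    exact or_congr (firstMove_mirror (by lia) (by lia) (by lia) (by lia))
      (firstMove_mirror (by lia) (by lia) (by lia) (by lia))

theorem doubleDiscoveryAt_mirror (hk : k < n) (ht : t < steps n) :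
    DoubleDiscoveryAt hp.mirror k c a t ↔ DoubleDiscoveryAt hp k a c t := by
  simp only [DoubleDiscoveryAt, swapsAt_mirror ht, discoveryFor_mirror hk]

theorem tCardA_mirror (hk : k ≤ n) (i : Fin k) :
    TCardA hp.mirror k c a i = TCardC hp k a c i := by
  simp only [TCardA, TCardC, aFreedAt_mirror hk, cFreedAt_mirror hk]

theorem tCardC_mirror (hk : k ≤ n) (i : Fin k) :
    TCardC hp.mirror k c a i = TCardA hp k a c i := by
  simp only [TCardA, TCardC, aFreedAt_mirror hk, cFreedAt_mirror hk]

theorem NoConfinedSteps.mirror (hk : k ≤ n) (h : NoConfinedSteps hp k a c) :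
    NoConfinedSteps hp.mirror k c a := by
  intro t ht x y hxy
  simpa only [confinedAt_mirror hk] using h t ht x y ((swapsAt_mirror ht).1 hxy)

theorem PerfectHalfPeriod.mirror (hk : k < n) (h : PerfectHalfPeriod hp k a c) :
    PerfectHalfPeriod hp.mirror k c a := by
  obtain ⟨hconf, hdisc, hcountA, hcountC⟩ := h
  refine ⟨hconf.mirror hk.le, fun t ht hzone => ?_, fun i => ?_, fun i => ?_⟩
  · simp only [moved_mirror ht, discoveryFor_mirror hk]
    rw [aZoneStep_mirror hk.le ht, cZoneStep_mirror hk.le ht] at hzone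
    exact hdisc t ht hzone.symm
  · rw [tCardA_mirror hk.le, ← hcountC i]
    refine congrArg Set.ncard (Set.ext fun t => and_congr_right fun ht => ?_)
    rw [cZoneStep_mirror hk.le ht, moved_mirror ht, doubleDiscoveryAt_mirror hk ht]
  · rw [tCardC_mirror hk.le, ← hcountA i]
    refine congrArg Set.ncard (Set.ext fun t => and_congr_right fun ht => ?_)
    rw [aZoneStep_mirror hk.le ht, moved_mirror ht, doubleDiscoveryAt_mirror hk ht]

end Mirror

section CZone

open HalfPeriod

variable {n k : ℕ} {hp : HalfPeriod n} {a c : Fin k → Fin n} {b : Fin (n - 2 * k) → Fin n}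
  {s t u v w τ : ℕ} {x y z : Fin n} {e i j l : Fin k}

namespace StandardStart

theorem a_injective (h : StandardStart hp k a b c) : Function.Injective a :=
  h.1.comp Sum.inl_injective

theorem a_ne_c (h : StandardStart hp k a b c) (i j : Fin k) : a i ≠ c j := fun hij => by
  simpa using h.1 (a₁ := Sum.inl i) (a₂ := Sum.inr (Sum.inr j)) hij

theorem pos_zero_a_le (h : StandardStart hp k a b c) (i : Fin k) : hp.pos 0 (a i) ≤ k :=
  (h.2.1 i).trans_le (Nat.sub_le _ _)

theorem pos_steps_a (h : StandardStart hp k a b c) (hk : k ≤ n) (i : Fin k) :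
    hp.pos (steps n) (a i) = n - k + i + 1 :=
  (hp.reverse (a i)).trans (by rw [h.2.1]; lia)

theorem pos_steps_c (h : StandardStart hp k a b c) (hk : k ≤ n) (j : Fin k) :
    hp.pos (steps n) (c j) = k - j :=
  (hp.reverse (c j)).trans (by rw [h.2.2.2]; lia)

theorem exists_eq_a_of_lt_pos_steps (h : StandardStart hp k a b c)
    (hx : n - k < hp.pos (steps n) x) : ∃ i, x = a i := by
  have hrev : hp.pos (steps n) x = n + 1 - hp.pos 0 x := hp.reverse x
  have := (hp.pos_mem 0 (Nat.zero_le _) x).1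
  refine ⟨⟨k - hp.pos 0 x, by lia⟩, hp.pos_inj 0 (Nat.zero_le _) ?_⟩
  rw [h.2.1]
  lia

end StandardStart

theorem FirstMove.le {p q : ℕ} (h : FirstMove hp t z p q) (hs : hp.pos s z = p)
    (hs' : hp.pos (s + 1) z = q) : t ≤ s :=
  not_lt.1 fun hst => h.2.2 s hst ⟨hs, hs'⟩

theorem exists_aFreedAt_le (h : k < hp.pos t z) : ∃ u ≤ t, AFreedAt hp k z u := by
  have hex : ∃ t, k < hp.pos t z := ⟨t, h⟩
  exact ⟨Nat.find hex, Nat.find_min' hex h, Nat.find_spec hex,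
    fun s hs => not_lt.1 (Nat.find_min hex hs)⟩

theorem exists_cFreedAt_le (h : hp.pos t z ≤ n - k) : ∃ v ≤ t, CFreedAt hp k z v := by
  have hex : ∃ t, hp.pos t z ≤ n - k := ⟨t, h⟩
  exact ⟨Nat.find hex, Nat.find_min' hex h, Nat.find_spec hex,
    fun s hs => not_le.1 (Nat.find_min hex hs)⟩

theorem AFreedAt.le (h : AFreedAt hp k z u) (ht : k < hp.pos t z) : u ≤ t :=
  not_lt.1 fun htu => (h.2 t htu).not_gt ht

theorem CFreedAt.le (h : CFreedAt hp k z v) (ht : hp.pos t z ≤ n - k) : v ≤ t :=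
  not_lt.1 fun htv => (h.2 t htv).not_ge ht

theorem AFreedAt.pos_le_add_one (h : AFreedAt hp k z u) (h0 : hp.pos 0 z ≤ k) (hu : u ≤ steps n)
    (hs : s ≤ u) : hp.pos s z ≤ k + 1 := by
  rcases hs.eq_or_lt with rfl | hs
  · cases s with
    | zero => lia
    | succ s => exact (hp.pos_succ_le hu z).trans (Nat.succ_le_succ (h.2 s s.lt_succ_self))
  · exact (h.2 s hs).trans k.le_succ

theorem CFreedAt.exists_passes (h : CFreedAt hp k z v) (h0 : n - k < hp.pos 0 z)
    (hv : v ≤ steps n) : ∃ w x, v = w + 1 ∧ hp.Passes w x z ∧ hp.pos w x = n - k := by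
  obtain ⟨w, x, -, hwv, hpass, hw⟩ := exists_passes_of_lt_of_le (Nat.zero_le v) hv h0 h.1
  have := h.le (t := w + 1) (by rw [hpass.pos_succ_right, hw])
  exact ⟨w, x, by lia, hpass, hw⟩

namespace StandardStart

theorem aFreedAt_le_steps (h : StandardStart hp k a b c) (hk : 2 * k < n)
    (hu : AFreedAt hp k (a i) u) : u ≤ steps n :=
  hu.le (by rw [h.pos_steps_a (by lia)]; lia)

theorem cFreedAt_le_steps (h : StandardStart hp k a b c) (hk : 2 * k < n)
    (hv : CFreedAt hp k (c j) v) : v ≤ steps n :=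
  hv.le (by rw [h.pos_steps_c (by lia)]; lia)

theorem exists_cFreedAt (h : StandardStart hp k a b c) (hk : 2 * k < n) (j : Fin k) :
    ∃ v, CFreedAt hp k (c j) v := by
  have hend : hp.pos (steps n) (c j) ≤ n - k := by
    rw [h.pos_steps_c (by lia)]
    lia
  obtain ⟨v, -, hv⟩ := exists_cFreedAt_le hend
  exact ⟨v, hv⟩

theorem lt_of_aFreedAt_lt (h : StandardStart hp k a b c) (hk : 2 * k < n)
    (hconf : NoConfinedSteps hp k a c) (hi : AFreedAt hp k (a i) u)
    (hj : AFreedAt hp k (a j) v) (huv : u < v) : i < j := by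
  by_contra! hji
  have hu : hp.pos u (a j) < hp.pos u (a i) := (hj.2 u huv).trans_lt hi.1
  have hne : j ≠ i := by
    rintro rfl
    exact hu.false
  have h0 : hp.pos 0 (a i) < hp.pos 0 (a j) := by
    rw [h.2.1, h.2.1]
    lia
  obtain ⟨r, -, hru, hr⟩ := exists_passes_of_overtakes (Nat.zero_le u)
    (h.aFreedAt_le_steps hk hi) h0 hu
  exact hconf r hr.lt_steps _ _ hr.swapsAt
    ⟨.inl ⟨⟨i, rfl⟩, fun s hs => hi.2 s (by lia)⟩, .inl ⟨⟨j, rfl⟩, fun s hs => hj.2 s (by lia)⟩⟩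

theorem pos_steps_lt_of_aFreedAt (h : StandardStart hp k a b c) (hk : 2 * k < n)
    (hconf : NoConfinedSteps hp k a c) (hx : k < hp.pos w x) (hl : AFreedAt hp k (a l) u)
    (hwu : w < u) : hp.pos (steps n) x < hp.pos (steps n) (a l) := by
  have hend := h.pos_steps_a (by lia : k ≤ n)
  by_cases hxn : n - k < hp.pos (steps n) x
  · obtain ⟨i, rfl⟩ := h.exists_eq_a_of_lt_pos_steps hxn
    obtain ⟨u', hu'w, hu'⟩ := exists_aFreedAt_le hx
    have : i < l := h.lt_of_aFreedAt_lt hk hconf hu' hl (by lia)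
    rw [hend, hend]
    lia
  · rw [hend]
    lia

end StandardStart

/-- At step `t` the element `a i` enters one of its compulsory `C`-gates for the first time. With
indices starting at `0`, these are the gates `(p, p + 1)` with `n - k ≤ p ≤ n - k + i`. -/
def EntryDiscovery (hp : HalfPeriod n) (k : ℕ) (a : Fin k → Fin n) (t : ℕ) (i : Fin k) : Prop :=
  n - k ≤ hp.pos t (a i) ∧ hp.pos t (a i) ≤ n - k + i ∧
    FirstMove hp t (a i) (hp.pos t (a i)) (hp.pos t (a i) + 1)

/-- At step `t` the element `c j` exits one of its compulsory `C`-gates for the first time. With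
indices starting at `0`, these are the gates `(p, p + 1)` with `n - k ≤ p ≤ n - k + j`. -/
def ExitDiscovery (hp : HalfPeriod n) (k : ℕ) (c : Fin k → Fin n) (t : ℕ) (j : Fin k) : Prop :=
  n - k < hp.pos t (c j) ∧ hp.pos t (c j) ≤ n - k + j + 1 ∧
    FirstMove hp t (c j) (hp.pos t (c j)) (hp.pos t (c j) - 1)

/-- The times at which a `c` becomes free. -/
def cFreeTimes (hp : HalfPeriod n) (k : ℕ) (c : Fin k → Fin n) : Set ℕ :=
  {v | ∃ j, CFreedAt hp k (c j) v}

theorem StandardStart.exists_isGreatest_cFreeTimes [Nonempty (Fin k)]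
    (h : StandardStart hp k a b c) (hk : 2 * k < n) : ∃ τ, IsGreatest (cFreeTimes hp k c) τ := by
  refine BddAbove.exists_isGreatest_of_nonempty ⟨steps n, ?_⟩ ?_
  · rintro v ⟨j, hv⟩
    exact h.cFreedAt_le_steps hk hv
  · obtain ⟨v, hv⟩ := h.exists_cFreedAt hk (Classical.arbitrary _)
    exact ⟨v, _, hv⟩

/-- The set `T(a i)` of the `c`s that become free after `a i` does, given by their indices. -/
def laterCs (hp : HalfPeriod n) (k : ℕ) (a c : Fin k → Fin n) (i : Fin k) : Set (Fin k) :=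
  {l | ∃ u v, AFreedAt hp k (a i) u ∧ CFreedAt hp k (c l) v ∧ u < v}

/-- The double-discovery transpositions in the `C`-Zone in which `a i` is involved. -/
def doubleDiscoverySteps (hp : HalfPeriod n) (k : ℕ) (a c : Fin k → Fin n) (i : Fin k) : Set ℕ :=
  {t | t < steps n ∧ CZoneStep hp k t ∧ hp.Moved t (a i) ∧ DoubleDiscoveryAt hp k a c t}

theorem PerfectHalfPeriod.ncard_doubleDiscoverySteps (h : PerfectHalfPeriod hp k a c)
    (i : Fin k) :
    (doubleDiscoverySteps hp k a c i).ncard = min ((i : ℕ) + 1) (laterCs hp k a c i).ncard :=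
  h.2.2.1 i

namespace HalfPeriod.Passes

theorem cZoneStep_iff (h : hp.Passes t x y) : CZoneStep hp k t ↔ n - k ≤ hp.pos t x := by
  constructor
  · rintro ⟨p, hle, x', y', hx', -, hx'', -⟩
    obtain rfl := h.eq_left_of_lt (z := x') (by lia)
    rwa [hx']
  · intro hx
    exact ⟨_, hx, x, y, rfl, h.pos_right, h.pos_succ_left, h.pos_succ_right⟩

theorem discoveryFor_of_doubleDiscoveryAt (h : hp.Passes t x y)
    (hd : DoubleDiscoveryAt hp k a c t) :
    DiscoveryFor hp k a c t x ∧ DiscoveryFor hp k a c t y := by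
  obtain ⟨x', y', ⟨hne, hx', hy'⟩, hdx, hdy⟩ := hd
  rcases h.eq_or_eq_of_moved hx' with rfl | rfl <;>
    rcases h.eq_or_eq_of_moved hy' with rfl | rfl
  · exact absurd rfl hne
  · exact ⟨hdx, hdy⟩
  · exact ⟨hdy, hdx⟩
  · exact absurd rfl hne

theorem exists_entryDiscovery (h : hp.Passes t x y) (hk : 2 * k < n) (hx : n - k ≤ hp.pos t x)
    (hd : DiscoveryFor hp k a c t x) : ∃ i, x = a i ∧ EntryDiscovery hp k a t i := by
  have hright := h.pos_succ_left
  obtain ⟨g, hg, ⟨i, rfl, hgi, hm | hm⟩ | ⟨j, -, _, hm | hm⟩⟩ := hd <;>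
    have hfrom := hm.1 <;> have hto := hm.2.1
  · lia
  · refine ⟨i, rfl, hx, by lia, ?_⟩
    rwa [← hright, hto, hfrom]
  · lia
  · lia

theorem exists_exitDiscovery (h : hp.Passes t x y) (hk : 2 * k < n) (hx : n - k ≤ hp.pos t x)
    (hd : DiscoveryFor hp k a c t y) : ∃ j, y = c j ∧ ExitDiscovery hp k c t j := by
  have hright := h.pos_right
  have hleft := h.pos_succ_right
  obtain ⟨g, hg, ⟨i, -, _, hm | hm⟩ | ⟨j, rfl, hgj, hm | hm⟩⟩ := hd <;>
    have hfrom := hm.1 <;> have hto := hm.2.1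
  · lia
  · lia
  · lia
  · refine ⟨j, rfl, by lia, by lia, ?_⟩
    rwa [hfrom]

end HalfPeriod.Passes

theorem PerfectHalfPeriod.entryDiscovery_or_exitDiscovery (hperf : PerfectHalfPeriod hp k a c)
    (hk : 2 * k < n) (h : hp.Passes t x y) (hx : n - k ≤ hp.pos t x) :
    (∃ i, x = a i ∧ EntryDiscovery hp k a t i) ∨ ∃ j, y = c j ∧ ExitDiscovery hp k c t j := by
  obtain ⟨z, hz, hd⟩ := hperf.2.1 t h.lt_steps (.inr (h.cZoneStep_iff.2 hx))
  rcases h.eq_or_eq_of_moved hz with rfl | rfl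
  · exact .inl (h.exists_entryDiscovery hk hx hd)
  · exact .inr (h.exists_exitDiscovery hk hx hd)

theorem StandardStart.exists_passes_of_mem_doubleDiscoverySteps (hstart : StandardStart hp k a b c)
    (hk : 2 * k < n) (ht : t ∈ doubleDiscoverySteps hp k a c i) :
    ∃ l, hp.Passes t (a i) (c l) ∧ EntryDiscovery hp k a t i ∧ ExitDiscovery hp k c t l := by
  obtain ⟨hts, hzone, hmoved, hdouble⟩ := ht
  obtain ⟨x, y, h⟩ := hp.exists_passes hts
  have hx := h.cZoneStep_iff.1 hzone
  have hd := h.discoveryFor_of_doubleDiscoveryAt hdouble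
  obtain ⟨i', rfl, hentry⟩ := h.exists_entryDiscovery hk hx hd.1
  obtain ⟨l, rfl, hexit⟩ := h.exists_exitDiscovery hk hx hd.2
  obtain rfl := hstart.a_injective
    ((h.eq_or_eq_of_moved hmoved).resolve_right (hstart.a_ne_c i l))
  exact ⟨l, h, hentry, hexit⟩

theorem EntryDiscovery.time_unique (hs : EntryDiscovery hp k a s i)
    (ht : EntryDiscovery hp k a t i) (hst : hp.pos s (a i) = hp.pos t (a i)) : s = t :=
  le_antisymm (hs.2.2.le hst.symm (by rw [ht.2.2.2.1, hst]))
    (ht.2.2.le hst (by rw [hs.2.2.2.1, hst]))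

namespace ExitDiscovery

theorem pos_le (h : ExitDiscovery hp k c t j) (hstart : StandardStart hp k a b c)
    (ht : t ≤ steps n) (hst : s ≤ t) : hp.pos t (c j) ≤ hp.pos s (c j) := by
  obtain ⟨hlt, hle, hfirst⟩ := h
  by_contra! hs
  have h0 := hstart.2.2.2 j
  obtain ⟨r, x, -, hrs, hpass, hr⟩ := exists_passes_of_lt_of_le (hp := hp) (z := c j)
    (p := hp.pos t (c j) - 1) (Nat.zero_le s) (hst.trans ht) (by lia) (by lia)
  have := hfirst.le (by rw [hpass.pos_right]; lia) (hpass.pos_succ_right.trans hr)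
  lia

theorem lt_of_cFreedAt (h : ExitDiscovery hp k c t j) (hstart : StandardStart hp k a b c)
    (ht : t ≤ steps n) (hv : CFreedAt hp k (c j) v) : t < v := by
  by_contra! hvt
  exact h.1.not_ge ((h.pos_le hstart ht hvt).trans hv.1)

theorem exists_cFreedAt (h : ExitDiscovery hp k c t j) (hstart : StandardStart hp k a b c)
    (hk : 2 * k < n) (ht : t ≤ steps n) : ∃ v, CFreedAt hp k (c j) v ∧ t < v := by
  obtain ⟨v, hv⟩ := hstart.exists_cFreedAt hk j
  exact ⟨v, hv, h.lt_of_cFreedAt hstart ht hv⟩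

theorem lt_of_mem_upperBounds (h : ExitDiscovery hp k c t j)
    (hstart : StandardStart hp k a b c) (hk : 2 * k < n) (ht : t ≤ steps n)
    (hτ : τ ∈ upperBounds (cFreeTimes hp k c)) : t < τ := by
  obtain ⟨v, hv, htv⟩ := h.exists_cFreedAt hstart hk ht
  exact htv.trans_le (hτ ⟨j, hv⟩)

end ExitDiscovery

namespace PerfectHalfPeriod

theorem entryDiscovery_of_le (hperf : PerfectHalfPeriod hp k a c)
    (hstart : StandardStart hp k a b c) (hk : 2 * k < n)
    (hτ : τ ∈ upperBounds (cFreeTimes hp k c)) (hτt : τ ≤ t) (h : hp.Passes t (a i) y)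
    (hi : n - k ≤ hp.pos t (a i)) : EntryDiscovery hp k a t i := by
  rcases hperf.entryDiscovery_or_exitDiscovery hk h hi with ⟨i', hi', hentry⟩ | ⟨j, -, hexit⟩
  · rwa [hstart.a_injective hi']
  · exact absurd (hexit.lt_of_mem_upperBounds hstart hk h.lt_steps.le hτ) hτt.not_gt

-- Were `a i` to fall back through the gate `p`, it would have to pass it again, as `a i` ends at
-- `n - k + i + 1`; after `τ` that is only possible as a first entry.
theorem lt_pos_of_lt_pos (hperf : PerfectHalfPeriod hp k a c)
    (hstart : StandardStart hp k a b c) (hk : 2 * k < n)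
    (hτ : τ ∈ upperBounds (cFreeTimes hp k c)) (hτt : τ ≤ t) (ht : t ≤ steps n) (hst : s ≤ t)
    {p : ℕ} (hpl : n - k ≤ p) (hpu : p ≤ n - k + i) (hs : p < hp.pos s (a i)) :
    p < hp.pos t (a i) := by
  by_contra! htp
  have hend : p < hp.pos (steps n) (a i) := by
    rw [hstart.pos_steps_a (by lia)]
    lia
  obtain ⟨r, y, htr, -, hpass, hr⟩ := exists_passes_of_le_of_lt ht le_rfl htp hend
  have hentry := hperf.entryDiscovery_of_le hstart hk hτ (hτt.trans htr) hpass (by lia)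
  have h0 : hp.pos 0 (a i) ≤ p := (hstart.pos_zero_a_le i).trans (by lia)
  obtain ⟨r', y', -, hr's, hpass', hr'⟩ :=
    exists_passes_of_le_of_lt (Nat.zero_le s) (hst.trans ht) h0 hs
  have := hentry.2.2.le (hr'.trans hr.symm) (by rw [hpass'.pos_succ_left, hr', hr])
  lia

theorem lt_pos_lastCFree (hperf : PerfectHalfPeriod hp k a c)
    (hstart : StandardStart hp k a b c) (hk : 2 * k < n) (hτ : IsGreatest (cFreeTimes hp k c) τ)
    (hu : AFreedAt hp k (a i) u) (huτ : u < τ) : n - k < hp.pos τ (a i) := by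
  obtain ⟨j, hj⟩ := hτ.1
  have hlater : (laterCs hp k a c i).Nonempty := ⟨j, u, τ, hu, hj, huτ⟩
  have hdouble : (doubleDiscoverySteps hp k a c i).Nonempty := by
    have := hperf.ncard_doubleDiscoverySteps i
    have := (Set.ncard_pos (Set.toFinite _)).2 hlater
    exact Set.nonempty_of_ncard_ne_zero (by lia)
  obtain ⟨t, ht⟩ := hdouble
  obtain ⟨l, hpass, hentry, hexit⟩ := hstart.exists_passes_of_mem_doubleDiscoverySteps hk ht
  refine hperf.lt_pos_of_lt_pos hstart hk hτ.2 le_rfl (hstart.cFreedAt_le_steps hk hj)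
    (hexit.lt_of_mem_upperBounds hstart hk hpass.lt_steps.le hτ.2) le_rfl (by lia) ?_
  rw [hpass.pos_succ_left]
  exact Nat.lt_succ_of_le hentry.1

section AFreedLast

variable (hperf : PerfectHalfPeriod hp k a c) (hstart : StandardStart hp k a b c) (hk : 2 * k < n)
  (hτ : IsGreatest (cFreeTimes hp k c) τ) (he : AFreedAt hp k (a e) v) (hτv : τ ≤ v)

include hperf hstart hk hτ he hτv

-- `a e` is still behind `a i` at time `τ` and has to pass it; at that moment `a i` steps back,
-- which after `τ` it cannot do through one of its compulsory gates.
theorem add_one_lt_pos_lastCFree (hu : AFreedAt hp k (a i) u) (huτ : u < τ) :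
    n - k + i + 1 < hp.pos τ (a i) := by
  have hi := hperf.lt_pos_lastCFree hstart hk hτ hu huτ
  have hv := hstart.aFreedAt_le_steps hk he
  have hie : i < e := hstart.lt_of_aFreedAt_lt hk hperf.1 hu he (huτ.trans_le hτv)
  have hbehind : hp.pos τ (a e) < hp.pos τ (a i) := by
    have := he.pos_le_add_one (hstart.pos_zero_a_le e) hv hτv
    lia
  have hend : hp.pos (steps n) (a i) < hp.pos (steps n) (a e) := by
    rw [hstart.pos_steps_a (by lia), hstart.pos_steps_a (by lia)]
    lia
  obtain ⟨r, hτr, -, hpass⟩ := exists_passes_of_overtakes (hτv.trans hv) le_rfl hbehind hend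
  have stays {p s : ℕ} (hs : s ≤ r + 1) :=
    hperf.lt_pos_of_lt_pos (i := i) (s := s) (p := p) hstart hk hτ.2 (by lia) hpass.lt_steps hs
  have hr : n - k + i + 1 < hp.pos r (a i) := by
    have h₀ := stays (p := n - k) (s := τ) (by lia) le_rfl (by lia) hi
    have h₁ := stays (p := hp.pos r (a i) - 1) r.le_succ
    have := hpass.pos_right
    have := hpass.pos_succ_right
    lia
  by_contra! hle
  obtain ⟨r', y, hτr', -, hpass', hr'⟩ :=
    exists_passes_of_le_of_lt hτr hpass.lt_steps.le hle hr
  have := (hperf.entryDiscovery_of_le hstart hk hτ.2 hτr' hpass' (by lia)).2.1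
  lia

theorem not_passes_of_lastCFree_le (hu : AFreedAt hp k (a i) u) (huτ : u < τ) (hτt : τ ≤ t) :
    ¬ hp.Passes t (a i) y := by
  intro h
  have hi := hperf.add_one_lt_pos_lastCFree hstart hk hτ he hτv hu huτ
  have hlt := hperf.lt_pos_of_lt_pos (p := n - k + i) hstart hk hτ.2 hτt h.lt_steps.le hτt
    (by lia) le_rfl (by lia)
  exact (hperf.entryDiscovery_of_le hstart hk hτ.2 hτt h (by lia)).2.1.not_gt hlt

-- Otherwise `a i` passes every element of `T(a i)` at a double discovery; but to reach position
-- `n - k + i + 2` by time `τ` it also passes one of them beyond its compulsory gates.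
theorem add_one_lt_ncard_laterCs (hu : AFreedAt hp k (a i) u) (huτ : u < τ) :
    (i : ℕ) + 1 < (laterCs hp k a c i).ncard := by
  obtain ⟨m, hm⟩ := hτ.1
  have hexits {t : ℕ} {l : Fin k} (h : hp.Passes t (a i) (c l)) (hi : n - k ≤ hp.pos t (a i))
      (hl : ExitDiscovery hp k c t l) : l ∈ laterCs hp k a c i := by
    obtain ⟨v', hv', htv'⟩ := hl.exists_cFreedAt hstart hk h.lt_steps.le
    exact ⟨u, v', hu, hv', (hu.le (by lia)).trans_lt htv'⟩
  by_contra! hcard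
  have hncard := hperf.ncard_doubleDiscoverySteps i
  rw [min_eq_right hcard] at hncard
  choose f hf using fun t (ht : t ∈ doubleDiscoverySteps hp k a c i) =>
    hstart.exists_passes_of_mem_doubleDiscoverySteps hk ht
  have hsurj := Set.surj_on_of_inj_on_of_ncard_le f
    (fun t ht => hexits (hf t ht).1 (hf t ht).2.1.1 (hf t ht).2.2)
    (fun s t hs ht hst => (hf s hs).1.time_unique (by rw [hst]; exact (hf t ht).1))
    hncard.ge
  obtain ⟨t, y, -, -, hpass, ht⟩ := exists_passes_of_le_of_lt (Nat.zero_le τ)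
    (hstart.cFreedAt_le_steps hk hm)
    (show hp.pos 0 (a i) ≤ n - k + i + 1 from (hstart.pos_zero_a_le i).trans (by lia))
    (hperf.add_one_lt_pos_lastCFree hstart hk hτ he hτv hu huτ)
  rcases hperf.entryDiscovery_or_exitDiscovery hk hpass (by lia) with
    ⟨i', hi', hentry⟩ | ⟨j, rfl, hexit⟩
  · obtain rfl := hstart.a_injective hi'
    have := hentry.2.1
    lia
  · obtain ⟨s, hs, rfl⟩ := hsurj _ (hexits hpass (by lia) hexit)
    obtain rfl := hpass.time_unique (hf s hs).1
    have := (hf _ hs).2.1.2.1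
    lia

theorem exists_mem_doubleDiscoverySteps (hu : AFreedAt hp k (a i) u) (huτ : u < τ) {p : ℕ}
    (hpl : n - k ≤ p) (hpu : p ≤ n - k + i) :
    ∃ t ∈ doubleDiscoverySteps hp k a c i, hp.pos t (a i) = p := by
  have hncard := hperf.ncard_doubleDiscoverySteps i
  rw [min_eq_left (hperf.add_one_lt_ncard_laterCs hstart hk hτ he hτv hu huτ).le] at hncard
  have hentry {t : ℕ} (ht : t ∈ doubleDiscoverySteps hp k a c i) :
      EntryDiscovery hp k a t i := by
    obtain ⟨-, -, h, -⟩ := hstart.exists_passes_of_mem_doubleDiscoverySteps hk ht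
    exact h
  have hgates : (Set.Icc (n - k) (n - k + i)).ncard ≤ (doubleDiscoverySteps hp k a c i).ncard := by
    rw [hncard, Set.ncard_Icc_nat]
    lia
  obtain ⟨t, ht, htp⟩ := Set.surj_on_of_inj_on_of_ncard_le
    (t := Set.Icc (n - k) (n - k + i)) (fun t _ => hp.pos t (a i))
    (fun t ht => ⟨(hentry ht).1, (hentry ht).2.1⟩)
    (fun s t hs ht hst => (hentry hs).time_unique (hentry ht) hst) hgates (Set.toFinite _)
    p ⟨hpl, hpu⟩
  exact ⟨t, ht, htp.symm⟩

theorem exists_exitDiscovery_of_lt_lastCFree (htτ : t < τ) (h : hp.Passes t x y)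
    (hx : n - k ≤ hp.pos t x) : ∃ j, y = c j ∧ ExitDiscovery hp k c t j := by
  refine (hperf.entryDiscovery_or_exitDiscovery hk h hx).elim ?_ id
  rintro ⟨i, rfl, hentry⟩
  obtain ⟨u, hut, hu⟩ := exists_aFreedAt_le (k := k) (hp := hp) (z := a i) (t := t) (by lia)
  obtain ⟨s, hs, hst⟩ := hperf.exists_mem_doubleDiscoverySteps hstart hk hτ he hτv hu
    (hut.trans_lt htτ) hentry.1 hentry.2.1
  obtain ⟨l, hpass, hentry', hexit⟩ := hstart.exists_passes_of_mem_doubleDiscoverySteps hk hs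
  obtain rfl := hentry'.time_unique hentry hst
  exact ⟨l, h.right_unique hpass, hexit⟩

theorem pos_lt_of_passes_of_pos_le (hw : hp.pos w x ≤ n - k) (hwt : w ≤ t) (htτ : t < τ)
    (h : hp.Passes t y x) : hp.pos t y < n - k := by
  by_contra! hy
  obtain ⟨j, rfl, hexit⟩ :=
    hperf.exists_exitDiscovery_of_lt_lastCFree hstart hk hτ he hτv htτ h hy
  exact hexit.1.not_ge ((hexit.pos_le hstart h.lt_steps.le hwt).trans hw)

-- The element `x` that frees `c i` is passed by nobody in the `C`-Zone before `τ`, so at time `τ`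
-- it is still ahead of `a l`, which must pass it later although it never moves right after `τ`.
theorem not_aFreedAt_between_cFreedAt {v₁ v₂ : ℕ} (hi : CFreedAt hp k (c i) v₁)
    (hl : AFreedAt hp k (a l) u) (hj : CFreedAt hp k (c j) v₂) : ¬ (v₁ < u ∧ u < v₂) := by
  rintro ⟨hv₁u, huv₂⟩
  have huτ : u < τ := huv₂.trans_le (hτ.2 ⟨j, hj⟩)
  obtain ⟨m, hm⟩ := hτ.1
  have hτn := hstart.cFreedAt_le_steps hk hm
  obtain ⟨w, x, rfl, hpass, hw⟩ := hi.exists_passes (by rw [hstart.2.2.2]; lia) (by lia)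
  have hw' := hpass.pos_succ_left
  have hlow {t : ℕ} {y : Fin n} (hwt : w ≤ t) (htτ : t < τ) (h : hp.Passes t y x) :
      hp.pos t y < n - k :=
    hperf.pos_lt_of_passes_of_pos_le hstart hk hτ he hτv hw.le hwt htτ h
  have hstays {t : ℕ} (hwt : w + 1 ≤ t) (htτ : t ≤ τ) : n - k < hp.pos t x := by
    by_contra! ht
    obtain ⟨r, y, hwr, hrt, hr, hry⟩ :=
      exists_passes_of_lt_of_le hwt (htτ.trans hτn) (by lia) ht
    exact (hlow (by lia) (by lia) hr).ne hry
  have hbehind : hp.pos τ (a l) < hp.pos τ x := by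
    have hw₁ : hp.pos (w + 1) (a l) < hp.pos (w + 1) x := by
      have := hl.2 _ hv₁u
      lia
    refine lt_of_le_of_ne ?_ ((hp.pos_inj τ hτn).ne (by rintro rfl; exact hw₁.false))
    by_contra! hlt
    obtain ⟨r, hwr, hrτ, hr⟩ := exists_passes_of_overtakes (by lia) hτn hw₁ hlt
    have := hlow (by lia) hrτ hr
    have := hstays (t := r + 1) (by lia) hrτ
    rw [hr.pos_succ_right] at this
    lia
  obtain ⟨r, hτr, -, hr⟩ := exists_passes_of_overtakes hτn le_rfl hbehind
    (hstart.pos_steps_lt_of_aFreedAt hk hperf.1 (by lia) hl (by lia : w < u))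
  exact hperf.not_passes_of_lastCFree_le hstart hk hτ he hτv hl huτ hτr hr

end AFreedLast

end PerfectHalfPeriod

end CZone

/-- Let `k < n/2` and let `Π` be an `n`-half-period with initial
arrangement `(a_k, …, a_1, b_1, …, b_m, c_1, …, c_k)`, `m = n - 2k`, having no confined
transpositions. If `Π` is perfect, then in the liberation sequence either all the `a`'s
occur consecutively (no `c` becomes free strictly between two `a`'s) or all the `c`'s
occur consecutively (no `a` becomes free strictly between two `c`'s). -/
theorem liberation_sequence_consecutive (n k : ℕ) (hk : 2 * k < n)
    (hp : HalfPeriod n) (a : Fin k → Fin n) (b : Fin (n - 2 * k) → Fin n)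
    (c : Fin k → Fin n) (hstart : StandardStart hp k a b c)
    (hnoconf : NoConfinedSteps hp k a c)
    (hperf : PerfectHalfPeriod hp k a c) :
    (∀ (i j l : Fin k) (u₁ u₂ u₃ : ℕ),
      AFreedAt hp k (a i) u₁ → CFreedAt hp k (c l) u₂ → AFreedAt hp k (a j) u₃ →
      ¬ (u₁ < u₂ ∧ u₂ < u₃)) ∨
    (∀ (i j l : Fin k) (u₁ u₂ u₃ : ℕ),
      CFreedAt hp k (c i) u₁ → AFreedAt hp k (a l) u₂ → CFreedAt hp k (c j) u₃ →
      ¬ (u₁ < u₂ ∧ u₂ < u₃)) := by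
  rcases isEmpty_or_nonempty (Fin k) with _ | _
  · exact .inl fun i => isEmptyElim i
  have hkn : k < n := by lia
  have hmirror := hstart.mirror hkn.le
  obtain ⟨τa, hτa⟩ := hmirror.exists_isGreatest_cFreeTimes hk
  obtain ⟨τc, hτc⟩ := hstart.exists_isGreatest_cFreeTimes hk
  obtain ⟨e, he⟩ := hτa.1
  obtain ⟨f, hf⟩ := hτc.1
  rcases le_total τa τc with hτ | hτ
  · refine .inl fun i j l u₁ u₂ u₃ h₁ h₂ h₃ => ?_
    rw [← cFreedAt_mirror hkn.le] at h₁ h₃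
    rw [← aFreedAt_mirror hkn.le] at h₂ hf
    exact (hperf.mirror hkn).not_aFreedAt_between_cFreedAt hmirror hk hτa hf hτ h₁ h₂ h₃
  · refine .inr fun i j l u₁ u₂ u₃ => ?_
    rw [cFreedAt_mirror hkn.le] at he
    exact hperf.not_aFreedAt_between_cFreedAt hstart hk hτc he hτ
end
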